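/- Let N ≥ 2, T > 0, and let Ω be the N-dimensional flat torus obtained from the periodic box [-1,1]^N. Let u ∈ C([0,T); L²(Ω;ℝ^N)) be weakly divergence-free, i.e. ∫_{τ₁}^{τ₂}∫_Ω u·∇_xφ dx dt = 0 for every φ ∈ C¹([0,T)×Ω) and all 0 ≤ τ₁ < τ₂ < T. Let ρ, r ∈ C([0,T); L²(Ω)) both satisfy the continuity equation weakly with velocity u, i.e. ∫_{τ₁}^{τ₂}∫_Ω [σ∂_tφ + σu·∇_xφ] dx dt = ∫_Ω σ(τ₂,x)φ(τ₂,x) dx − ∫_Ω σ(τ₁,x)φ(τ₁,x) dx for σ ∈ {ρ, r}, every φ ∈ C¹([0,T)×Ω), and all 0 ≤ τ₁ < τ₂ < T, and suppose ρ(0,·) = r(0,·). If ρ, r, u, ρu, ru ∈ B^α_{p,∞}([0,T)×Ω) (componentwise for vector quantities) for some α > 1/3 and p ≥ 3, then ρ = r almost everywhere on [0,T)×Ω. -/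

import Mathlib

/-!
STATEMENT 8: Uniqueness for the continuity equation with a weakly divergence-free velocity
on the flat torus Ω obtained from [-1,1]^N: if ρ, r are weak solutions of the continuity
equation with the same velocity u and the same initial data, and ρ, r, u, ρu, ru lie in
the space-time Besov space B^α_{p,∞}([0,T)×Ω) with α > 1/3, p ≥ 3, then ρ = r a.e.
-/

open MeasureTheory Set Filter
open scoped RealInnerProductSpace ENNReal

noncomputable section

abbrev Spc (N : ℕ) := EuclideanSpace ℝ (Fin N)

def IsPeriodic {N : ℕ} {E : Type*} (f : Spc N → E) : Prop :=
  ∀ (x : Spc N) (i : Fin N), f (x + EuclideanSpace.single i (2 : ℝ)) = f x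

def TorusBox (N : ℕ) : Set (Spc N) := {x | ∀ i, x i ∈ Icc (-1 : ℝ) 1}

/-- `u ∈ C([0,T); L²(Ω;E))`. -/
structure ContL2 {N : ℕ} {E : Type*} [NormedAddCommGroup E] (T : ℝ)
    (u : ℝ → Spc N → E) : Prop where
  mem : ∀ t ∈ Ico (0 : ℝ) T, MemLp (u t) 2 (volume.restrict (TorusBox N))
  cont : ∀ t ∈ Ico (0 : ℝ) T,
    Tendsto (fun s => eLpNorm (fun x => u s x - u t x) 2 (volume.restrict (TorusBox N)))
      (nhdsWithin t (Ico 0 T)) (nhds 0)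

/-- `u` is weakly divergence-free on `[0,T) × Ω`. -/
def WeaklyDivFree {N : ℕ} (T : ℝ) (u : ℝ → Spc N → Spc N) : Prop :=
  ∀ φ : ℝ → Spc N → ℝ,
    ContDiff ℝ 1 (Function.uncurry φ) → (∀ t, IsPeriodic (φ t)) →
    ∀ τ₁ τ₂ : ℝ, 0 ≤ τ₁ → τ₁ < τ₂ → τ₂ < T →
    (∫ t in Ioc τ₁ τ₂, ∫ x in TorusBox N, ⟪u t x, gradient (fun y => φ t y) x⟫) = 0

/-- `σ` satisfies the continuity equation weakly with velocity `u` on `[0,T) × Ω`. -/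
def WeakContinuityEq {N : ℕ} (T : ℝ) (σ : ℝ → Spc N → ℝ) (u : ℝ → Spc N → Spc N) : Prop :=
  ∀ φ : ℝ → Spc N → ℝ,
    ContDiff ℝ 1 (Function.uncurry φ) → (∀ t, IsPeriodic (φ t)) →
    ∀ τ₁ τ₂ : ℝ, 0 ≤ τ₁ → τ₁ < τ₂ → τ₂ < T →
    (∫ t in Ioc τ₁ τ₂, ∫ x in TorusBox N,
        (σ t x * deriv (fun s => φ s x) t
          + σ t x * ⟪u t x, gradient (fun y => φ t y) x⟫))
      = (∫ x in TorusBox N, σ τ₂ x * φ τ₂ x)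
        - ∫ x in TorusBox N, σ τ₁ x * φ τ₁ x

/-- Space-time Besov seminorm on a domain `Q ⊆ ℝ × ℝ^N`. -/
def besovSeminormST {N : ℕ} (α p : ℝ) (Q : Set (ℝ × Spc N)) (f : ℝ × Spc N → ℝ) : ℝ≥0∞ :=
  ⨆ (Q₁ : Set (ℝ × Spc N)) (_ : closure Q₁ ⊆ Q) (ξ : ℝ × Spc N) (_ : ξ ≠ 0)
    (_ : (fun z => z + ξ) '' Q₁ ⊆ Q),
      eLpNorm (fun z => f (z + ξ) - f z) (ENNReal.ofReal p) (volume.restrict Q₁)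
        / ENNReal.ofReal (‖ξ‖ ^ α)

/-- Membership in the space-time Besov space `B^α_{p,∞}(Q)`. -/
def MemBesovST {N : ℕ} (α p : ℝ) (Q : Set (ℝ × Spc N)) (f : ℝ × Spc N → ℝ) : Prop :=
  MemLp f (ENNReal.ofReal p) (volume.restrict Q) ∧ besovSeminormST α p Q f < ⊤

/-!
Put `w = ρ - r` and `V = (1, u)`. The space-time fields `V` and `w V` are divergence-free, and it
suffices that `w² V` is: then `∫ w²` is constant in time, and it tends to `0` at `t = 0`.

Away from the boundary this is the Constantin–E–Titi commutator estimate in its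
doubling-of-variables form: pairing `(w z' - w z)² (V z' - V z)` with the derivative of a mollifier
of width `ε` gives `O(ε ^ (3α - 1))`, while expanding the product leaves only the flux of `w² V`.

The Besov bounds hold only inside the box, whereas test functions are periodic, so the flux has to
be carried across the faces of the box. Since `α > 1/3`, iterating from the strip of thickness
`2⁻ⁿ` at a face to that of thickness `2⁻ⁿ⁻¹` shows that the `L³` norms of `w` and `V` over the
strip are `O(2 ^ (-n/3))`, and that some smooth `ψ`, constant in the normal direction, makes the
`L³` norm of `w - ψ` there at most `η 2 ^ (-n/3)`. If `ψ` and `ψ'` belong to two opposite faces,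
then `w² = (w - ψ) (w - ψ') + (ψ + ψ') w - ψ ψ'`: the flux of the first term through the strips is
`O(η)`, and the other two terms give fluxes of the periodically divergence-free `w V` and `V`.
-/

section Holder

variable {X : Type*} [MeasurableSpace X] {μ : Measure X} {F₁ F₂ F₃ : Type*}
  [NormedAddCommGroup F₁] [NormedAddCommGroup F₂] [NormedAddCommGroup F₃]
  {f : X → F₁} {g : X → F₂} {k : X → F₃}

lemma lintegral_enorm_mul_mul_le_eLpNorm_three (hf : AEStronglyMeasurable f μ)
    (hg : AEStronglyMeasurable g μ) (hk : AEStronglyMeasurable k μ) :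
    ∫⁻ x, ‖f x‖ₑ * ‖g x‖ₑ * ‖k x‖ₑ ∂μ ≤ eLpNorm f 3 μ * eLpNorm g 3 μ * eLpNorm k 3 μ := by
  have rpow_cube : ∀ a : ℝ≥0∞, (a ^ 3) ^ (3⁻¹ : ℝ) = a := fun a => by
    rw [← ENNReal.rpow_natCast_mul]; norm_num
  have holder := ENNReal.lintegral_prod_norm_pow_le (μ := μ) Finset.univ
    (f := ![fun x => ‖f x‖ₑ ^ (3 : ℝ), fun x => ‖g x‖ₑ ^ (3 : ℝ), fun x => ‖k x‖ₑ ^ (3 : ℝ)])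
    (p := fun _ => 1 / 3)
    (fun i _ => by
      fin_cases i
      exacts [hf.enorm.pow_const _, hg.enorm.pow_const _, hk.enorm.pow_const _])
    (by norm_num) (fun _ _ => by norm_num)
  simpa [Fin.prod_univ_three, rpow_cube, eLpNorm_eq_lintegral_rpow_enorm_toReal] using holder

lemma integrable_mul_smul_of_memLp_three [NormedSpace ℝ F₃] {f g : X → ℝ} (hf : MemLp f 3 μ)
    (hg : MemLp g 3 μ) (hk : MemLp k 3 μ) : Integrable (fun x => (f x * g x) • k x) μ := by
  refine ⟨(hf.1.mul hg.1).smul hk.1, ?_⟩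
  simp only [HasFiniteIntegral, enorm_smul, enorm_mul]
  exact (lintegral_enorm_mul_mul_le_eLpNorm_three hf.1 hg.1 hk.1).trans_lt
    (ENNReal.mul_lt_top (ENNReal.mul_lt_top hf.2 hg.2) hk.2)

lemma integrable_smul_of_memLp_three [IsFiniteMeasure μ] [NormedSpace ℝ F₃] {f : X → ℝ}
    (hf : MemLp f 3 μ) (hk : MemLp k 3 μ) : Integrable (fun x => f x • k x) μ := by
  simpa using integrable_mul_smul_of_memLp_three (memLp_const (1 : ℝ)) hf hk

lemma integral_norm_mul_mul_le_of_eLpNorm_three_le (hf : AEStronglyMeasurable f μ)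
    (hg : AEStronglyMeasurable g μ) (hk : AEStronglyMeasurable k μ) {a b c : ℝ} (ha : 0 ≤ a)
    (hb : 0 ≤ b) (hc : 0 ≤ c) (hfa : eLpNorm f 3 μ ≤ ENNReal.ofReal a)
    (hgb : eLpNorm g 3 μ ≤ ENNReal.ofReal b) (hkc : eLpNorm k 3 μ ≤ ENNReal.ofReal c) :
    ∫ x, ‖f x‖ * ‖g x‖ * ‖k x‖ ∂μ ≤ a * b * c := by
  have hmeas : AEStronglyMeasurable (fun x => ‖f x‖ * ‖g x‖ * ‖k x‖) μ :=
    (hf.norm.mul hg.norm).mul hk.norm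
  rw [integral_eq_lintegral_of_nonneg_ae (ae_of_all _ fun x => by positivity) hmeas]
  refine ENNReal.toReal_le_of_le_ofReal (by positivity) ?_
  calc ∫⁻ x, ENNReal.ofReal (‖f x‖ * ‖g x‖ * ‖k x‖) ∂μ
      = ∫⁻ x, ‖f x‖ₑ * ‖g x‖ₑ * ‖k x‖ₑ ∂μ := by
        simp [ENNReal.ofReal_mul, mul_nonneg]
    _ ≤ eLpNorm f 3 μ * eLpNorm g 3 μ * eLpNorm k 3 μ :=
        lintegral_enorm_mul_mul_le_eLpNorm_three hf hg hk
    _ ≤ ENNReal.ofReal a * ENNReal.ofReal b * ENNReal.ofReal c := by gcongr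
    _ = ENNReal.ofReal (a * b * c) := by
        rw [ENNReal.ofReal_mul (by positivity), ENNReal.ofReal_mul ha]

end Holder

lemma integrable_clm_apply {X E : Type*} [MeasurableSpace X] [NormedAddCommGroup E]
    [NormedSpace ℝ E] {ν : Measure X} {L : X → E →L[ℝ] ℝ} {G : X → E} {C : ℝ}
    (hL : AEStronglyMeasurable L ν) (hC : ∀ᵐ x ∂ν, ‖L x‖ ≤ C) (hG : Integrable G ν) :
    Integrable (fun x => L x (G x)) ν :=
  (ContinuousLinearMap.id ℝ (E →L[ℝ] ℝ)).integrable_of_bilin_of_bdd_left C hL hC hG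

section DivFree

variable {E : Type*} [NormedAddCommGroup E] [NormedSpace ℝ E] [MeasurableSpace E]
  {μ : Measure E} {Ω : Set E} {V W : E → E}

/-- The vector field `V` is divergence-free on `Ω` in the sense of distributions, tested against
compactly supported `C¹` functions. -/
def IsWeaklyDivFreeOn (μ : Measure E) (Ω : Set E) (V : E → E) : Prop :=
  ∀ φ : E → ℝ, ContDiff ℝ 1 φ → HasCompactSupport φ → tsupport φ ⊆ Ω →
    ∫ z in Ω, fderiv ℝ φ z (V z) ∂μ = 0

lemma IsWeaklyDivFreeOn.const_smul (c : ℝ) (hV : IsWeaklyDivFreeOn μ Ω V) :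
    IsWeaklyDivFreeOn μ Ω (fun z => c • V z) := fun φ hφ hφc hφΩ => by
  simp only [map_smul]
  rw [integral_smul, hV φ hφ hφc hφΩ, smul_zero]

variable [BorelSpace E] [FiniteDimensional ℝ E] {φ : E → ℝ}

lemma integrable_fderiv_apply {C : ℝ} (hφ : ContDiff ℝ 1 φ) (hC : ∀ z, ‖fderiv ℝ φ z‖ ≤ C)
    (hV : Integrable V μ) : Integrable (fun z => fderiv ℝ φ z (V z)) μ :=
  integrable_clm_apply (hφ.continuous_fderiv one_ne_zero).aestronglyMeasurable (ae_of_all _ hC) hV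

lemma integrable_fderiv_apply_of_hasCompactSupport (hφ : ContDiff ℝ 1 φ) (hφc : HasCompactSupport φ)
    (hV : Integrable V μ) : Integrable (fun z => fderiv ℝ φ z (V z)) μ :=
  let ⟨_, hC⟩ := (hφc.fderiv ℝ).exists_bound_of_continuous (hφ.continuous_fderiv one_ne_zero)
  integrable_fderiv_apply hφ hC hV

lemma IsWeaklyDivFreeOn.add (hV : IsWeaklyDivFreeOn μ Ω V) (hW : IsWeaklyDivFreeOn μ Ω W)
    (hVi : IntegrableOn V Ω μ) (hWi : IntegrableOn W Ω μ) :
    IsWeaklyDivFreeOn μ Ω (fun z => V z + W z) := fun φ hφ hφc hφΩ => by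
  simp only [map_add]
  rw [integral_add (integrable_fderiv_apply_of_hasCompactSupport hφ hφc hVi)
    (integrable_fderiv_apply_of_hasCompactSupport hφ hφc hWi), hV φ hφ hφc hφΩ,
    hW φ hφ hφc hφΩ, add_zero]

lemma isWeaklyDivFreeOn_const [μ.IsAddHaarMeasure] (v : E) :
    IsWeaklyDivFreeOn μ Ω (fun _ => v) := fun φ hφ hφc hφΩ => by
  rw [setIntegral_eq_integral_of_forall_compl_eq_zero fun z hz => ?_]
  · have hφi : Integrable φ μ := hφ.continuous.integrable_of_hasCompactSupport hφc
    have hdφi : Integrable (fun z => fderiv ℝ φ z v) μ :=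
      (hφ.continuous_fderiv_apply one_ne_zero |>.comp
        (Continuous.prodMk_left v)).integrable_of_hasCompactSupport
        ((hφc.fderiv ℝ).comp_left (g := fun L : E →L[ℝ] ℝ => L v) rfl)
    simpa using integral_mul_fderiv_eq_neg_fderiv_mul_of_integrable (μ := μ) (𝕜 := ℝ)
      (f := fun _ => 1) (g := φ) (v := v) (by simp) (by simpa using hdφi) (by simpa using hφi)
      (fun _ _ => differentiableAt_const _)
      (fun z _ => (hφ.differentiable one_ne_zero).differentiableAt)
  · rw [image_eq_zero_of_notMem_tsupport (f := fderiv ℝ φ)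
      fun h => hz (hφΩ (tsupport_fderiv_subset ℝ h))]
    rfl

end DivFree

section DoublingOfVariables

variable {E : Type*} [NormedAddCommGroup E] [NormedSpace ℝ E] {w χ κ : E → ℝ} {V : E → E}

/-- The integrand of the doubling-of-variables identity for `w² V`, with cutoff `χ` and kernel
`κ`, at the points `z` and `z + h`. -/
def doublingIntegrand (w : E → ℝ) (V : E → E) (χ κ : E → ℝ) (z h : E) : ℝ :=
  χ z * fderiv ℝ κ h (((w (z + h) - w z) * (w (z + h) - w z)) • (V (z + h) - V z))
    - κ h * fderiv ℝ χ z ((w (z + h) * w (z + h)) • (V (z + h) - V z)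
      + (2 : ℝ) • (w (z + h) * w z) • V z)

/-- The combination of `V`, `w V` and a constant field, with coefficients depending on the frozen
point `a`, into which the doubled field `(w(y) - w(a))² (V(y) - V(a))` splits. -/
def frozenField (w : E → ℝ) (V : E → E) (a y : E) : E :=
  w a ^ 2 • V a + (-w a ^ 2) • V y + (2 * w a) • w y • V y

lemma fderiv_comp_const_sub_mul (hχ : ContDiff ℝ 1 χ) (hκ : ContDiff ℝ 1 κ) (z z' : E) :
    fderiv ℝ (fun y => κ (z' - y) * χ y) z =
      κ (z' - z) • fderiv ℝ χ z - χ z • fderiv ℝ κ (z' - z) := by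
  have hκd : DifferentiableAt ℝ κ (z' - z) := (hκ.differentiable one_ne_zero).differentiableAt
  have hκ' : HasFDerivAt (fun y => κ (z' - y))
      ((fderiv ℝ κ (z' - z)).comp (-ContinuousLinearMap.id ℝ E)) z :=
    hκd.hasFDerivAt.comp z ((hasFDerivAt_id z).const_sub z')
  have hχ' := ((hχ.differentiable one_ne_zero).differentiableAt (x := z)).hasFDerivAt
  rw [(hκ'.fun_mul hχ').fderiv, ContinuousLinearMap.comp_neg, ContinuousLinearMap.comp_id,
    smul_neg, ← sub_eq_add_neg]

lemma doublingIntegrand_sub_eq (hχ : ContDiff ℝ 1 χ) (hκ : ContDiff ℝ 1 κ) (z z' : E) :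
    doublingIntegrand w V χ κ z (z' - z) =
      -(χ z * fderiv ℝ (fun y => κ (y - z)) z' (frozenField w V z z')
        + fderiv ℝ (fun y => κ (z' - y) * χ y) z (frozenField w V z' z)) := by
  rw [fderiv_comp_sub, fderiv_comp_const_sub_mul hχ hκ]
  simp only [doublingIntegrand, frozenField, add_sub_cancel, map_add, map_sub, map_smul,
    sub_apply, smul_apply, smul_eq_mul]
  ring

lemma doublingIntegrand_eq_zero_of_notMem {z h : E} (hzh : z ∉ tsupport χ ∨ h ∉ tsupport κ) :
    doublingIntegrand w V χ κ z h = 0 := by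
  rcases hzh with hz | hh
  · simp [doublingIntegrand, image_eq_zero_of_notMem_tsupport hz,
      image_eq_zero_of_notMem_tsupport (f := fderiv ℝ χ) fun h => hz (tsupport_fderiv_subset ℝ h)]
  · simp [doublingIntegrand, image_eq_zero_of_notMem_tsupport hh,
      image_eq_zero_of_notMem_tsupport (f := fderiv ℝ κ) fun h => hh (tsupport_fderiv_subset ℝ h)]

variable [MeasurableSpace E]

section FiniteMeasure

variable {ν : Measure E} [IsFiniteMeasure ν]

lemma integrable_prod_frozenField (hw : MemLp w 3 ν) (hV : MemLp V 3 ν) :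
    Integrable (fun p : E × E => frozenField w V p.1 p.2) (ν.prod ν) := by
  have hw₁ : Integrable w ν := hw.integrable (by norm_num)
  have hw₂ : Integrable (fun z => w z ^ 2) ν :=
    (hw.mono_exponent (by norm_num : (2 : ℝ≥0∞) ≤ 3)).integrable_sq
  have hV₁ : Integrable V ν := hV.integrable (by norm_num)
  have hwwV : Integrable (fun z => w z ^ 2 • V z) ν := by
    simpa only [sq] using integrable_mul_smul_of_memLp_three hw hw hV
  exact ((hwwV.comp_fst ν).add (hw₂.neg.smul_prod hV₁)).add
    ((hw₁.const_mul 2).smul_prod (integrable_smul_of_memLp_three hw hV))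

variable [FiniteDimensional ℝ E] [BorelSpace E]

lemma integrable_mul_fderiv_kernel_frozenField (hχ : ContDiff ℝ 1 χ) (hχc : HasCompactSupport χ)
    (hκ : ContDiff ℝ 1 κ) (hκc : HasCompactSupport κ) (hw : MemLp w 3 ν) (hV : MemLp V 3 ν) :
    Integrable (fun p : E × E =>
      χ p.1 * fderiv ℝ (fun y => κ (y - p.1)) p.2 (frozenField w V p.1 p.2)) (ν.prod ν) := by
  have hdκ := hκ.continuous_fderiv one_ne_zero
  have hχ₀ := hχ.continuous
  obtain ⟨A, hA⟩ := hχc.exists_bound_of_continuous hχ₀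
  obtain ⟨B, hB⟩ := (hκc.fderiv ℝ).exists_bound_of_continuous hdκ
  simp only [fderiv_comp_sub]
  refine integrable_clm_apply (L := fun p : E × E => χ p.1 • fderiv ℝ κ (p.2 - p.1)) (C := A * B)
    (Continuous.aestronglyMeasurable (by fun_prop)) (ae_of_all _ fun p => ?_)
    (integrable_prod_frozenField hw hV)
  rw [norm_smul]
  exact mul_le_mul (hA _) (hB _) (norm_nonneg _) ((norm_nonneg _).trans (hA p.1))

lemma integrable_fderiv_cutoff_kernel_frozenField (hχ : ContDiff ℝ 1 χ)
    (hχc : HasCompactSupport χ) (hκ : ContDiff ℝ 1 κ) (hκc : HasCompactSupport κ)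
    (hw : MemLp w 3 ν) (hV : MemLp V 3 ν) :
    Integrable (fun p : E × E =>
      fderiv ℝ (fun y => κ (p.2 - y) * χ y) p.1 (frozenField w V p.2 p.1)) (ν.prod ν) := by
  have hdκ := hκ.continuous_fderiv one_ne_zero
  have hdχ := hχ.continuous_fderiv one_ne_zero
  have hχ₀ := hχ.continuous
  have hκ₀ := hκ.continuous
  obtain ⟨A, hA⟩ := hχc.exists_bound_of_continuous hχ₀
  obtain ⟨A', hA'⟩ := (hχc.fderiv ℝ).exists_bound_of_continuous hdχ
  obtain ⟨B, hB⟩ := hκc.exists_bound_of_continuous hκ₀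
  obtain ⟨B', hB'⟩ := (hκc.fderiv ℝ).exists_bound_of_continuous hdκ
  simp only [fderiv_comp_const_sub_mul hχ hκ]
  refine integrable_clm_apply (C := B * A' + A * B')
    (Continuous.aestronglyMeasurable (by fun_prop)) (ae_of_all _ fun p => ?_)
    (integrable_prod_frozenField hw hV).swap
  refine (norm_sub_le _ _).trans ?_
  rw [norm_smul, norm_smul]
  exact add_le_add
    (mul_le_mul (hB _) (hA' _) (norm_nonneg _) ((norm_nonneg _).trans (hB 0)))
    (mul_le_mul (hA _) (hB' _) (norm_nonneg _) ((norm_nonneg _).trans (hA 0)))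

end FiniteMeasure

variable [FiniteDimensional ℝ E] [BorelSpace E]

lemma IsWeaklyDivFreeOn.frozenField {μ : Measure E} [μ.IsAddHaarMeasure] {Ω : Set E}
    [IsFiniteMeasure (μ.restrict Ω)] (hw : MemLp w 3 (μ.restrict Ω))
    (hV : MemLp V 3 (μ.restrict Ω)) (hVdiv : IsWeaklyDivFreeOn μ Ω V)
    (hwVdiv : IsWeaklyDivFreeOn μ Ω (fun z => w z • V z)) (a : E) :
    IsWeaklyDivFreeOn μ Ω (frozenField w V a) := by
  have hVi : IntegrableOn V Ω μ := hV.integrable (by norm_num)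
  have hwVi : IntegrableOn (fun z => w z • V z) Ω μ := integrable_smul_of_memLp_three hw hV
  exact ((isWeaklyDivFreeOn_const _).add (hVdiv.const_smul _) (integrable_const _)
    (hVi.smul _)).add (hwVdiv.const_smul _) ((integrable_const _).add (hVi.smul _)) (hwVi.smul _)

section FrozenIdentity

variable {μ : Measure E} [μ.IsAddHaarMeasure] {Ω : Set E} [IsFiniteMeasure (μ.restrict Ω)]

lemma integral_prod_doublingIntegrand_sub_eq_zero (hw : MemLp w 3 (μ.restrict Ω))
    (hV : MemLp V 3 (μ.restrict Ω)) (hVdiv : IsWeaklyDivFreeOn μ Ω V)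
    (hwVdiv : IsWeaklyDivFreeOn μ Ω (fun z => w z • V z)) (hχ : ContDiff ℝ 1 χ)
    (hχc : HasCompactSupport χ) (hχΩ : tsupport χ ⊆ Ω) (hκ : ContDiff ℝ 1 κ)
    (hκc : HasCompactSupport κ) (hκΩ : ∀ z ∈ tsupport χ, ∀ h ∈ tsupport κ, z + h ∈ Ω) :
    ∫ p : E × E, doublingIntegrand w V χ κ p.1 (p.2 - p.1)
      ∂((μ.restrict Ω).prod (μ.restrict Ω)) = 0 := by
  have hdiv := IsWeaklyDivFreeOn.frozenField hw hV hVdiv hwVdiv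
  have hAi := integrable_mul_fderiv_kernel_frozenField hχ hχc hκ hκc hw hV
  have hBi := integrable_fderiv_cutoff_kernel_frozenField hχ hχc hκ hκc hw hV
  have frozen_left : ∀ z, ∫ z' in Ω,
      χ z * fderiv ℝ (fun y => κ (y - z)) z' (frozenField w V z z') ∂μ = 0 := fun z => by
    by_cases hz : z ∈ tsupport χ
    · have supp : tsupport (fun y => κ (y - z)) = (fun y => y - z) ⁻¹' tsupport κ :=
        tsupport_comp_eq_preimage κ (Homeomorph.subRight z)
      have compact : HasCompactSupport (fun y => κ (y - z)) :=
        hκc.comp_homeomorph (Homeomorph.subRight z)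
      rw [integral_const_mul, hdiv z _ (by fun_prop) compact fun y hy => ?_, mul_zero]
      rw [supp] at hy
      simpa using hκΩ z hz _ hy
    · simp [image_eq_zero_of_notMem_tsupport hz]
  have frozen_right : ∀ z', ∫ z in Ω,
      fderiv ℝ (fun y => κ (z' - y) * χ y) z (frozenField w V z' z) ∂μ = 0 := fun z' =>
    hdiv z' _ (by fun_prop) hχc.mul_left ((tsupport_mul_subset_right).trans hχΩ)
  simp only [doublingIntegrand_sub_eq hχ hκ]
  rw [integral_neg, integral_add hAi hBi, integral_prod _ hAi, integral_prod_symm _ hBi]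
  simp [frozen_left, frozen_right]

lemma integrable_doublingIntegrand_and_integral_eq_zero (hw : MemLp w 3 (μ.restrict Ω))
    (hV : MemLp V 3 (μ.restrict Ω)) (hVdiv : IsWeaklyDivFreeOn μ Ω V)
    (hwVdiv : IsWeaklyDivFreeOn μ Ω (fun z => w z • V z)) (hχ : ContDiff ℝ 1 χ)
    (hχc : HasCompactSupport χ) (hχΩ : tsupport χ ⊆ Ω) (hκ : ContDiff ℝ 1 κ)
    (hκc : HasCompactSupport κ) (hκΩ : ∀ z ∈ tsupport χ, ∀ h ∈ tsupport κ, z + h ∈ Ω) :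
    Integrable (fun h => ∫ z, doublingIntegrand w V χ κ z h ∂μ) μ ∧
      ∫ h, ∫ z, doublingIntegrand w V χ κ z h ∂μ ∂μ = 0 := by
  set F : E × E → ℝ := fun p => doublingIntegrand w V χ κ p.1 (p.2 - p.1) with hF
  have supp : ∀ p, p ∉ Ω ×ˢ Ω → F p = 0 := fun p hp => by
    refine doublingIntegrand_eq_zero_of_notMem ?_
    contrapose! hp
    exact ⟨hχΩ hp.1, by simpa using hκΩ _ hp.1 _ hp.2⟩
  have hFi : Integrable F (μ.prod μ) := by
    rw [← integrableOn_iff_integrable_of_support_subset (s := Ω ×ˢ Ω)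
      (fun p hp => by_contra fun h => hp (supp p h)), IntegrableOn, ← Measure.prod_restrict]
    refine (((integrable_mul_fderiv_kernel_frozenField hχ hχc hκ hκc hw hV).add
      (integrable_fderiv_cutoff_kernel_frozenField hχ hχc hκ hκc hw hV)).neg).congr
      (ae_of_all _ fun p => ?_)
    exact (doublingIntegrand_sub_eq hχ hκ p.1 p.2).symm
  have hF0 : ∫ p, F p ∂(μ.prod μ) = 0 := by
    rw [← setIntegral_eq_integral_of_forall_compl_eq_zero supp, ← Measure.prod_restrict]
    exact integral_prod_doublingIntegrand_sub_eq_zero hw hV hVdiv hwVdiv hχ hχc hχΩ hκ hκc hκΩ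
  have shear := measurePreserving_prod_add μ μ
  have hFs : (fun p : E × E => doublingIntegrand w V χ κ p.1 p.2)
      = F ∘ fun p => (p.1, p.1 + p.2) := by
    ext p; simp [hF]
  have hDi : Integrable (fun p : E × E => doublingIntegrand w V χ κ p.1 p.2) (μ.prod μ) := by
    rw [hFs]
    exact (shear.integrable_comp hFi.1).2 hFi
  refine ⟨hDi.integral_prod_right, ?_⟩
  rw [← integral_prod_symm _ hDi, hFs, ← hF0]
  exact shear.integral_comp' (f := MeasurableEquiv.shearAddRight E) F

end FrozenIdentity

end DoublingOfVariables

section BesovBound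

variable {E F : Type*} [NormedAddCommGroup E] [MeasurableSpace E] [NormedAddCommGroup F]
  {μ : Measure E} {S Ω : Set E} {p : ℝ≥0∞} {f : E → F} {h : E}

/-- The translation-increment bound `‖f(· + h) - f‖_{L^p} ≤ C |h|^α` on the part of `Ω` where both
terms are evaluated inside `Ω`, i.e. a quantitative `B^α_{p,∞}(Ω)` bound. -/
def HasBesovBound (μ : Measure E) (p : ℝ≥0∞) (α C : ℝ) (Ω : Set E) (f : E → F) : Prop :=
  ∀ h, eLpNorm (fun z => f (z + h) - f z) p (μ.restrict (Ω ∩ (· + h) ⁻¹' Ω))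
    ≤ ENNReal.ofReal (C * ‖h‖ ^ α)

lemma HasBesovBound.mono {α C C' : ℝ} (hf : HasBesovBound μ p α C Ω f) (hC : C ≤ C') :
    HasBesovBound μ p α C' Ω f :=
  fun h => (hf h).trans (by gcongr)

lemma HasBesovBound.eLpNorm_sub_le {α C : ℝ} (hf : HasBesovBound μ p α C Ω f) (hS : S ⊆ Ω)
    (hSh : ∀ z ∈ S, z + h ∈ Ω) :
    eLpNorm (fun z => f (z + h) - f z) p (μ.restrict S) ≤ ENNReal.ofReal (C * ‖h‖ ^ α) :=
  (eLpNorm_mono_measure _ (Measure.restrict_mono (subset_inter hS hSh) le_rfl)).trans (hf h)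

variable [μ.IsAddRightInvariant] [MeasurableAdd E]

lemma eLpNorm_comp_add_right_le (hΩ : MeasurableSet Ω) (hf : AEStronglyMeasurable f (μ.restrict Ω))
    (hSh : ∀ z ∈ S, z + h ∈ Ω) :
    AEStronglyMeasurable (fun z => f (z + h)) (μ.restrict S) ∧
    eLpNorm (fun z => f (z + h)) p (μ.restrict S) ≤ eLpNorm f p (μ.restrict Ω) := by
  have hpre : MeasurePreserving (· + h) (μ.restrict ((· + h) ⁻¹' Ω)) (μ.restrict Ω) :=
    (measurePreserving_add_right μ h).restrict_preimage hΩ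
  have hmono : μ.restrict S ≤ μ.restrict ((· + h) ⁻¹' Ω) := Measure.restrict_mono hSh le_rfl
  exact ⟨(hf.comp_measurePreserving hpre).mono_measure hmono,
    (eLpNorm_mono_measure _ hmono).trans (eLpNorm_comp_measurePreserving hf hpre).le⟩

lemma memLp_comp_add_right_restrict (hΩ : MeasurableSet Ω) (hf : MemLp f p (μ.restrict Ω))
    (hSh : ∀ z ∈ S, z + h ∈ Ω) : MemLp (fun z => f (z + h)) p (μ.restrict S) := by
  have := eLpNorm_comp_add_right_le (p := p) hΩ hf.1 hSh
  exact ⟨this.1, this.2.trans_lt hf.2⟩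

variable {ι F' : Type*} [Fintype ι] [NormedAddCommGroup F'] {α : ℝ} {C : ι → ℝ} {G : E → F'}
  {g : ι → E → F}

lemma HasBesovBound.of_norm_sub_le_sum (hΩ : MeasurableSet Ω) (hp : 1 ≤ p)
    (hg : ∀ i, AEStronglyMeasurable (g i) (μ.restrict Ω)) (hC : ∀ i, 0 ≤ C i)
    (hB : ∀ i, HasBesovBound μ p α (C i) Ω (g i))
    (hG : ∀ x y, ‖G x - G y‖ ≤ ∑ i, ‖g i x - g i y‖) :
    HasBesovBound μ p α (∑ i, C i) Ω G := fun h => by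
  set ν := μ.restrict (Ω ∩ (· + h) ⁻¹' Ω)
  have hinc (i : ι) : AEStronglyMeasurable (fun z => g i (z + h) - g i z) ν :=
    (eLpNorm_comp_add_right_le (p := p) hΩ (hg i) fun z hz => hz.2).1.sub
      ((hg i).mono_set inter_subset_left)
  calc eLpNorm (fun z => G (z + h) - G z) p ν
      ≤ eLpNorm (∑ i, fun z => ‖g i (z + h) - g i z‖) p ν := eLpNorm_mono_real fun z => by
        simpa only [Finset.sum_apply] using hG (z + h) z
    _ ≤ ∑ i, eLpNorm (fun z => ‖g i (z + h) - g i z‖) p ν :=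
        eLpNorm_sum_le (fun i _ => (hinc i).norm) hp
    _ = ∑ i, eLpNorm (fun z => g i (z + h) - g i z) p ν := by simp only [eLpNorm_norm]
    _ ≤ ∑ i, ENNReal.ofReal (C i * ‖h‖ ^ α) := Finset.sum_le_sum fun i _ => hB i h
    _ = ENNReal.ofReal ((∑ i, C i) * ‖h‖ ^ α) := by
        rw [Finset.sum_mul, ENNReal.ofReal_sum_of_nonneg fun i _ =>
          mul_nonneg (hC i) (by positivity)]

end BesovBound

section KernelLimit

variable {E : Type*} [NormedAddCommGroup E] [NormedSpace ℝ E] {w χ κ : E → ℝ} {V : E → E} {M : ℝ}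

/-- What remains of `doublingIntegrand` at a fixed shift `h` once the unshifted term
`-2 κ(h) w² Dχ·V` is split off; every term contains an increment of `w` or `V`. -/
def doublingRemainder (w : E → ℝ) (V : E → E) (χ κ : E → ℝ) (z h : E) : ℝ :=
  χ z * fderiv ℝ κ h (((w (z + h) - w z) * (w (z + h) - w z)) • (V (z + h) - V z))
    - κ h * fderiv ℝ χ z ((w (z + h) * w (z + h)) • (V (z + h) - V z)
      + (2 : ℝ) • ((w (z + h) - w z) * w z) • V z)

lemma doublingIntegrand_eq_remainder_sub (z h : E) :
    doublingIntegrand w V χ κ z h =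
      doublingRemainder w V χ κ z h - 2 * κ h * fderiv ℝ χ z ((w z * w z) • V z) := by
  simp only [doublingIntegrand, doublingRemainder, sub_mul, sub_smul, smul_sub, map_add, map_sub,
    map_smul, smul_eq_mul]
  ring

lemma norm_doublingRemainder_le (hχM : ∀ z, ‖χ z‖ ≤ M) (hdχM : ∀ z, ‖fderiv ℝ χ z‖ ≤ M)
    (z h : E) :
    ‖doublingRemainder w V χ κ z h‖ ≤
      M * ‖fderiv ℝ κ h‖ * (‖w (z + h) - w z‖ * ‖w (z + h) - w z‖ * ‖V (z + h) - V z‖)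
      + M * ‖κ h‖ * (‖w (z + h)‖ * ‖w (z + h)‖ * ‖V (z + h) - V z‖
        + 2 * (‖w (z + h) - w z‖ * ‖w z‖ * ‖V z‖)) := by
  have hM : 0 ≤ M := (norm_nonneg _).trans (hχM z)
  refine (norm_sub_le _ _).trans (add_le_add ?_ ?_)
  · rw [norm_mul]
    calc ‖χ z‖ * ‖_‖ ≤ M * (‖fderiv ℝ κ h‖ * ‖_‖) := by
          gcongr
          exacts [hχM z, (fderiv ℝ κ h).le_opNorm _]
      _ = _ := by rw [norm_smul, norm_mul]; ring
  · rw [norm_mul]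
    calc ‖κ h‖ * ‖_‖ ≤ ‖κ h‖ * (M * (‖_‖ + ‖_‖)) := by
          gcongr
          refine ((fderiv ℝ χ z).le_opNorm _).trans ?_
          gcongr
          exacts [hdχM z, norm_add_le _ _]
      _ = _ := by simp only [norm_smul, norm_mul, Real.norm_ofNat]; ring

variable [MeasurableSpace E] [BorelSpace E] {μ : Measure E}
  [μ.IsAddHaarMeasure] {Ω : Set E} {α C : ℝ}

lemma norm_setIntegral_doublingRemainder_le (hΩ : MeasurableSet Ω)
    (hw : MemLp w 3 (μ.restrict Ω)) (hV : MemLp V 3 (μ.restrict Ω)) (hC : 0 ≤ C)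
    (hwB : HasBesovBound μ 3 α C Ω w) (hVB : HasBesovBound μ 3 α C Ω V)
    (hwC : eLpNorm w 3 (μ.restrict Ω) ≤ ENNReal.ofReal C)
    (hVC : eLpNorm V 3 (μ.restrict Ω) ≤ ENNReal.ofReal C)
    (hχM : ∀ z, ‖χ z‖ ≤ M) (hdχM : ∀ z, ‖fderiv ℝ χ z‖ ≤ M) (hχΩ : tsupport χ ⊆ Ω) {h : E}
    (hh : ∀ z ∈ tsupport χ, z + h ∈ Ω) :
    ‖∫ z in tsupport χ, doublingRemainder w V χ κ z h ∂μ‖ ≤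
      M * ‖fderiv ℝ κ h‖ * (C * ‖h‖ ^ α) ^ 3 + 3 * M * C ^ 3 * ‖κ h‖ * ‖h‖ ^ α := by
  have hM : 0 ≤ M := (norm_nonneg _).trans (hχM 0)
  have hS : μ.restrict (tsupport χ) ≤ μ.restrict Ω := Measure.restrict_mono hχΩ le_rfl
  have hwS := hw.mono_measure hS
  have hVS := hV.mono_measure hS
  have hwh := memLp_comp_add_right_restrict hΩ hw hh
  have hδw := hwh.sub hwS
  have hδV := (memLp_comp_add_right_restrict hΩ hV hh).sub hVS
  have hwhC := (eLpNorm_comp_add_right_le (p := 3) hΩ hw.1 hh).2.trans hwC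
  have hwC' := (eLpNorm_mono_measure w hS).trans hwC
  have hVC' := (eLpNorm_mono_measure V hS).trans hVC
  have hδwB := hwB.eLpNorm_sub_le hχΩ hh
  have hδVB := hVB.eLpNorm_sub_le hχΩ hh
  have hR : 0 ≤ C * ‖h‖ ^ α := by positivity
  have J₁ := (integrable_mul_smul_of_memLp_three hδw hδw hδV).norm
  have J₂ := (integrable_mul_smul_of_memLp_three hwh hwh hδV).norm
  have J₃ := (integrable_mul_smul_of_memLp_three hδw hwS hVS).norm
  have B₁ := integral_norm_mul_mul_le_of_eLpNorm_three_le hδw.1 hδw.1 hδV.1 hR hR hR hδwB hδwB hδVB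
  have B₂ := integral_norm_mul_mul_le_of_eLpNorm_three_le hwh.1 hwh.1 hδV.1 hC hC hR hwhC hwhC hδVB
  have B₃ := integral_norm_mul_mul_le_of_eLpNorm_three_le hδw.1 hwS.1 hVS.1 hR hC hC hδwB hwC' hVC'
  simp only [norm_smul, norm_mul, Pi.sub_apply] at J₁ J₂ J₃ B₁ B₂ B₃
  have J₂₃ : Integrable (fun z => ‖w (z + h)‖ * ‖w (z + h)‖ * ‖V (z + h) - V z‖
      + 2 * (‖w (z + h) - w z‖ * ‖w z‖ * ‖V z‖)) (μ.restrict (tsupport χ)) :=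
    J₂.add (J₃.const_mul 2)
  refine (norm_integral_le_of_norm_le ((J₁.const_mul _).add (J₂₃.const_mul _))
    (ae_of_all _ fun z => norm_doublingRemainder_le hχM hdχM z h)).trans ?_
  simp only [Pi.add_apply]
  rw [integral_add (J₁.const_mul _) (J₂₃.const_mul _), integral_const_mul, integral_const_mul,
    integral_add J₂ (J₃.const_mul 2), integral_const_mul]
  calc _ ≤ M * ‖fderiv ℝ κ h‖ * ((C * ‖h‖ ^ α) * (C * ‖h‖ ^ α) * (C * ‖h‖ ^ α))
        + M * ‖κ h‖ * (C * C * (C * ‖h‖ ^ α) + 2 * ((C * ‖h‖ ^ α) * C * C)) := by gcongr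
    _ = _ := by ring

variable [FiniteDimensional ℝ E]

lemma integrable_doublingRemainder (hΩ : MeasurableSet Ω)
    (hw : MemLp w 3 (μ.restrict Ω)) (hV : MemLp V 3 (μ.restrict Ω)) (hχ : ContDiff ℝ 1 χ)
    (hχM : ∀ z, ‖χ z‖ ≤ M) (hdχM : ∀ z, ‖fderiv ℝ χ z‖ ≤ M) (hχΩ : tsupport χ ⊆ Ω) {h : E}
    (hh : ∀ z ∈ tsupport χ, z + h ∈ Ω) :
    IntegrableOn (doublingRemainder w V χ κ · h) (tsupport χ) μ := by
  have hS : μ.restrict (tsupport χ) ≤ μ.restrict Ω := Measure.restrict_mono hχΩ le_rfl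
  have hwS := hw.mono_measure hS
  have hVS := hV.mono_measure hS
  have hwh := memLp_comp_add_right_restrict hΩ hw hh
  have hδw := hwh.sub hwS
  have hδV := (memLp_comp_add_right_restrict hΩ hV hh).sub hVS
  have I₁ := integrable_mul_smul_of_memLp_three hδw hδw hδV
  have I₂ := integrable_mul_smul_of_memLp_three hwh hwh hδV
  have I₃ := integrable_mul_smul_of_memLp_three hδw hwS hVS
  have hdχ : Continuous (fderiv ℝ χ) := hχ.continuous_fderiv one_ne_zero
  refine .sub ?_ (.const_mul ?_ _)
  · exact ((fderiv ℝ κ h).integrable_comp I₁).bdd_mul hχ.continuous.aestronglyMeasurable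
      (ae_of_all _ hχM)
  · exact integrable_clm_apply hdχ.aestronglyMeasurable (ae_of_all _ hdχM)
      (I₂.add (I₃.smul (2 : ℝ)))

lemma integral_doublingIntegrand_eq (hΩ : MeasurableSet Ω)
    (hw : MemLp w 3 (μ.restrict Ω)) (hV : MemLp V 3 (μ.restrict Ω)) (hχ : ContDiff ℝ 1 χ)
    (hχM : ∀ z, ‖χ z‖ ≤ M) (hdχM : ∀ z, ‖fderiv ℝ χ z‖ ≤ M) (hχΩ : tsupport χ ⊆ Ω) {h : E}
    (hh : ∀ z ∈ tsupport χ, z + h ∈ Ω) :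
    ∫ z, doublingIntegrand w V χ κ z h ∂μ =
      (∫ z in tsupport χ, doublingRemainder w V χ κ z h ∂μ)
        - 2 * κ h * ∫ z in tsupport χ, fderiv ℝ χ z ((w z * w z) • V z) ∂μ := by
  have hS : μ.restrict (tsupport χ) ≤ μ.restrict Ω := Measure.restrict_mono hχΩ le_rfl
  have hwS := hw.mono_measure hS
  have hJ := integrable_clm_apply (hχ.continuous_fderiv one_ne_zero).aestronglyMeasurable
    (ae_of_all _ hdχM) (integrable_mul_smul_of_memLp_three hwS hwS (hV.mono_measure hS))
  rw [← setIntegral_eq_integral_of_forall_compl_eq_zero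
    fun z hz => doublingIntegrand_eq_zero_of_notMem (.inl hz), ← integral_const_mul, ← integral_sub
    (integrable_doublingRemainder hΩ hw hV hχ hχM hdχM hχΩ hh) (hJ.const_mul _)]
  simp only [doublingIntegrand_eq_remainder_sub]

variable [IsFiniteMeasure (μ.restrict Ω)]

lemma norm_two_mul_integral_mul_setIntegral_le (hΩ : MeasurableSet Ω)
    (hw : MemLp w 3 (μ.restrict Ω)) (hV : MemLp V 3 (μ.restrict Ω)) (hα : 0 ≤ α) (hC : 0 ≤ C)
    (hwB : HasBesovBound μ 3 α C Ω w) (hVB : HasBesovBound μ 3 α C Ω V)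
    (hwC : eLpNorm w 3 (μ.restrict Ω) ≤ ENNReal.ofReal C)
    (hVC : eLpNorm V 3 (μ.restrict Ω) ≤ ENNReal.ofReal C)
    (hVdiv : IsWeaklyDivFreeOn μ Ω V) (hwVdiv : IsWeaklyDivFreeOn μ Ω fun z => w z • V z)
    (hχ : ContDiff ℝ 1 χ) (hχc : HasCompactSupport χ)
    (hχM : ∀ z, ‖χ z‖ ≤ M) (hdχM : ∀ z, ‖fderiv ℝ χ z‖ ≤ M) (hχΩ : tsupport χ ⊆ Ω)
    (hκ : ContDiff ℝ 1 κ) {ε : ℝ} (hκε : tsupport κ ⊆ Metric.closedBall 0 ε)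
    (hε : ∀ z ∈ tsupport χ, ∀ h ∈ Metric.closedBall (0 : E) ε, z + h ∈ Ω) :
    ‖2 * (∫ h, κ h ∂μ) * ∫ z in tsupport χ, fderiv ℝ χ z ((w z * w z) • V z) ∂μ‖ ≤
      M * (C * ε ^ α) ^ 3 * (∫ h, ‖fderiv ℝ κ h‖ ∂μ) + 3 * M * C ^ 3 * ε ^ α * ∫ h, ‖κ h‖ ∂μ := by
  have hM : 0 ≤ M := (norm_nonneg _).trans (hχM 0)
  set J := ∫ z in tsupport χ, fderiv ℝ χ z ((w z * w z) • V z) ∂μ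
  have hκc : HasCompactSupport κ := (isCompact_closedBall 0 ε).of_isClosed_subset
    (isClosed_tsupport κ) hκε
  obtain ⟨hG, hG₀⟩ := integrable_doublingIntegrand_and_integral_eq_zero hw hV hVdiv hwVdiv hχ hχc
    hχΩ hκ hκc fun z hz h hh => hε z hz h (hκε hh)
  have hκi : Integrable κ μ := hκ.continuous.integrable_of_hasCompactSupport hκc
  have hdκi : Integrable (fderiv ℝ κ) μ :=
    (hκ.continuous_fderiv one_ne_zero).integrable_of_hasCompactSupport (hκc.fderiv ℝ)
  have hJ : 2 * (∫ h, κ h ∂μ) * J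
      = ∫ h, (∫ z, doublingIntegrand w V χ κ z h ∂μ) + 2 * J * κ h ∂μ := by
    rw [integral_add hG (hκi.const_mul _), hG₀, integral_const_mul]
    ring
  rw [hJ, ← integral_const_mul (M * (C * ε ^ α) ^ 3), ← integral_const_mul (3 * M * C ^ 3 * ε ^ α),
    ← integral_add (hdκi.norm.const_mul _) (hκi.norm.const_mul _)]
  refine norm_integral_le_of_norm_le ((hdκi.norm.const_mul _).add (hκi.norm.const_mul _))
    (ae_of_all _ fun h => ?_)
  by_cases hh : h ∈ tsupport κ
  · have hhε := hκε hh
    rw [integral_doublingIntegrand_eq hΩ hw hV hχ hχM hdχM hχΩ fun z hz => hε z hz h hhε]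
    have hle := norm_setIntegral_doublingRemainder_le (κ := κ) hΩ hw hV hC hwB hVB hwC hVC hχM hdχM
      hχΩ fun z hz => hε z hz h hhε
    have hhα : ‖h‖ ^ α ≤ ε ^ α :=
      Real.rpow_le_rpow (norm_nonneg h) (mem_closedBall_zero_iff.1 hhε) hα
    calc _ = ‖∫ z in tsupport χ, doublingRemainder w V χ κ z h ∂μ‖ := by congr 1; ring
      _ ≤ _ := hle
      _ ≤ M * ‖fderiv ℝ κ h‖ * (C * ε ^ α) ^ 3 + 3 * M * C ^ 3 * ‖κ h‖ * ε ^ α := by gcongr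
      _ = _ := by ring
  · have : ∀ z, doublingIntegrand w V χ κ z h = 0 := fun z =>
      doublingIntegrand_eq_zero_of_notMem (.inr hh)
    simp [this, image_eq_zero_of_notMem_tsupport hh, image_eq_zero_of_notMem_tsupport
      (fun H => hh (tsupport_fderiv_subset ℝ H))]

lemma exists_contDiff_unit_mass_scaled (μ : Measure E) [μ.IsAddHaarMeasure] :
    ∃ D : ℝ, ∀ ε : ℝ, 0 < ε → ∃ κ : E → ℝ, ContDiff ℝ 1 κ ∧ tsupport κ ⊆ Metric.closedBall 0 ε ∧
      ∫ h, κ h ∂μ = 1 ∧ ∫ h, ‖κ h‖ ∂μ = 1 ∧ ∫ h, ‖fderiv ℝ κ h‖ ∂μ = ε⁻¹ * D := by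
  let f : ContDiffBump (0 : E) := ⟨1 / 2, 1, by norm_num, by norm_num⟩
  have hf : ContDiff ℝ 1 (f.normed μ) := f.contDiff_normed
  refine ⟨∫ h, ‖fderiv ℝ (f.normed μ) h‖ ∂μ, fun ε hε => ?_⟩
  set d := Module.finrank ℝ E
  set κ : E → ℝ := fun h => (ε ^ d)⁻¹ * f.normed μ (ε⁻¹ • h)
  have hd : 0 < ε ^ d := by positivity
  have hscale (g : E → ℝ) : ∫ h, (ε ^ d)⁻¹ * g (ε⁻¹ • h) ∂μ = ∫ h, g h ∂μ := by
    rw [integral_const_mul, Measure.integral_comp_inv_smul, smul_eq_mul, abs_of_pos hd,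
      inv_mul_cancel_left₀ hd.ne']
  have hmass : ∫ h, κ h ∂μ = 1 := (hscale _).trans f.integral_normed
  have hκ : ContDiff ℝ 1 κ := contDiff_const.mul (hf.comp (contDiff_const_smul _))
  refine ⟨κ, hκ, ?_, hmass, ?_, ?_⟩
  · refine closure_minimal (fun h hh => ?_) Metric.isClosed_closedBall
    have hsupp : ε⁻¹ • h ∈ Function.support (f.normed μ) := right_ne_zero_of_mul hh
    rw [f.support_normed_eq, mem_ball_zero_iff, norm_smul, norm_inv, Real.norm_of_nonneg hε.le,
      inv_mul_lt_iff₀ hε, mul_one] at hsupp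
    exact mem_closedBall_zero_iff.2 hsupp.le
  · rw [← hmass]
    exact integral_congr_ae (ae_of_all _ fun h => Real.norm_of_nonneg
      (mul_nonneg (by positivity) (f.nonneg_normed _)))
  · have hfd (h : E) : ‖fderiv ℝ κ h‖ = (ε ^ d)⁻¹ * (ε⁻¹ * ‖fderiv ℝ (f.normed μ) (ε⁻¹ • h)‖) := by
      have hdiff : DifferentiableAt ℝ (fun h => f.normed μ (ε⁻¹ • h)) h :=
        (hf.comp (contDiff_const_smul _)).differentiable one_ne_zero h
      rw [fderiv_const_mul hdiff, fderiv_comp_smul, norm_smul, norm_smul,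
        Real.norm_of_nonneg (by positivity), Real.norm_of_nonneg (by positivity)]
    simp only [hfd, hscale fun h => ε⁻¹ * ‖fderiv ℝ (f.normed μ) h‖, integral_const_mul]

lemma exists_norm_setIntegral_fderiv_sq_smul_le (hΩ : IsOpen Ω)
    (hw : MemLp w 3 (μ.restrict Ω)) (hV : MemLp V 3 (μ.restrict Ω)) (hα : 0 ≤ α) (hC : 0 ≤ C)
    (hwB : HasBesovBound μ 3 α C Ω w) (hVB : HasBesovBound μ 3 α C Ω V)
    (hwC : eLpNorm w 3 (μ.restrict Ω) ≤ ENNReal.ofReal C)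
    (hVC : eLpNorm V 3 (μ.restrict Ω) ≤ ENNReal.ofReal C)
    (hVdiv : IsWeaklyDivFreeOn μ Ω V) (hwVdiv : IsWeaklyDivFreeOn μ Ω fun z => w z • V z)
    (hχ : ContDiff ℝ 1 χ) (hχc : HasCompactSupport χ) (hχΩ : tsupport χ ⊆ Ω) :
    ∃ A B ε₀ : ℝ, 0 < ε₀ ∧ ∀ ε, 0 < ε → ε ≤ ε₀ →
      ‖2 * ∫ z in tsupport χ, fderiv ℝ χ z ((w z * w z) • V z) ∂μ‖
        ≤ A * ε ^ (3 * α - 1) + B * ε ^ α := by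
  obtain ⟨M₁, hM₁⟩ := hχc.exists_bound_of_continuous hχ.continuous
  obtain ⟨M₂, hM₂⟩ := (hχc.fderiv ℝ).exists_bound_of_continuous (hχ.continuous_fderiv one_ne_zero)
  obtain ⟨ε₀, hε₀, hε₀Ω⟩ := hχc.isCompact.exists_cthickening_subset_open hΩ hχΩ
  obtain ⟨D, hD⟩ := exists_contDiff_unit_mass_scaled μ
  refine ⟨max M₁ M₂ * C ^ 3 * D, 3 * max M₁ M₂ * C ^ 3, ε₀, hε₀, fun ε hε hεε₀ => ?_⟩
  obtain ⟨κ, hκ, hκε, hκ₁, hκ₂, hκ₃⟩ := hD ε hε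
  have hshift (z : E) (hz : z ∈ tsupport χ) (h : E) (hh : h ∈ Metric.closedBall 0 ε) : z + h ∈ Ω :=
    hε₀Ω (Metric.mem_cthickening_of_dist_le _ _ _ _ hz
      (by simpa using (mem_closedBall_zero_iff.1 hh).trans hεε₀))
  have hle := norm_two_mul_integral_mul_setIntegral_le hΩ.measurableSet hw hV hα hC hwB hVB hwC hVC
    hVdiv hwVdiv hχ hχc (fun z => (hM₁ z).trans (le_max_left _ _))
    (fun z => (hM₂ z).trans (le_max_right _ _)) hχΩ hκ hκε hshift
  rw [hκ₁, hκ₂, hκ₃, mul_one, mul_one] at hle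
  refine hle.trans_eq ?_
  have hpow : ε ^ (3 * α - 1) = (ε ^ α) ^ 3 * ε⁻¹ := by
    rw [Real.rpow_sub_one hε.ne', mul_comm 3 α, Real.rpow_mul hε.le, div_eq_mul_inv]
    norm_cast
  rw [hpow]
  ring

/-- The commutator argument of Constantin, E and Titi, in doubled variables. -/
theorem IsWeaklyDivFreeOn.sq_smul (hΩ : IsOpen Ω)
    (hw : MemLp w 3 (μ.restrict Ω)) (hV : MemLp V 3 (μ.restrict Ω)) (hα : 1 / 3 < α)
    (hwB : HasBesovBound μ 3 α C Ω w) (hVB : HasBesovBound μ 3 α C Ω V)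
    (hVdiv : IsWeaklyDivFreeOn μ Ω V) (hwVdiv : IsWeaklyDivFreeOn μ Ω fun z => w z • V z) :
    IsWeaklyDivFreeOn μ Ω fun z => (w z * w z) • V z := by
  intro χ hχ hχc hχΩ
  set B := max C (max (eLpNorm w 3 (μ.restrict Ω)).toReal (eLpNorm V 3 (μ.restrict Ω)).toReal)
  have hwC : eLpNorm w 3 (μ.restrict Ω) ≤ ENNReal.ofReal B :=
    (ENNReal.ofReal_toReal hw.2.ne).symm.trans_le (by gcongr; simp [B])
  have hVC : eLpNorm V 3 (μ.restrict Ω) ≤ ENNReal.ofReal B :=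
    (ENNReal.ofReal_toReal hV.2.ne).symm.trans_le (by gcongr; simp [B])
  have hB : 0 ≤ B := le_max_of_le_right (le_max_of_le_left ENNReal.toReal_nonneg)
  obtain ⟨a, b, ε₀, hε₀, hle⟩ := exists_norm_setIntegral_fderiv_sq_smul_le hΩ hw hV (by linarith) hB
    (hwB.mono (le_max_left _ _)) (hVB.mono (le_max_left _ _)) hwC hVC hVdiv hwVdiv hχ hχc hχΩ
  have hpow {s : ℝ} (hs : 0 < s) :
      Tendsto (fun ε : ℝ => ε ^ s) (nhdsWithin 0 (Ioi 0)) (nhds 0) := by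
    simpa [Real.zero_rpow hs.ne'] using
      ((Real.continuousAt_rpow_const 0 s (.inr hs.le)).tendsto.mono_left nhdsWithin_le_nhds)
  have hlim : Tendsto (fun ε : ℝ => a * ε ^ (3 * α - 1) + b * ε ^ α) (nhdsWithin 0 (Ioi 0))
      (nhds 0) := by
    simpa using ((hpow (by linarith : 0 < 3 * α - 1)).const_mul a).add
      ((hpow (by linarith : 0 < α)).const_mul b)
  have hzero : ‖2 * ∫ z in tsupport χ, fderiv ℝ χ z ((w z * w z) • V z) ∂μ‖ ≤ 0 :=
    ge_of_tendsto hlim (by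
      filter_upwards [Ioc_mem_nhdsGT hε₀] with ε hε using hle ε hε.1 hε.2)
  have hsupp (z : E) (hz : z ∉ tsupport χ) : fderiv ℝ χ z ((w z * w z) • V z) = 0 := by
    rw [image_eq_zero_of_notMem_tsupport (fun H => hz (tsupport_fderiv_subset ℝ H)), zero_apply]
  have hΩeq : ∫ z in Ω, fderiv ℝ χ z ((w z * w z) • V z) ∂μ
      = ∫ z in tsupport χ, fderiv ℝ χ z ((w z * w z) • V z) ∂μ :=
    setIntegral_eq_of_subset_of_forall_sdiff_eq_zero hΩ.measurableSet hχΩ fun z hz => hsupp z hz.2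
  rw [hΩeq]
  exact (mul_eq_zero.1 (norm_le_zero_iff.1 hzero)).resolve_left two_ne_zero

end KernelLimit

section Trace

lemma le_geometric_of_le_mul_add {a : ℕ → ℝ} {θ r C : ℝ} (hθ : 0 ≤ θ) (hr : 0 ≤ r) (hrθ : r < θ)
    (hC : 0 ≤ C) (ha : ∀ n, a (n + 1) ≤ θ * a n + C * r ^ (n + 1)) (k n : ℕ) :
    a (k + n) ≤ θ ^ n * (a k + C * r ^ (k + 1) / (θ - r)) := by
  have hθr : 0 < θ - r := sub_pos.2 hrθ
  have hsharp : a (k + n) ≤ θ ^ n * a k + C * r ^ (k + 1) * (θ ^ n - r ^ n) / (θ - r) := by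
    induction n with
    | zero => simp
    | succ n ih =>
      calc a (k + n + 1) ≤ θ * a (k + n) + C * r ^ (k + n + 1) := ha _
        _ ≤ θ * (θ ^ n * a k + C * r ^ (k + 1) * (θ ^ n - r ^ n) / (θ - r))
            + C * r ^ (k + n + 1) := by gcongr
        _ = _ := by field_simp; ring
  refine hsharp.trans ?_
  calc _ ≤ θ ^ n * a k + C * r ^ (k + 1) * θ ^ n / (θ - r) := by
        gcongr
        linarith [pow_nonneg hr n]
    _ = _ := by ring

section ShiftedSubset

variable {E F : Type*} [NormedAddCommGroup F] [MeasurableSpace E] {μ : Measure E} {S₁ S₂ : Set E}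
  {p : ℝ≥0∞} {f : E → F}

lemma eLpNorm_restrict_rpow_add_sdiff (h₀ : p ≠ 0) (hp : p ≠ ∞) (h₁ : MeasurableSet S₁)
    (h₁₂ : S₁ ⊆ S₂) :
    eLpNorm f p (μ.restrict S₁) ^ p.toReal + eLpNorm f p (μ.restrict (S₂ \ S₁)) ^ p.toReal
      = eLpNorm f p (μ.restrict S₂) ^ p.toReal := by
  simp only [eLpNorm_eq_lintegral_rpow_enorm_toReal h₀ hp, one_div, ENNReal.rpow_inv_rpow
    (ENNReal.toReal_pos h₀ hp).ne']
  rw [← lintegral_inter_add_sdiff _ S₂ h₁, inter_eq_self_of_subset_right h₁₂]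

variable [NormedAddCommGroup E] [MeasurableAdd E] [μ.IsAddRightInvariant] {ξ : E}

/-- If `S₁` and its translate `S₁ + ξ` are disjoint in `S₂`, then up to the increment `f` carries
at most half of its mass on `S₁`. -/
lemma eLpNorm_le_eLpNorm_sub_add_half (hp₁ : 1 ≤ p) (hp : p ≠ ∞) (h₁ : MeasurableSet S₁)
    (h₂ : MeasurableSet S₂) (h₁₂ : S₁ ⊆ S₂) (hξ : ∀ z ∈ S₁, z + ξ ∈ S₂ \ S₁)
    (hf : AEStronglyMeasurable f (μ.restrict S₂)) :
    eLpNorm f p (μ.restrict S₁) ≤ eLpNorm (fun z => f (z + ξ) - f z) p (μ.restrict S₁)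
      + 2⁻¹ ^ (1 / p.toReal) * eLpNorm f p (μ.restrict S₂) := by
  set A := eLpNorm f p (μ.restrict S₁)
  set B := eLpNorm f p (μ.restrict (S₂ \ S₁))
  set G := eLpNorm f p (μ.restrict S₂)
  set ω := eLpNorm (fun z => f (z + ξ) - f z) p (μ.restrict S₁)
  have h₀ : p ≠ 0 := (one_pos.trans_le hp₁).ne'
  have hp₀ : 0 < p.toReal := ENNReal.toReal_pos h₀ hp
  have hf₁ := hf.mono_measure (Measure.restrict_mono h₁₂ le_rfl)
  obtain ⟨hfξ, hBξ⟩ := eLpNorm_comp_add_right_le (p := p) (h₂.diff h₁)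
    (hf.mono_measure (Measure.restrict_mono sdiff_subset le_rfl)) hξ
  have hAB : A - ω ≤ B := by
    rw [tsub_le_iff_left, add_comm]
    calc A = eLpNorm (fun z => f (z + ξ) - (f (z + ξ) - f z)) p (μ.restrict S₁) := by
          simp only [sub_sub_cancel, A]
      _ ≤ eLpNorm (fun z => f (z + ξ)) p (μ.restrict S₁) + ω :=
          eLpNorm_sub_le hfξ (hfξ.sub hf₁) hp₁
      _ ≤ B + ω := by gcongr
  have hhalf : (A - ω) ^ p.toReal ≤ 2⁻¹ * G ^ p.toReal := by
    rw [← ENNReal.div_eq_inv_mul, ENNReal.le_div_iff_mul_le (.inl two_ne_zero)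
      (.inl ENNReal.ofNat_ne_top), mul_two, ← eLpNorm_restrict_rpow_add_sdiff h₀ hp h₁ h₁₂]
    gcongr
    exact tsub_le_self
  refine tsub_le_iff_left.1 ?_
  calc A - ω = ((A - ω) ^ p.toReal) ^ (1 / p.toReal) := by
        rw [one_div, ENNReal.rpow_rpow_inv hp₀.ne']
    _ ≤ (2⁻¹ * G ^ p.toReal) ^ (1 / p.toReal) := by gcongr
    _ = _ := by
        rw [ENNReal.mul_rpow_of_nonneg _ _ (by positivity), one_div, ENNReal.rpow_rpow_inv hp₀.ne']

end ShiftedSubset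

variable {E : Type*} [NormedAddCommGroup E] [NormedSpace ℝ E] {Q : Set E} {ℓ : E →L[ℝ] ℝ} {e : E}

/-- `Q` is a cylinder of height `(-1, 1)` along the unit vector `e`, the height of a point being
read off by the functional `ℓ`. -/
structure IsUnitCylinder (Q : Set E) (ℓ : E →L[ℝ] ℝ) (e : E) : Prop where
  apply_eq_one : ℓ e = 1
  norm_eq_one : ‖e‖ = 1
  add_smul_mem_iff : ∀ z ∈ Q, ∀ h : ℝ, z + h • e ∈ Q ↔ ℓ z + h ∈ Ioo (-1 : ℝ) 1

lemma IsUnitCylinder.neg (hQ : IsUnitCylinder Q ℓ e) : IsUnitCylinder Q (-ℓ) (-e) where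
  apply_eq_one := by simp [hQ.apply_eq_one]
  norm_eq_one := by rw [norm_neg, hQ.norm_eq_one]
  add_smul_mem_iff z hz h := by
    rw [smul_neg, ← neg_smul, hQ.add_smul_mem_iff z hz, neg_apply, mem_Ioo, mem_Ioo]
    constructor <;> rintro ⟨h₁, h₂⟩ <;> constructor <;> linarith

lemma IsUnitCylinder.apply_mem (hQ : IsUnitCylinder Q ℓ e) {z : E} (hz : z ∈ Q) :
    ℓ z ∈ Ioo (-1 : ℝ) 1 := by
  simpa using (hQ.add_smul_mem_iff z hz 0).1 (by simpa using hz)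

/-- The part of `Q` at distance less than `2⁻ⁿ` from the top face `ℓ = 1`. -/
def strip (Q : Set E) (ℓ : E →L[ℝ] ℝ) (n : ℕ) : Set E := Q ∩ {z | 1 - (1 / 2) ^ n < ℓ z}

lemma strip_subset (n : ℕ) : strip Q ℓ n ⊆ Q := inter_subset_left

lemma strip_succ_subset (n : ℕ) : strip Q ℓ (n + 1) ⊆ strip Q ℓ n := by
  rintro z ⟨hz, hlt⟩
  refine ⟨hz, mem_ofPred.2 (lt_of_le_of_lt ?_ hlt)⟩
  rw [pow_succ]
  linarith [pow_pos one_half_pos n (M₀ := ℝ)]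

lemma IsUnitCylinder.add_smul_mem_strip_iff (hQ : IsUnitCylinder Q ℓ e) {n : ℕ} {z : E}
    (hz : z ∈ strip Q ℓ n) (h : ℝ) :
    z + h • e ∈ strip Q ℓ n ↔ ℓ z + h ∈ Ioo (1 - (1 / 2) ^ n : ℝ) 1 := by
  have hn : (1 / 2 : ℝ) ^ n ≤ 1 := pow_le_one₀ (by norm_num) (by norm_num)
  rw [strip, mem_inter_iff, hQ.add_smul_mem_iff z hz.1, mem_ofPred_eq, map_add, map_smul,
    hQ.apply_eq_one, smul_eq_mul, mul_one, mem_Ioo, mem_Ioo]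
  constructor
  · exact fun h => ⟨h.2, h.1.2⟩
  · exact fun h => ⟨⟨by linarith [h.1], h.2⟩, h.1⟩

lemma IsUnitCylinder.sub_smul_mem_strip_sdiff (hQ : IsUnitCylinder Q ℓ e) {n : ℕ} {z : E}
    (hz : z ∈ strip Q ℓ (n + 1)) :
    z + (-(1 / 2) ^ (n + 1) : ℝ) • e ∈ strip Q ℓ n \ strip Q ℓ (n + 1) := by
  have h₁ := (hQ.apply_mem hz.1).2
  have h₂ := hz.2
  rw [mem_ofPred_eq, pow_succ] at h₂
  rw [Set.mem_sdiff, hQ.add_smul_mem_strip_iff (strip_succ_subset n hz),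
    hQ.add_smul_mem_strip_iff hz, mem_Ioo, mem_Ioo, pow_succ]
  have := pow_pos one_half_pos n (M₀ := ℝ)
  exact ⟨⟨by linarith, by linarith⟩, fun h => by linarith [h.1]⟩

lemma IsUnitCylinder.add_smul_mem_strip_neg (hQ : IsUnitCylinder Q ℓ e) {n : ℕ} {z : E}
    (hz : z ∈ strip Q ℓ n) : z + (-(2 - (1 / 2) ^ n) : ℝ) • e ∈ strip Q (-ℓ) n := by
  have hn : (1 / 2 : ℝ) ^ n ≤ 1 := pow_le_one₀ (by norm_num) (by norm_num)
  have h₁ := (hQ.apply_mem hz.1).2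
  have h₂ : 1 - (1 / 2) ^ n < ℓ z := hz.2
  refine ⟨(hQ.add_smul_mem_iff z hz.1 _).2 ⟨by linarith, by linarith⟩, ?_⟩
  rw [mem_ofPred_eq, neg_apply, map_add, map_smul, hQ.apply_eq_one, smul_eq_mul]
  linarith

/-- `Ψ` frozen along `e` at the height `σ`. -/
def freeze (ℓ : E →L[ℝ] ℝ) (e : E) (σ : ℝ) (Ψ : E → ℝ) (z : E) : ℝ := Ψ (z + (σ - ℓ z) • e)

lemma freeze_add_smul (he : ℓ e = 1) (σ : ℝ) (Ψ : E → ℝ) (z : E) (h : ℝ) :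
    freeze ℓ e σ Ψ (z + h • e) = freeze ℓ e σ Ψ z := by
  rw [freeze, freeze, map_add, map_smul, he, smul_eq_mul, mul_one]
  congr 1
  module

variable [MeasurableSpace E] [BorelSpace E] {μ : Measure E} {p : ℝ≥0∞} {α C : ℝ}

lemma measurableSet_strip (hQ : MeasurableSet Q) (n : ℕ) : MeasurableSet (strip Q ℓ n) :=
  hQ.inter (measurableSet_lt measurable_const ℓ.continuous.measurable)

section Descent

variable [μ.IsAddRightInvariant]

lemma IsUnitCylinder.eLpNorm_strip_succ_le (hQ : IsUnitCylinder Q ℓ e) (hQm : MeasurableSet Q)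
    (hp₁ : 1 ≤ p) (hp : p ≠ ∞) {f : E → ℝ} (hf : MemLp f p (μ.restrict Q)) (hC : 0 ≤ C)
    (n : ℕ) (hfB : eLpNorm (fun z => f (z + (-(1 / 2) ^ (n + 1) : ℝ) • e) - f z) p
      (μ.restrict (strip Q ℓ (n + 1))) ≤ ENNReal.ofReal (C * ((1 / 2) ^ α) ^ (n + 1))) :
    (eLpNorm f p (μ.restrict (strip Q ℓ (n + 1)))).toReal ≤
      (1 / 2) ^ (1 / p.toReal) * (eLpNorm f p (μ.restrict (strip Q ℓ n))).toReal
        + C * ((1 / 2) ^ α) ^ (n + 1) := by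
  have hfn := hf.mono_measure (Measure.restrict_mono (strip_subset (ℓ := ℓ) n) le_rfl)
  refine ENNReal.toReal_le_of_le_ofReal (by positivity)
    ((eLpNorm_le_eLpNorm_sub_add_half hp₁ hp (measurableSet_strip hQm _) (measurableSet_strip hQm _)
      (strip_succ_subset n) (fun z hz => hQ.sub_smul_mem_strip_sdiff hz) hfn.1).trans ?_)
  rw [add_comm, ENNReal.ofReal_add (by positivity) (by positivity),
    ENNReal.ofReal_mul (by positivity), ENNReal.ofReal_toReal hfn.2.ne,
    ← ENNReal.ofReal_rpow_of_pos (by norm_num)]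
  gcongr
  simp

lemma IsUnitCylinder.eLpNorm_strip_le (hQ : IsUnitCylinder Q ℓ e) (hQm : MeasurableSet Q)
    (hp₁ : 1 ≤ p) (hp : p ≠ ∞) (hα : 1 / p.toReal < α) {f : E → ℝ}
    (hf : MemLp f p (μ.restrict Q)) (hC : 0 ≤ C)
    (hfB : ∀ h : ℝ, eLpNorm (fun z => f (z + h • e) - f z) p
      (μ.restrict (Q ∩ (· + h • e) ⁻¹' Q)) ≤ ENNReal.ofReal (C * |h| ^ α)) (k n : ℕ) :
    (eLpNorm f p (μ.restrict (strip Q ℓ (k + n)))).toReal ≤ ((1 / 2) ^ (1 / p.toReal)) ^ n *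
      ((eLpNorm f p (μ.restrict (strip Q ℓ k))).toReal
        + C * ((1 / 2) ^ α) ^ (k + 1) / ((1 / 2) ^ (1 / p.toReal) - (1 / 2) ^ α)) := by
  refine le_geometric_of_le_mul_add (by positivity) (by positivity)
    (Real.rpow_lt_rpow_of_exponent_gt (by norm_num) (by norm_num) hα) hC (fun n => ?_) k n
    (a := fun n => (eLpNorm f p (μ.restrict (strip Q ℓ n))).toReal)
  refine hQ.eLpNorm_strip_succ_le hQm hp₁ hp hf hC n ?_
  have hsub : strip Q ℓ (n + 1) ⊆ Q ∩ (· + (-(1 / 2) ^ (n + 1) : ℝ) • e) ⁻¹' Q := fun z hz =>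
    ⟨hz.1, (hQ.sub_smul_mem_strip_sdiff hz).1.1⟩
  refine (eLpNorm_mono_measure _ (Measure.restrict_mono hsub le_rfl)).trans ((hfB _).trans_eq ?_)
  rw [abs_neg, abs_of_pos (by positivity), ← Real.rpow_natCast, ← Real.rpow_natCast,
    ← Real.rpow_mul (by norm_num), ← Real.rpow_mul (by norm_num), mul_comm α]

end Descent

lemma lintegral_indicator_sub_translate_le (hp₀ : p ≠ 0) (hp : p ≠ ∞) {S : Set E}
    (hS : MeasurableSet S) {a b : ℝ} (hℓS : ∀ z ∈ S, ℓ z ∈ Ioo a b)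
    (hSI : ∀ z ∈ S, ∀ h : ℝ, z + h • e ∈ S ↔ ℓ z + h ∈ Ioo a b) {w Ψ : E → ℝ} {B : ℝ≥0∞}
    (hB : ∀ h : ℝ, |h| ≤ b - a → eLpNorm (fun z => w z - Ψ (z + h • e)) p
      (μ.restrict (S ∩ (· + h • e) ⁻¹' S)) ≤ B) (h : ℝ) :
    ∫⁻ z in S, (Ioo a b).indicator (fun _ => ‖w z - Ψ (z + h • e)‖ₑ ^ p.toReal) (ℓ z + h) ∂μ
      ≤ (Icc (-(b - a)) (b - a)).indicator (fun _ => B ^ p.toReal) h := by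
  have hpos : 0 < p.toReal := ENNReal.toReal_pos hp₀ hp
  have hSh : MeasurableSet ((· + h • e) ⁻¹' S) :=
    hS.preimage (by fun_prop : Continuous fun z => z + h • e).measurable
  by_cases hh : h ∈ Icc (-(b - a)) (b - a)
  · rw [indicator_of_mem hh, ← ENNReal.rpow_inv_le_iff hpos, ← one_div]
    refine Eq.trans_le ?_ (hB h (abs_le.2 hh))
    rw [eLpNorm_eq_lintegral_rpow_enorm_toReal hp₀ hp, inter_comm,
      ← Measure.restrict_restrict hSh, ← lintegral_indicator hSh]
    congr 1
    refine setLIntegral_congr_fun hS fun z hz => ?_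
    simp only [indicator, mem_preimage, hSI z hz]
  · rw [indicator_of_notMem hh, nonpos_iff_eq_zero, ← lintegral_zero (μ := μ.restrict S)]
    refine setLIntegral_congr_fun hS fun z hz => indicator_of_notMem (fun hzh => hh ?_) _
    obtain ⟨h₁, h₂⟩ := hℓS z hz
    exact ⟨by linarith [hzh.1], by linarith [hzh.2]⟩

section Freezing

variable [FiniteDimensional ℝ E] [SFinite μ]

lemma lintegral_lintegral_sub_freeze_eq {S : Set E} {I : Set ℝ} (hI : MeasurableSet I)
    {w Ψ : E → ℝ} (hw : AEStronglyMeasurable w (μ.restrict S)) (hΨ : Continuous Ψ) (q : ℝ) :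
    ∫⁻ σ in I, ∫⁻ z in S, ‖w z - freeze ℓ e σ Ψ z‖ₑ ^ q ∂μ =
      ∫⁻ h : ℝ, ∫⁻ z in S, I.indicator (fun _ => ‖w z - Ψ (z + h • e)‖ₑ ^ q) (ℓ z + h) ∂μ := by
  have hw' (ν : Measure ℝ) [SFinite ν] :
      AEMeasurable (fun x : ℝ × E => w x.2) (ν.prod (μ.restrict S)) := hw.comp_snd.aemeasurable
  have hΨσ : Continuous fun x : ℝ × E => Ψ (x.2 + (x.1 - ℓ x.2) • e) := by fun_prop
  have hΨh : Continuous fun x : ℝ × E => Ψ (x.2 + x.1 • e) := by fun_prop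
  have hIℓ : MeasurableSet {x : ℝ × E | ℓ x.2 + x.1 ∈ I} :=
    hI.preimage (by fun_prop : Continuous fun x : ℝ × E => ℓ x.2 + x.1).measurable
  have hind : AEMeasurable (fun x : ℝ × E =>
      I.indicator (fun _ => ‖w x.2 - Ψ (x.2 + x.1 • e)‖ₑ ^ q) (ℓ x.2 + x.1))
      (volume.prod (μ.restrict S)) :=
    (((hw' volume).sub hΨh.measurable.aemeasurable).enorm.pow_const q).indicator hIℓ
  rw [lintegral_lintegral_swap (((hw' _).sub hΨσ.measurable.aemeasurable).enorm.pow_const q)]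
  refine Eq.trans (lintegral_congr fun z => ?_) (lintegral_lintegral_swap hind).symm
  rw [← lintegral_indicator hI, ← lintegral_add_left_eq_self _ (ℓ z)]
  refine lintegral_congr fun h => ?_
  simp only [indicator, freeze, add_sub_cancel_left]

/-- Averaging over the height: some frozen copy of `Ψ` is as close to `w` as the average
translate of `Ψ` along `e` by at most the thickness of `S`. -/
lemma exists_eLpNorm_sub_freeze_le (hp₀ : p ≠ 0) (hp : p ≠ ∞) {S : Set E} (hS : MeasurableSet S)
    {a b : ℝ} (hab : a < b) (hℓS : ∀ z ∈ S, ℓ z ∈ Ioo a b)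
    (hSI : ∀ z ∈ S, ∀ h : ℝ, z + h • e ∈ S ↔ ℓ z + h ∈ Ioo a b)
    {w Ψ : E → ℝ} (hw : AEStronglyMeasurable w (μ.restrict S)) (hΨ : Continuous Ψ) {B : ℝ≥0∞}
    (hB : ∀ h : ℝ, |h| ≤ b - a → eLpNorm (fun z => w z - Ψ (z + h • e)) p
      (μ.restrict (S ∩ (· + h • e) ⁻¹' S)) ≤ B) :
    ∃ σ, eLpNorm (fun z => w z - freeze ℓ e σ Ψ z) p (μ.restrict S) ≤ 2 ^ (1 / p.toReal) * B := by
  have hpos : 0 < p.toReal := ENNReal.toReal_pos hp₀ hp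
  set F : ℝ → ℝ≥0∞ := fun σ => ∫⁻ z in S, ‖w z - freeze ℓ e σ Ψ z‖ₑ ^ p.toReal ∂μ
  have hFm : AEMeasurable F (volume.restrict (Ioo a b)) := by
    have hΨσ : Continuous fun x : ℝ × E => Ψ (x.2 + (x.1 - ℓ x.2) • e) := by fun_prop
    exact ((hw.comp_snd.aemeasurable.sub hΨσ.measurable.aemeasurable).enorm.pow_const
      p.toReal).lintegral_prod_right'
  have htotal : ∫⁻ σ in Ioo a b, F σ ≤ 2 * B ^ p.toReal * ENNReal.ofReal (b - a) := by
    calc ∫⁻ σ in Ioo a b, F σ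
        ≤ ∫⁻ h : ℝ, (Icc (-(b - a)) (b - a)).indicator (fun _ => B ^ p.toReal) h :=
          (lintegral_lintegral_sub_freeze_eq measurableSet_Ioo hw hΨ _).trans_le
            (lintegral_mono (lintegral_indicator_sub_translate_le hp₀ hp hS hℓS hSI hB))
      _ = 2 * B ^ p.toReal * ENNReal.ofReal (b - a) := by
          rw [lintegral_indicator_const measurableSet_Icc, Real.volume_Icc, sub_neg_eq_add,
            ← two_mul, ENNReal.ofReal_mul zero_le_two, ENNReal.ofReal_ofNat]
          ring
  have hvol : volume (Ioo a b) = ENNReal.ofReal (b - a) := Real.volume_Ioo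
  have hvol₀ : ENNReal.ofReal (b - a) ≠ 0 := by simpa using hab
  obtain ⟨σ, -, hσ⟩ := exists_le_setLAverage (by rwa [hvol]) (by simp [hvol]) hFm
  refine ⟨σ, ?_⟩
  rw [eLpNorm_eq_lintegral_rpow_enorm_toReal hp₀ hp, one_div, ENNReal.rpow_inv_le_iff hpos,
    ENNReal.mul_rpow_of_nonneg _ _ hpos.le, ENNReal.rpow_inv_rpow hpos.ne']
  refine hσ.trans ?_
  rw [setLAverage_eq, hvol]
  exact ENNReal.div_le_of_le_mul htotal

end Freezing

end Trace

lemma memLp_restrict_of_isBounded {E F : Type*} [NormedAddCommGroup E] [ProperSpace E]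
    [MeasurableSpace E] [BorelSpace E] [NormedAddCommGroup F] {μ : Measure E}
    [IsFiniteMeasureOnCompacts μ] {p : ℝ≥0∞} {Q : Set E} (hQ : Bornology.IsBounded Q)
    {f : E → F} (hf : Continuous f) : MemLp f p (μ.restrict Q) := by
  have hK : IsCompact (closure Q) := hQ.isCompact_closure
  have : IsFiniteMeasure (μ.restrict (closure Q)) :=
    ⟨by rw [Measure.restrict_apply_univ]; exact hK.measure_lt_top⟩
  obtain ⟨M, hM⟩ := hK.exists_bound_of_continuousOn hf.continuousOn
  exact (MemLp.of_bound hf.aestronglyMeasurable M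
    (ae_restrict_of_forall_mem isClosed_closure.measurableSet hM)).mono_measure
    (Measure.restrict_mono subset_closure le_rfl)

section TraceApproximation

variable {E : Type*} [NormedAddCommGroup E] [NormedSpace ℝ E] [MeasurableSpace E] [BorelSpace E]
  {μ : Measure E} {Q : Set E} {ℓ : E →L[ℝ] ℝ} {e : E} {p : ℝ≥0∞}
  {α C : ℝ} {w Ψ : E → ℝ}

variable [μ.IsAddHaarMeasure]

lemma IsUnitCylinder.eLpNorm_strip_sub_translate_le (hQ : IsUnitCylinder Q ℓ e)
    (hQm : MeasurableSet Q) (hp₁ : 1 ≤ p) (hα : 0 ≤ α) (hC : 0 ≤ C)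
    (hw : AEStronglyMeasurable w (μ.restrict Q)) (hwB : HasBesovBound μ p α C Q w) {k : ℕ}
    (hΨ : Continuous Ψ)
    (hwΨ : eLpNorm (fun z => w z - Ψ z) p (μ.restrict Q) ≤ ENNReal.ofReal (((1 / 2) ^ α) ^ k))
    {h : ℝ} (hh : |h| ≤ (1 / 2) ^ k) :
    eLpNorm (fun z => w z - Ψ (z + h • e)) p
      (μ.restrict (strip Q ℓ k ∩ (· + h • e) ⁻¹' strip Q ℓ k)) ≤
      ENNReal.ofReal ((C + 1) * ((1 / 2) ^ α) ^ k) := by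
  set S := strip Q ℓ k ∩ (· + h • e) ⁻¹' strip Q ℓ k
  have hSQ : S ⊆ Q := fun z hz => hz.1.1
  have hSh : ∀ z ∈ S, z + h • e ∈ Q := fun z hz => hz.2.1
  have hwh : eLpNorm (fun z => w (z + h • e) - w z) p (μ.restrict S) ≤
      ENNReal.ofReal (C * ((1 / 2) ^ α) ^ k) := by
    refine (hwB.eLpNorm_sub_le hSQ hSh).trans (ENNReal.ofReal_le_ofReal ?_)
    rw [norm_smul, hQ.norm_eq_one, mul_one, Real.norm_eq_abs, ← Real.rpow_natCast,
      ← Real.rpow_mul (by norm_num), mul_comm α, Real.rpow_mul (by norm_num), Real.rpow_natCast]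
    gcongr
  have hΨh := eLpNorm_comp_add_right_le (p := p) hQm (hw.sub hΨ.aestronglyMeasurable) hSh
  have hwm := (eLpNorm_comp_add_right_le (p := p) hQm hw hSh).1.sub (hw.mono_set hSQ)
  calc eLpNorm (fun z => w z - Ψ (z + h • e)) p (μ.restrict S)
      = eLpNorm ((fun z => w (z + h • e) - Ψ (z + h • e)) - fun z => w (z + h • e) - w z) p
          (μ.restrict S) := by
        congr 1
        ext z
        simp only [Pi.sub_apply]
        ring
    _ ≤ ENNReal.ofReal (((1 / 2) ^ α) ^ k) + ENNReal.ofReal (C * ((1 / 2) ^ α) ^ k) :=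
        (eLpNorm_sub_le hΨh.1 hwm hp₁).trans (add_le_add (hΨh.2.trans hwΨ) hwh)
    _ = ENNReal.ofReal ((C + 1) * ((1 / 2) ^ α) ^ k) := by
        rw [← ENNReal.ofReal_add (by positivity) (by positivity)]
        congr 1
        ring

variable [FiniteDimensional ℝ E]

lemma IsUnitCylinder.exists_eLpNorm_strip_sub_freeze_le (hQ : IsUnitCylinder Q ℓ e)
    (hQm : MeasurableSet Q) (hp₁ : 1 ≤ p) (hp : p ≠ ∞) (hα : 0 ≤ α) (hC : 0 ≤ C)
    (hw : AEStronglyMeasurable w (μ.restrict Q)) (hwB : HasBesovBound μ p α C Q w) (k : ℕ)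
    (hΨ : Continuous Ψ)
    (hwΨ : eLpNorm (fun z => w z - Ψ z) p (μ.restrict Q) ≤ ENNReal.ofReal (((1 / 2) ^ α) ^ k)) :
    ∃ σ, (eLpNorm (fun z => w z - freeze ℓ e σ Ψ z) p (μ.restrict (strip Q ℓ k))).toReal ≤
      2 ^ (1 / p.toReal) * ((C + 1) * ((1 / 2) ^ α) ^ k) := by
  obtain ⟨σ, hσ⟩ := exists_eLpNorm_sub_freeze_le (zero_lt_one.trans_le hp₁).ne' hp
    (measurableSet_strip hQm k) (by linarith [pow_pos one_half_pos k (M₀ := ℝ)])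
    (fun z hz => ⟨hz.2, (hQ.apply_mem hz.1).2⟩) (fun z hz h => hQ.add_smul_mem_strip_iff hz h)
    (hw.mono_set (strip_subset k)) hΨ fun h hh => hQ.eLpNorm_strip_sub_translate_le hQm hp₁ hα hC hw
      hwB hΨ hwΨ (by rwa [sub_sub_cancel] at hh)
  refine ⟨σ, ENNReal.toReal_le_of_le_ofReal (by positivity) (hσ.trans_eq ?_)⟩
  rw [ENNReal.ofReal_mul (p := 2 ^ (1 / p.toReal)) (by positivity),
    ← ENNReal.ofReal_rpow_of_pos two_pos, ENNReal.ofReal_ofNat]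

/-- The rate `(2⁻¹ᐟᵖ)ⁿ` is that of the `L^p` norm of a constant on a strip of thickness `2⁻ⁿ`;
the gain is the arbitrarily small factor `η`. -/
lemma IsUnitCylinder.exists_eLpNorm_strip_sub_freeze_le_mul_pow (hQ : IsUnitCylinder Q ℓ e)
    (hQm : MeasurableSet Q) (hQb : Bornology.IsBounded Q) (hp₁ : 1 ≤ p) (hp : p ≠ ∞)
    (hα : 1 / p.toReal < α) (hC : 0 ≤ C)
    (hw : MemLp w p (μ.restrict Q)) (hwB : HasBesovBound μ p α C Q w) {η : ℝ} (hη : 0 < η) :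
    ∃ k, ∃ ε > 0, ∀ Ψ : E → ℝ, Continuous Ψ →
      eLpNorm (fun z => w z - Ψ z) p (μ.restrict Q) ≤ ENNReal.ofReal ε →
      ∃ σ, ∀ n ≥ k, eLpNorm (fun z => w z - freeze ℓ e σ Ψ z) p (μ.restrict (strip Q ℓ n)) ≤
        ENNReal.ofReal (η * ((1 / 2) ^ (1 / p.toReal)) ^ n) := by
  set θ : ℝ := (1 / 2) ^ (1 / p.toReal)
  set r : ℝ := (1 / 2) ^ α
  have hr₀ : 0 < r := by positivity
  have hθ₀ : 0 < θ := by positivity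
  have hrθ : r < θ := Real.rpow_lt_rpow_of_exponent_gt (by norm_num) (by norm_num) hα
  set K := 2 ^ (1 / p.toReal) * (C + 1) + C * r / (θ - r)
  have hlim : Tendsto (fun k : ℕ => K * (r / θ) ^ k) atTop (nhds (K * 0)) :=
    (tendsto_pow_atTop_nhds_zero_of_lt_one (by positivity) ((div_lt_one hθ₀).2 hrθ)).const_mul K
  rw [mul_zero] at hlim
  obtain ⟨k, hk⟩ := (hlim.eventually_le_const hη).exists
  refine ⟨k, r ^ k, by positivity, fun Ψ hΨ hwΨ => ?_⟩
  obtain ⟨σ, hσ⟩ := hQ.exists_eLpNorm_strip_sub_freeze_le hQm hp₁ hp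
    ((by positivity : 0 ≤ 1 / p.toReal).trans hα.le) hC hw.1 hwB k hΨ hwΨ
  refine ⟨σ, fun n hn => ?_⟩
  obtain ⟨m, rfl⟩ := Nat.exists_eq_add_of_le hn
  have hfreeze : Continuous (freeze ℓ e σ Ψ) :=
    (by fun_prop : Continuous fun z => Ψ (z + (σ - ℓ z) • e))
  have hdiff := hw.sub (memLp_restrict_of_isBounded hQb hfreeze)
  rw [← Pi.sub_def, ENNReal.le_ofReal_iff_toReal_le
    (hdiff.mono_measure (Measure.restrict_mono (strip_subset _) le_rfl)).2.ne (by positivity)]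
  refine (hQ.eLpNorm_strip_le hQm hp₁ hp hα hdiff hC (fun h => ?_) k m).trans ?_
  · simp only [Pi.sub_apply, freeze_add_smul hQ.apply_eq_one, sub_sub_sub_cancel_right]
    simpa only [norm_smul, hQ.norm_eq_one, mul_one, Real.norm_eq_abs] using hwB (h • e)
  · calc θ ^ m * ((eLpNorm (w - freeze ℓ e σ Ψ) p (μ.restrict (strip Q ℓ k))).toReal
          + C * r ^ (k + 1) / (θ - r))
        ≤ θ ^ m * (2 ^ (1 / p.toReal) * ((C + 1) * r ^ k) + C * r ^ (k + 1) / (θ - r)) := by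
          gcongr
          exact hσ
      _ = K * (r / θ) ^ k * θ ^ (k + m) := by
          simp only [K, div_pow, pow_add, pow_succ]
          field_simp
      _ ≤ η * θ ^ (k + m) := by gcongr

end TraceApproximation

section FaceCutoff

/-- A smooth even bump on the line, equal to `1` on `[-1, 1]` and supported in `[-2, 2]`. -/
def unitBump : ContDiffBump (0 : ℝ) := ⟨1, 2, one_pos, one_lt_two⟩

/-- A `2`-periodic cutoff, equal to `1` near the odd integers and supported, in `[-1, 1]`, at
distance at most `2⁻ⁿ` from `±1`. -/
def faceCutoff (n : ℕ) (s : ℝ) : ℝ := unitBump (2 ^ (n + 1) * Real.cos (Real.pi * s / 2))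

variable {n : ℕ} {s : ℝ}

lemma contDiff_faceCutoff : ContDiff ℝ 1 (faceCutoff n) :=
  unitBump.contDiff.comp (contDiff_const.mul (Real.contDiff_cos.comp (by fun_prop)))

lemma faceCutoff_add_two : faceCutoff n (s + 2) = faceCutoff n s := by
  rw [faceCutoff, mul_add, add_div, mul_div_cancel_right₀ _ two_ne_zero, Real.cos_add_pi, mul_neg,
    ContDiffBump.neg, faceCutoff]

lemma faceCutoff_nonneg : 0 ≤ faceCutoff n s := unitBump.nonneg

lemma faceCutoff_le_one : faceCutoff n s ≤ 1 := unitBump.le_one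

lemma faceCutoff_eventuallyEq_one (hs : |s| = 1) : faceCutoff n =ᶠ[nhds s] 1 := by
  have hcos : Real.cos (Real.pi * s / 2) = 0 := by
    rw [← Real.cos_abs, abs_div, abs_mul, hs, abs_of_pos Real.pi_pos, mul_one, abs_two,
      Real.cos_pi_div_two]
  have hcont : Continuous fun s => 2 ^ (n + 1) * Real.cos (Real.pi * s / 2) := by fun_prop
  have hnear := hcont.continuousAt.eventually_mem (x := s) (s := Metric.ball 0 1)
    (Metric.isOpen_ball.mem_nhds (by simp [hcos]))
  filter_upwards [hnear] with t ht
  exact unitBump.one_of_mem_closedBall (Metric.ball_subset_closedBall ht)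

lemma one_sub_abs_le_cos (hs : |s| ≤ 1) : 1 - |s| ≤ Real.cos (Real.pi * s / 2) := by
  have h := Real.one_sub_mul_le_cos (x := Real.pi * |s| / 2) (by positivity)
    (by nlinarith [Real.pi_pos])
  rw [← Real.cos_abs, abs_div, abs_mul, abs_of_pos Real.pi_pos, abs_two]
  refine le_trans (le_of_eq ?_) h
  field_simp

lemma faceCutoff_eq_zero (hs : |s| ≤ 1 - (1 / 2) ^ n) : faceCutoff n s = 0 := by
  have hpos : (0 : ℝ) < (1 / 2) ^ n := by positivity
  refine unitBump.zero_of_le_dist ?_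
  rw [dist_zero_right, Real.norm_eq_abs]
  calc (2 : ℝ) = 2 ^ (n + 1) * (1 / 2) ^ n := by
        rw [pow_succ, mul_right_comm, ← mul_pow]
        norm_num
    _ ≤ 2 ^ (n + 1) * Real.cos (Real.pi * s / 2) := by
        gcongr
        linarith [one_sub_abs_le_cos (s := s) (by linarith)]
    _ ≤ _ := le_abs_self _

lemma tendsto_faceCutoff (hs : |s| < 1) : Tendsto (fun n => faceCutoff n s) atTop (nhds 0) := by
  have hpow := tendsto_pow_atTop_nhds_zero_of_lt_one (r := (1 / 2 : ℝ)) (by norm_num) (by norm_num)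
  refine tendsto_const_nhds.congr' ?_
  filter_upwards [hpow.eventually_le_const (sub_pos.2 hs)] with n hn
  exact (faceCutoff_eq_zero (by linarith)).symm

/-- Zeros of the nonnegative function `faceCutoff n` are minima. -/
lemma deriv_faceCutoff_eq_zero (hs : |s| ≤ 1 - (1 / 2) ^ n) : deriv (faceCutoff n) s = 0 :=
  IsLocalMin.deriv_eq_zero (Eventually.of_forall fun _ =>
    (faceCutoff_eq_zero hs).trans_le faceCutoff_nonneg)

lemma exists_abs_deriv_faceCutoff_le : ∃ L, ∀ n s, |deriv (faceCutoff n) s| ≤ L * 2 ^ n := by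
  have hf : ContDiff ℝ 1 unitBump := unitBump.contDiff
  obtain ⟨L, hL⟩ := unitBump.hasCompactSupport.deriv.exists_bound_of_continuous
    (hf.continuous_deriv le_rfl)
  refine ⟨L * Real.pi, fun n s => ?_⟩
  have hd : HasDerivAt (faceCutoff n) (deriv unitBump (2 ^ (n + 1) * Real.cos (Real.pi * s / 2)) *
      (2 ^ (n + 1) * (-Real.sin (Real.pi * s / 2) * (Real.pi / 2)))) s := by
    refine (hf.differentiable one_ne_zero _).hasDerivAt.comp s ?_
    refine (HasDerivAt.cos ?_).const_mul _
    simpa using ((hasDerivAt_id s).const_mul Real.pi).div_const 2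
  have hL₀ := (norm_nonneg _).trans (hL 0)
  rw [hd.deriv, abs_mul]
  calc _ ≤ L * (2 ^ (n + 1) * (1 * (Real.pi / 2))) := by
        refine mul_le_mul (hL _) ?_ (abs_nonneg _) hL₀
        rw [abs_mul, abs_mul, abs_neg, abs_of_pos (by positivity : (0 : ℝ) < 2 ^ (n + 1)),
          abs_of_pos (by positivity : 0 < Real.pi / 2)]
        gcongr
        exact Real.abs_sin_le_one _
    _ = L * Real.pi * 2 ^ n := by ring

end FaceCutoff

section FaceEstimate

variable {E : Type*} [NormedAddCommGroup E] [NormedSpace ℝ E] [MeasurableSpace E] [BorelSpace E]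
  {μ : Measure E} {Q : Set E} {ℓ : E →L[ℝ] ℝ} {e : E} {p : ℝ≥0∞}
  {w ψ ψ' g : E → ℝ} {a b : ℝ} {n : ℕ}

lemma norm_setIntegral_deriv_faceCutoff_mul_le {L M : ℝ} (hQm : MeasurableSet Q)
    (hL : ∀ n s, |deriv (faceCutoff n) s| ≤ L * 2 ^ n) {φ G : E → ℝ} (hφ : ∀ z ∈ Q, ‖φ z‖ ≤ M)
    (hG : IntegrableOn G Q μ) :
    ‖∫ z in Q, φ z * deriv (faceCutoff n) (ℓ z) * G z ∂μ‖ ≤ M * (L * 2 ^ n) *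
      ((∫ z in strip Q ℓ n, ‖G z‖ ∂μ) + ∫ z in strip Q (-ℓ) n, ‖G z‖ ∂μ) := by
  have hsm (ℓ' : E →L[ℝ] ℝ) := measurableSet_strip (ℓ := ℓ') hQm n
  have hGs (ℓ' : E →L[ℝ] ℝ) : IntegrableOn ((strip Q ℓ' n).indicator fun z => ‖G z‖) Q μ :=
    (hG.norm.indicator (hsm ℓ'))
  have hint (ℓ' : E →L[ℝ] ℝ) : ∫ z in Q, (strip Q ℓ' n).indicator (fun z => ‖G z‖) z ∂μ =
      ∫ z in strip Q ℓ' n, ‖G z‖ ∂μ := by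
    rw [integral_indicator (hsm ℓ'), Measure.restrict_restrict_of_subset (strip_subset n)]
  rw [← hint, ← hint, ← integral_add (hGs ℓ) (hGs (-ℓ)), ← integral_const_mul]
  refine norm_integral_le_of_norm_le (((hGs ℓ).add (hGs (-ℓ))).const_mul _)
    (ae_restrict_of_forall_mem hQm fun z hz => ?_)
  have hnn (ℓ' : E →L[ℝ] ℝ) : 0 ≤ (strip Q ℓ' n).indicator (fun z => ‖G z‖) z :=
    indicator_nonneg (fun _ _ => norm_nonneg _) _
  have hM : 0 ≤ M := (norm_nonneg _).trans (hφ z hz)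
  have hLn : 0 ≤ L * 2 ^ n := (abs_nonneg _).trans (hL n 0)
  rcases le_or_gt |ℓ z| (1 - (1 / 2) ^ n) with hzn | hzn
  · rw [deriv_faceCutoff_eq_zero hzn, mul_zero, zero_mul, norm_zero]
    exact mul_nonneg (mul_nonneg hM hLn) (add_nonneg (hnn ℓ) (hnn (-ℓ)))
  · rw [norm_mul, norm_mul]
    refine mul_le_mul (mul_le_mul (hφ z hz) (hL n _) (norm_nonneg _) hM) ?_ (norm_nonneg _)
      (mul_nonneg hM hLn)
    rcases lt_abs.1 hzn with h | h
    · rw [indicator_of_mem (show z ∈ strip Q ℓ n from ⟨hz, h⟩)]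
      exact le_add_of_nonneg_right (hnn (-ℓ))
    · rw [indicator_of_mem (show z ∈ strip Q (-ℓ) n from ⟨hz, h⟩)]
      exact le_add_of_nonneg_left (hnn ℓ)

variable [μ.IsAddHaarMeasure]

lemma IsUnitCylinder.exists_eLpNorm_strip_le_mul_pow (hQ : IsUnitCylinder Q ℓ e)
    (hQm : MeasurableSet Q) (hp₁ : 1 ≤ p) (hp : p ≠ ∞) {α C : ℝ} (hα : 1 / p.toReal < α)
    (hC : 0 ≤ C) {f : E → ℝ} (hf : MemLp f p (μ.restrict Q)) (hfB : HasBesovBound μ p α C Q f) :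
    ∃ D, ∀ n, eLpNorm f p (μ.restrict (strip Q ℓ n)) ≤
      ENNReal.ofReal (D * ((1 / 2) ^ (1 / p.toReal)) ^ n) := by
  have hfh : ∀ h : ℝ, eLpNorm (fun z => f (z + h • e) - f z) p
      (μ.restrict (Q ∩ (· + h • e) ⁻¹' Q)) ≤ ENNReal.ofReal (C * |h| ^ α) := fun h => by
    simpa only [norm_smul, hQ.norm_eq_one, mul_one, Real.norm_eq_abs] using hfB (h • e)
  refine ⟨(eLpNorm f p (μ.restrict (strip Q ℓ 0))).toReal
    + C * ((1 / 2) ^ α) ^ (0 + 1) / ((1 / 2) ^ (1 / p.toReal) - (1 / 2) ^ α), fun n => ?_⟩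
  have hfn := hf.mono_measure (Measure.restrict_mono (strip_subset (ℓ := ℓ) n) le_rfl)
  rw [← ENNReal.ofReal_toReal hfn.2.ne]
  have h := hQ.eLpNorm_strip_le hQm hp₁ hp hα hf hC hfh 0 n
  rw [zero_add, mul_comm] at h
  exact ENNReal.ofReal_le_ofReal h

/-- A function that is constant along `e` has the same norm at both ends of the cylinder. -/
lemma IsUnitCylinder.eLpNorm_strip_sub_le (hQ : IsUnitCylinder Q ℓ e)
    (hQm : MeasurableSet Q) (hp₁ : 1 ≤ p) (hw : AEStronglyMeasurable w (μ.restrict Q))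
    (hψ : AEStronglyMeasurable ψ (μ.restrict Q)) (hψe : ∀ z, ∀ h : ℝ, ψ (z + h • e) = ψ z) :
    eLpNorm (fun z => w z - ψ z) p (μ.restrict (strip Q ℓ n)) ≤
      eLpNorm w p (μ.restrict (strip Q ℓ n)) + (eLpNorm w p (μ.restrict (strip Q (-ℓ) n)) +
        eLpNorm (fun z => w z - ψ z) p (μ.restrict (strip Q (-ℓ) n))) := by
  have hψn (ℓ' : E →L[ℝ] ℝ) := hψ.mono_set (strip_subset (ℓ := ℓ') n)
  have hwn (ℓ' : E →L[ℝ] ℝ) := hw.mono_set (strip_subset (ℓ := ℓ') n)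
  have hopp : eLpNorm ψ p (μ.restrict (strip Q ℓ n)) ≤
      eLpNorm ψ p (μ.restrict (strip Q (-ℓ) n)) := by
    simpa only [hψe] using (eLpNorm_comp_add_right_le (p := p) (measurableSet_strip hQm n)
      (hψn (-ℓ)) fun z hz => hQ.add_smul_mem_strip_neg hz).2
  have hsub : eLpNorm ψ p (μ.restrict (strip Q (-ℓ) n)) ≤
      eLpNorm w p (μ.restrict (strip Q (-ℓ) n)) +
        eLpNorm (fun z => w z - ψ z) p (μ.restrict (strip Q (-ℓ) n)) := by
    have := eLpNorm_sub_le (p := p) (hwn (-ℓ)) ((hwn (-ℓ)).sub (hψn (-ℓ))) hp₁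
    rwa [sub_sub_cancel] at this
  exact (eLpNorm_sub_le (hwn ℓ) (hψn ℓ) hp₁).trans (add_le_add le_rfl (hopp.trans hsub))

/-- Of the two factors, the first is small on `strip Q ℓ n`, and the second, which is small only on
the opposite strip, is of the same order as `w`. -/
lemma IsUnitCylinder.setIntegral_strip_le (hQ : IsUnitCylinder Q ℓ e) (hQm : MeasurableSet Q)
    (ha : 0 ≤ a) (hb : 0 ≤ b) (hw : AEStronglyMeasurable w (μ.restrict Q))
    (hψ : AEStronglyMeasurable ψ (μ.restrict Q)) (hψ' : AEStronglyMeasurable ψ' (μ.restrict Q))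
    (hg : AEStronglyMeasurable g (μ.restrict Q)) (hψe : ∀ z, ∀ h : ℝ, ψ' (z + h • e) = ψ' z)
    (hwb : eLpNorm w 3 (μ.restrict (strip Q ℓ n)) ≤ ENNReal.ofReal b)
    (hwb' : eLpNorm w 3 (μ.restrict (strip Q (-ℓ) n)) ≤ ENNReal.ofReal b)
    (hgb : eLpNorm g 3 (μ.restrict (strip Q ℓ n)) ≤ ENNReal.ofReal b)
    (hψa : eLpNorm (fun z => w z - ψ z) 3 (μ.restrict (strip Q ℓ n)) ≤ ENNReal.ofReal a)
    (hψa' : eLpNorm (fun z => w z - ψ' z) 3 (μ.restrict (strip Q (-ℓ) n)) ≤ ENNReal.ofReal a) :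
    ∫ z in strip Q ℓ n, ‖w z - ψ z‖ * ‖w z - ψ' z‖ * ‖g z‖ ∂μ ≤ a * (b + (b + a)) * b := by
  have hsub := strip_subset (Q := Q) (ℓ := ℓ) n
  refine integral_norm_mul_mul_le_of_eLpNorm_three_le ((hw.sub hψ).mono_set hsub)
    ((hw.sub hψ').mono_set hsub) (hg.mono_set hsub) ha (by positivity) hb hψa ?_ hgb
  refine (hQ.eLpNorm_strip_sub_le hQm (by norm_num) hw hψ' hψe).trans ?_
  rw [ENNReal.ofReal_add hb (by positivity), ENNReal.ofReal_add hb ha]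
  gcongr

lemma IsUnitCylinder.norm_setIntegral_deriv_faceCutoff_le (hQ : IsUnitCylinder Q ℓ e)
    (hQm : MeasurableSet Q) (ha : 0 ≤ a) (hb : 0 ≤ b) (hw : MemLp w 3 (μ.restrict Q))
    (hψ : MemLp ψ 3 (μ.restrict Q)) (hψ' : MemLp ψ' 3 (μ.restrict Q))
    (hg : MemLp g 3 (μ.restrict Q)) (hψe : ∀ z, ∀ h : ℝ, ψ (z + h • e) = ψ z)
    (hψe' : ∀ z, ∀ h : ℝ, ψ' (z + h • e) = ψ' z)
    (hwb : ∀ ℓ' ∈ ({ℓ, -ℓ} : Set (E →L[ℝ] ℝ)),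
      eLpNorm w 3 (μ.restrict (strip Q ℓ' n)) ≤ ENNReal.ofReal b)
    (hgb : ∀ ℓ' ∈ ({ℓ, -ℓ} : Set (E →L[ℝ] ℝ)),
      eLpNorm g 3 (μ.restrict (strip Q ℓ' n)) ≤ ENNReal.ofReal b)
    (hψa : eLpNorm (fun z => w z - ψ z) 3 (μ.restrict (strip Q ℓ n)) ≤ ENNReal.ofReal a)
    (hψa' : eLpNorm (fun z => w z - ψ' z) 3 (μ.restrict (strip Q (-ℓ) n)) ≤ ENNReal.ofReal a)
    {L M : ℝ} (hM : 0 ≤ M) (hL : ∀ n s, |deriv (faceCutoff n) s| ≤ L * 2 ^ n) {φ : E → ℝ}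
    (hφ : ∀ z ∈ Q, ‖φ z‖ ≤ M) :
    ‖∫ z in Q, φ z * deriv (faceCutoff n) (ℓ z) * ((w z - ψ z) * (w z - ψ' z) * g z) ∂μ‖ ≤
      M * (L * 2 ^ n) * (2 * (a * (b + (b + a)) * b)) := by
  have hLn : 0 ≤ L * 2 ^ n := (abs_nonneg _).trans (hL n 0)
  refine (norm_setIntegral_deriv_faceCutoff_mul_le hQm hL hφ
    (integrable_mul_smul_of_memLp_three (hw.sub hψ) (hw.sub hψ') hg)).trans
    (mul_le_mul_of_nonneg_left ?_ (mul_nonneg hM hLn))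
  rw [two_mul]
  simp only [norm_smul, norm_mul, Pi.sub_apply]
  refine add_le_add ?_ ?_
  · exact hQ.setIntegral_strip_le hQm ha hb hw.1 hψ.1 hψ'.1 hg.1 hψe' (hwb ℓ (by simp))
      (hwb (-ℓ) (by simp)) (hgb ℓ (by simp)) hψa hψa'
  · simp only [mul_comm ‖w _ - ψ _‖]
    refine hQ.neg.setIntegral_strip_le hQm ha hb hw.1 hψ'.1 hψ.1 hg.1 (fun z h => ?_)
      (hwb (-ℓ) (by simp)) ?_ (hgb (-ℓ) (by simp)) hψa' ?_
    · rw [smul_neg, ← neg_smul, hψe]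
    · rw [neg_neg]
      exact hwb ℓ (by simp)
    · rwa [neg_neg]

end FaceEstimate

section Torus

/-- Space-time `ℝ × ℝᴺ`. -/
abbrev SpaceTime (N : ℕ) := ℝ × Spc N

/-- The interior of the periodic box. -/
def openBox (N : ℕ) : Set (Spc N) := {x | ∀ i, x i ∈ Ioo (-1 : ℝ) 1}

/-- The space-time cylinder over the open box, up to time `τ`. -/
def boxCylinder (N : ℕ) (τ : ℝ) : Set (SpaceTime N) := Ioo 0 τ ×ˢ openBox N

/-- The `i`-th space coordinate on space-time. -/
def coord {N : ℕ} (i : Fin N) : SpaceTime N →L[ℝ] ℝ :=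
  (EuclideanSpace.proj i).comp (ContinuousLinearMap.snd ℝ ℝ (Spc N))

/-- The unit vector of space-time in the `i`-th space direction. -/
def unitVec {N : ℕ} (i : Fin N) : SpaceTime N := (0, EuclideanSpace.single i 1)

variable {N : ℕ} {τ : ℝ}

@[simp] lemma coord_apply (i : Fin N) (z : SpaceTime N) : coord i z = z.2 i := rfl

lemma coord_unitVec (i j : Fin N) : coord i (unitVec j) = if i = j then 1 else 0 := by
  simp [unitVec]

lemma isOpen_openBox : IsOpen (openBox N) := by
  simp only [openBox, ofPred_forall]
  exact isOpen_iInter_of_finite fun i => isOpen_Ioo.preimage (by fun_prop)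

lemma isOpen_boxCylinder : IsOpen (boxCylinder N τ) := isOpen_Ioo.prod isOpen_openBox

lemma torusBox_eq_preimage : TorusBox N = WithLp.ofLp ⁻¹' Icc (fun _ => (-1 : ℝ)) fun _ => 1 := by
  ext x
  exact forall_and

lemma openBox_eq_preimage :
    openBox N = WithLp.ofLp ⁻¹' pi univ fun _ => Ioo (-1 : ℝ) 1 := by
  ext x
  exact mem_univ_pi.symm

lemma isCompact_torusBox : IsCompact (TorusBox N) := by
  rw [torusBox_eq_preimage]
  exact (PiLp.homeomorph 2 fun _ : Fin N => ℝ).isCompact_preimage.2 isCompact_Icc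

lemma openBox_ae_eq_torusBox : openBox N =ᵐ[volume] TorusBox N := by
  rw [openBox_eq_preimage, torusBox_eq_preimage]
  exact (PiLp.volume_preserving_ofLp (Fin N)).quasiMeasurePreserving.preimage_ae_eq
    Measure.univ_pi_Ioo_ae_eq_Icc

lemma openBox_subset_torusBox : openBox N ⊆ TorusBox N := fun _ hx i => Ioo_subset_Icc_self (hx i)

lemma isBounded_boxCylinder : Bornology.IsBounded (boxCylinder N τ) :=
  (Metric.isBounded_Ioo 0 τ).prod (isCompact_torusBox.isBounded.subset openBox_subset_torusBox)

lemma isUnitCylinder_boxCylinder (i : Fin N) :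
    IsUnitCylinder (boxCylinder N τ) (coord i) (unitVec i) where
  apply_eq_one := by rw [coord_unitVec, if_pos rfl]
  norm_eq_one := by simp [unitVec]
  add_smul_mem_iff z hz h := by
    have hj (j : Fin N) : (z + h • unitVec i).2 j = z.2 j + if j = i then h else 0 := by
      simp [unitVec]
    refine ⟨fun hzh => ?_, fun hi => ⟨by simpa [unitVec] using hz.1, fun j => ?_⟩⟩
    · have hi := hzh.2 i
      rwa [hj, if_pos rfl] at hi
    · rw [hj]
      rcases eq_or_ne j i with rfl | hji
      · rwa [if_pos rfl]
      · rw [if_neg hji, add_zero]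
        exact hz.2 j

end Torus

section CutoffLimit

variable {E : Type*} [NormedAddCommGroup E] [NormedSpace ℝ E] {Q : Set E}
  {ℓ : E →L[ℝ] ℝ} {φ : E → ℝ} {W : E → E}

lemma fderiv_mul_faceCutoff_apply (hφ : ContDiff ℝ 1 φ) (n : ℕ) (z v : E) :
    fderiv ℝ (fun z => φ z * faceCutoff n (ℓ z)) z v =
      faceCutoff n (ℓ z) * fderiv ℝ φ z v + φ z * deriv (faceCutoff n) (ℓ z) * ℓ v := by
  have hb : HasDerivAt (faceCutoff n) (deriv (faceCutoff n) (ℓ z)) (ℓ z) :=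
    ((contDiff_faceCutoff.differentiable one_ne_zero) _).hasDerivAt
  have h := ((hφ.differentiable one_ne_zero z).hasFDerivAt.mul
    (hb.comp_hasFDerivAt z ℓ.hasFDerivAt)).fderiv
  have h' : fderiv ℝ (fun z => φ z * faceCutoff n (ℓ z)) z = _ := h
  simp only [h', Function.comp_apply, add_apply, smul_apply, smul_eq_mul]
  ring

variable [FiniteDimensional ℝ E]

lemma exists_forall_mem_norm_le {F : Type*} [NormedAddCommGroup F] (hQ : Bornology.IsBounded Q)
    {f : E → F} (hf : Continuous f) : ∃ M, ∀ z ∈ Q, ‖f z‖ ≤ M :=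
  have := FiniteDimensional.proper_real E
  let ⟨M, hM⟩ := hQ.isCompact_closure.exists_bound_of_continuousOn hf.continuousOn
  ⟨M, fun z hz => hM z (subset_closure hz)⟩

variable [MeasurableSpace E] [BorelSpace E] {μ : Measure E}

lemma integrableOn_fderiv_apply (hQm : MeasurableSet Q) (hQb : Bornology.IsBounded Q)
    (hφ : ContDiff ℝ 1 φ) (hW : IntegrableOn W Q μ) :
    IntegrableOn (fun z => fderiv ℝ φ z (W z)) Q μ :=
  have hdφ := hφ.continuous_fderiv one_ne_zero
  let ⟨_, hM⟩ := exists_forall_mem_norm_le hQb hdφ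
  integrable_clm_apply hdφ.aestronglyMeasurable (ae_restrict_of_forall_mem hQm hM) hW

lemma tendsto_setIntegral_fderiv_mul_faceCutoff_sub (hQm : MeasurableSet Q)
    (hQb : Bornology.IsBounded Q) (hℓ : ∀ z ∈ Q, |ℓ z| < 1) (hφ : ContDiff ℝ 1 φ)
    (hW : IntegrableOn W Q μ) :
    Tendsto (fun n => (∫ z in Q, fderiv ℝ (fun z => φ z * faceCutoff n (ℓ z)) z (W z) ∂μ) -
      ∫ z in Q, φ z * deriv (faceCutoff n) (ℓ z) * ℓ (W z) ∂μ) atTop (nhds 0) := by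
  have hb (n : ℕ) : ContDiff ℝ 1 fun z => faceCutoff n (ℓ z) :=
    contDiff_faceCutoff.comp ℓ.contDiff
  have hb₁ (n : ℕ) (z : E) : ‖faceCutoff n (ℓ z)‖ ≤ 1 := by
    rw [Real.norm_of_nonneg faceCutoff_nonneg]
    exact faceCutoff_le_one
  have hdφ := integrableOn_fderiv_apply hQm hQb hφ hW
  have hdφb (n : ℕ) : IntegrableOn (fun z => faceCutoff n (ℓ z) * fderiv ℝ φ z (W z)) Q μ :=
    hdφ.bdd_mul (hb n).continuous.aestronglyMeasurable (ae_of_all _ (hb₁ n))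
  have hlim : Tendsto (fun n => ∫ z in Q, faceCutoff n (ℓ z) * fderiv ℝ φ z (W z) ∂μ) atTop
      (nhds (∫ z in Q, 0 * fderiv ℝ φ z (W z) ∂μ)) := by
    refine tendsto_integral_of_dominated_convergence _ (fun n => (hdφb n).1) hdφ.norm
      (fun n => ae_of_all _ fun z => ?_)
      (ae_restrict_of_forall_mem hQm fun z hz => (tendsto_faceCutoff (hℓ z hz)).mul_const _)
    rw [norm_mul]
    exact mul_le_of_le_one_left (norm_nonneg _) (hb₁ n z)
  simp only [zero_mul, integral_zero] at hlim
  refine hlim.congr fun n => ?_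
  rw [eq_sub_iff_add_eq', ← eq_sub_iff_add_eq,
    ← integral_sub (integrableOn_fderiv_apply hQm hQb (hφ.mul (hb n)) hW) (hdφb n)]
  simp only [fderiv_mul_faceCutoff_apply hφ, add_sub_cancel_left]

end CutoffLimit

section Approximation

variable {E : Type*} [NormedAddCommGroup E] [NormedSpace ℝ E] [FiniteDimensional ℝ E] {Ω : Set E}

lemma exists_contDiff_eq_one_tsupport_subset {K : Set E} (hK : IsClosed K) (hΩ : IsOpen Ω)
    (hKΩ : K ⊆ Ω) : ∃ χ : E → ℝ, ContDiff ℝ 1 χ ∧ tsupport χ ⊆ Ω ∧ (∀ z ∈ K, χ z = 1) ∧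
      ∀ z, χ z ∈ Icc (0 : ℝ) 1 := by
  obtain ⟨χ, hχ₀, hχ₁, hχ⟩ := exists_contMDiffMap_zero_one_nhds_of_isClosed (n := 1)
    (modelWithCornersSelf ℝ E) hΩ.isClosed_compl hK (disjoint_compl_left_iff_subset.2 hKΩ)
  refine ⟨χ, χ.contMDiff.contDiff, fun z hz => ?_, fun z hz => ?_, hχ⟩
  · by_contra hzΩ
    exact notMem_tsupport_iff_eventuallyEq.2 (eventually_nhdsSet_iff_forall.1 hχ₀ z hzΩ) hz
  · exact (eventually_nhdsSet_iff_forall.1 hχ₁ z hz).self_of_nhds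

variable [MeasurableSpace E] [BorelSpace E] {μ : Measure E} {p : ℝ≥0∞} {f : E → ℝ} {ε : ℝ}

lemma exists_isCompact_eLpNorm_indicator_sdiff_le [IsFiniteMeasureOnCompacts μ]
    [IsFiniteMeasure (μ.restrict Ω)]
    (hΩ : MeasurableSet Ω) (hp₁ : 1 ≤ p) (hp : p ≠ ∞) (hf : MemLp f p (μ.restrict Ω))
    (hε : 0 < ε) : ∃ K ⊆ Ω, IsCompact K ∧
      eLpNorm ((Ω \ K).indicator f) p (μ.restrict Ω) ≤ ENNReal.ofReal ε := by
  obtain ⟨δ, hδ, h⟩ := hf.eLpNorm_indicator_le hp₁ hp hε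
  have hfin : μ Ω ≠ ∞ := by simpa using measure_ne_top (μ.restrict Ω) univ
  obtain ⟨K, hKΩ, hK, hdiff⟩ := hΩ.exists_isCompact_sdiff_lt (μ := μ) hfin
    (ENNReal.ofReal_pos.2 hδ).ne'
  exact ⟨K, hKΩ, hK, h _ (hΩ.diff hK.measurableSet)
    ((Measure.restrict_apply_le _ _).trans hdiff.le)⟩

lemma exists_contDiff_eLpNorm_sub_le [IsFiniteMeasureOnCompacts μ] [IsFiniteMeasure (μ.restrict Ω)]
    (hΩ : IsOpen Ω) (hp₁ : 1 ≤ p) (hp : p ≠ ∞) (hf : MemLp f p (μ.restrict Ω)) (hε : 0 < ε) :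
    ∃ g : E → ℝ, ContDiff ℝ 1 g ∧ HasCompactSupport g ∧ tsupport g ⊆ Ω ∧
      eLpNorm (fun z => f z - g z) p (μ.restrict Ω) ≤ ENNReal.ofReal ε := by
  obtain ⟨K, hKΩ, hK, hfK⟩ :=
    exists_isCompact_eLpNorm_indicator_sdiff_le hΩ.measurableSet hp₁ hp hf (half_pos hε)
  have hfKm := hf.indicator hK.measurableSet
  obtain ⟨g, hgc, hg, hgf⟩ := hfKm.exist_eLpNorm_sub_le hp hp₁ (half_pos hε)
  obtain ⟨χ, hχ, hχΩ, hχK, hχ₁⟩ := exists_contDiff_eq_one_tsupport_subset hK.isClosed hΩ hKΩ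
  refine ⟨fun z => χ z * g z, hχ.mul (hg.of_le (by simp)), hgc.mul_left,
    (tsupport_mul_subset_left).trans hχΩ, ?_⟩
  have hpt : ∀ z ∈ Ω, ‖f z - χ z * g z‖ ≤
      ‖(Ω \ K).indicator f z‖ + ‖(K.indicator f - g) z‖ := fun z hz => by
    rw [Pi.sub_apply]
    by_cases hzK : z ∈ K
    · rw [hχK z hzK, one_mul, indicator_of_mem hzK]
      exact le_add_of_nonneg_left (norm_nonneg _)
    · rw [indicator_of_notMem hzK, indicator_of_mem (show z ∈ Ω \ K from ⟨hz, hzK⟩), zero_sub,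
        norm_neg]
      refine (norm_sub_le _ _).trans (add_le_add le_rfl ?_)
      rw [norm_mul, Real.norm_of_nonneg (hχ₁ z).1]
      exact mul_le_of_le_one_left (norm_nonneg _) (hχ₁ z).2
  have hfΩK := hf.indicator (hΩ.measurableSet.diff hK.measurableSet)
  have hsub := hfKm.1.sub hg.continuous.aestronglyMeasurable
  calc eLpNorm (fun z => f z - χ z * g z) p (μ.restrict Ω)
      ≤ eLpNorm (fun z => ‖(Ω \ K).indicator f z‖ + ‖(K.indicator f - g) z‖) p (μ.restrict Ω) :=
        eLpNorm_mono_ae_real (ae_restrict_of_forall_mem hΩ.measurableSet hpt)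
    _ ≤ ENNReal.ofReal (ε / 2) + ENNReal.ofReal (ε / 2) := by
        refine (eLpNorm_add_le hfΩK.1.norm hsub.norm hp₁).trans ?_
        rw [eLpNorm_norm, eLpNorm_norm]
        exact add_le_add hfK hgf
    _ = ENNReal.ofReal ε := by
        rw [← ENNReal.ofReal_add (by positivity) (by positivity), add_halves]

end Approximation

section Periodic

variable {N : ℕ} {τ : ℝ} {φ g : SpaceTime N → ℝ}

/-- `C¹` functions on space-time that are periodic in space with the period of the torus. -/
structure PeriodicC1 (g : SpaceTime N → ℝ) : Prop where
  contDiff : ContDiff ℝ 1 g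
  periodic : ∀ z i, g (z + (2 : ℝ) • unitVec i) = g z

lemma PeriodicC1.add (hφ : PeriodicC1 φ) (hg : PeriodicC1 g) :
    PeriodicC1 fun z => φ z + g z :=
  ⟨hφ.contDiff.add hg.contDiff, fun z i => by simp only [hφ.periodic, hg.periodic]⟩

lemma PeriodicC1.mul (hφ : PeriodicC1 φ) (hg : PeriodicC1 g) :
    PeriodicC1 fun z => φ z * g z :=
  ⟨hφ.contDiff.mul hg.contDiff, fun z i => by simp only [hφ.periodic, hg.periodic]⟩

lemma periodicC1_faceCutoff (n : ℕ) (i : Fin N) :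
    PeriodicC1 fun z : SpaceTime N => faceCutoff n (coord i z) where
  contDiff := contDiff_faceCutoff.comp (coord i).contDiff
  periodic z j := by
    rw [map_add, map_smul, coord_unitVec]
    split_ifs
    · rw [smul_eq_mul, mul_one, faceCutoff_add_two]
    · rw [smul_zero, add_zero]

lemma PeriodicC1.freeze (hg : PeriodicC1 g) (i : Fin N) (σ : ℝ) :
    PeriodicC1 (freeze (coord i) (unitVec i) σ g) where
  contDiff := hg.contDiff.comp
    (contDiff_id.add ((contDiff_const.sub (coord i).contDiff).smul contDiff_const))
  periodic z j := by
    rcases eq_or_ne i j with rfl | hij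
    · exact freeze_add_smul (by rw [coord_unitVec, if_pos rfl]) σ g z 2
    · rw [_root_.freeze, map_add, map_smul, coord_unitVec, if_neg hij, smul_zero, add_zero,
        add_right_comm, hg.periodic, _root_.freeze]

/-- Test functions on `(0, τ) × 𝕋ᴺ`: `C¹`, periodic in space, and supported away from the initial
and final times. -/
structure IsPeriodicTest (τ : ℝ) (φ : SpaceTime N → ℝ) : Prop extends PeriodicC1 φ where
  tsupport_subset : tsupport φ ⊆ Ioo 0 τ ×ˢ univ

lemma IsPeriodicTest.mul (hφ : IsPeriodicTest τ φ) (hg : PeriodicC1 g) :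
    IsPeriodicTest τ fun z => φ z * g z :=
  ⟨hφ.toPeriodicC1.mul hg, tsupport_mul_subset_left.trans hφ.tsupport_subset⟩

/-- The translation vectors of the period lattice `(2ℤ)ᴺ`, as purely spatial vectors. -/
def latticeVec (k : Fin N → ℤ) : SpaceTime N := (0, WithLp.toLp 2 fun i => 2 * (k i : ℝ))

/-- The sum of all translates of `φ` by the period lattice. -/
def periodization (φ : SpaceTime N → ℝ) (z : SpaceTime N) : ℝ :=
  ∑ᶠ k : Fin N → ℤ, φ (z + latticeVec k)

lemma add_latticeVec_apply (z : SpaceTime N) (k : Fin N → ℤ) (i : Fin N) :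
    (z + latticeVec k).2 i = z.2 i + 2 * k i := rfl

lemma locallyFinite_translates (hφ : ∀ z, φ z ≠ 0 → z.2 ∈ openBox N) :
    LocallyFinite fun k : Fin N → ℤ => Function.support fun z => φ (z + latticeVec k) := by
  intro z₀
  refine ⟨{z | ∀ i, |z.2 i - z₀.2 i| < 1}, ?_, ?_⟩
  · simp only [ofPred_forall]
    refine iInter_mem.2 fun i => IsOpen.mem_nhds ?_ (by simp)
    exact isOpen_lt (by fun_prop) continuous_const
  refine (Set.finite_Icc (fun i => ⌊-z₀.2 i / 2⌋ - 1) fun i => ⌈-z₀.2 i / 2⌉ + 1).subset ?_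
  rintro k ⟨z, hzk, hz⟩
  have hbox := hφ _ hzk
  have hbd (i : Fin N) : -z₀.2 i / 2 - 1 ≤ k i ∧ (k i : ℝ) ≤ -z₀.2 i / 2 + 1 := by
    have h₁ := hbox i
    have h₂ := abs_lt.1 (hz i)
    rw [add_latticeVec_apply] at h₁
    constructor <;> linarith [h₁.1, h₁.2]
  refine ⟨fun i => Int.cast_le (R := ℝ).1 ?_, fun i => Int.cast_le (R := ℝ).1 ?_⟩
  · rw [Int.cast_sub, Int.cast_one]
    linarith [Int.floor_le (-z₀.2 i / 2), (hbd i).1]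
  · rw [Int.cast_add, Int.cast_one]
    linarith [Int.le_ceil (-z₀.2 i / 2), (hbd i).2]

lemma contDiff_periodization (hφ : ContDiff ℝ 1 φ) (hφb : ∀ z, φ z ≠ 0 → z.2 ∈ openBox N) :
    ContDiff ℝ 1 (periodization φ) :=
  contMDiff_iff_contDiff.1 <| contMDiff_finsum
    (fun _ => (hφ.comp (contDiff_id.add contDiff_const)).contMDiff) (locallyFinite_translates hφb)

lemma periodization_periodic (z : SpaceTime N) (i : Fin N) :
    periodization φ (z + (2 : ℝ) • unitVec i) = periodization φ z := by
  rw [periodization, periodization, ← finsum_comp_equiv (Equiv.addRight (Pi.single i 1))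
    (f := fun k => φ (z + latticeVec k))]
  refine finsum_congr fun k => congrArg φ ?_
  ext j
  · simp [latticeVec, unitVec]
  · simp only [unitVec, latticeVec, Prod.snd_add, Prod.smul_snd, PiLp.add_apply, PiLp.smul_apply,
      PiLp.single_apply, Equiv.coe_addRight, Pi.add_apply, Pi.single_apply, smul_eq_mul,
      Int.cast_add]
    split_ifs <;> push_cast <;> ring

lemma periodization_eqOn (hφ : ∀ z, φ z ≠ 0 → z.2 ∈ openBox N) :
    EqOn (periodization φ) φ {z | z.2 ∈ openBox N} := by
  intro z hz
  rw [periodization, finsum_eq_single _ 0 fun k hk => ?_]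
  · have hzero : latticeVec (0 : Fin N → ℤ) = 0 := by
      ext j <;> simp [latticeVec]
    rw [hzero, add_zero]
  · by_contra hne
    refine hk (funext fun i => ?_)
    have h₁ := hφ _ hne i
    have h₂ := hz i
    rw [add_latticeVec_apply] at h₁
    have : |(k i : ℝ)| < 1 := by rw [abs_lt]; constructor <;> linarith [h₁.1, h₁.2, h₂.1, h₂.2]
    exact Int.abs_lt_one_iff.1 (by exact_mod_cast this)

lemma periodicC1_periodization (hφ : ContDiff ℝ 1 φ) (hφb : ∀ z, φ z ≠ 0 → z.2 ∈ openBox N) :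
    PeriodicC1 (periodization φ) :=
  ⟨contDiff_periodization hφ hφb, periodization_periodic⟩

lemma isPeriodicTest_periodization (hφ : ContDiff ℝ 1 φ) (hφc : HasCompactSupport φ)
    (hφQ : tsupport φ ⊆ boxCylinder N τ) : IsPeriodicTest τ (periodization φ) where
  toPeriodicC1 := periodicC1_periodization hφ fun z hz => (hφQ (subset_tsupport φ hz)).2
  tsupport_subset := by
    have hK : IsCompact (Prod.fst '' tsupport φ) := hφc.isCompact.image continuous_fst
    have hsupp : Function.support (periodization φ) ⊆ (Prod.fst '' tsupport φ) ×ˢ univ := by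
      intro z hz
      obtain ⟨k, hk⟩ : ∃ k, φ (z + latticeVec k) ≠ 0 := by
        by_contra! hall
        exact hz (finsum_eq_zero_of_forall_eq_zero hall)
      exact ⟨⟨z + latticeVec k, subset_tsupport φ hk, add_zero z.1⟩, mem_univ _⟩
    refine (closure_minimal hsupp (hK.isClosed.prod isClosed_univ)).trans ?_
    exact prod_mono (image_subset_iff.2 fun z hz => (hφQ hz).1) subset_rfl

end Periodic

section PeriodicDivFree

lemma IsWeaklyDivFreeOn.setIntegral_fderiv_eq_zero {E : Type*} [NormedAddCommGroup E]
    [NormedSpace ℝ E] [FiniteDimensional ℝ E] [MeasurableSpace E] [BorelSpace E] {μ : Measure E}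
    {Q : Set E} {W : E → E} {φ : E → ℝ} (hW : IsWeaklyDivFreeOn μ Q W) (hQ : IsOpen Q)
    (hQb : Bornology.IsBounded Q) (hφ : ContDiff ℝ 1 φ) (hφQ : tsupport φ ∩ closure Q ⊆ Q) :
    ∫ z in Q, fderiv ℝ φ z (W z) ∂μ = 0 := by
  have hin : ∀ z ∈ Q, Q.indicator φ =ᶠ[nhds z] φ := fun z hz =>
    (hQ.eventually_mem hz).mono fun y hy => indicator_of_mem hy φ
  have hsupp : tsupport (Q.indicator φ) ⊆ tsupport φ ∩ closure Q := by
    rw [tsupport, support_indicator]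
    exact subset_inter (closure_mono inter_subset_right) (closure_mono inter_subset_left)
  have hsmooth : ContDiff ℝ 1 (Q.indicator φ) := contDiff_iff_contDiffAt.2 fun z => by
    by_cases hz : z ∈ Q
    · exact hφ.contDiffAt.congr_of_eventuallyEq (hin z hz)
    · exact contDiffAt_const.congr_of_eventuallyEq
        (notMem_tsupport_iff_eventuallyEq.1 fun h => hz (hφQ (hsupp h)))
  have := FiniteDimensional.proper_real E
  have hcomp : HasCompactSupport (Q.indicator φ) :=
    hQb.isCompact_closure.of_isClosed_subset (isClosed_tsupport _)
      (hsupp.trans inter_subset_right)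
  rw [← hW _ hsmooth hcomp (hsupp.trans hφQ)]
  exact setIntegral_congr_fun hQ.measurableSet fun z hz => by simp only [(hin z hz).fderiv_eq]

variable {N : ℕ} {τ : ℝ} {W : SpaceTime N → SpaceTime N} {φ w : SpaceTime N → ℝ}

/-- `W` is divergence-free on `(0, τ) × 𝕋ᴺ` in the sense of distributions. In contrast to
`IsWeaklyDivFreeOn` on `boxCylinder N τ`, the test functions do not vanish near the faces of the
box, so this includes that the normal components of `W` on opposite faces agree. -/
def IsPeriodicallyDivFree (τ : ℝ) (W : SpaceTime N → SpaceTime N) : Prop :=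
  ∀ φ, IsPeriodicTest τ φ → ∫ z in boxCylinder N τ, fderiv ℝ φ z (W z) = 0

lemma IsPeriodicallyDivFree.isWeaklyDivFreeOn (hW : IsPeriodicallyDivFree τ W) :
    IsWeaklyDivFreeOn volume (boxCylinder N τ) W := by
  intro φ hφ hφc hφQ
  rw [← hW _ (isPeriodicTest_periodization hφ hφc hφQ)]
  refine setIntegral_congr_fun isOpen_boxCylinder.measurableSet fun z hz => ?_
  have heq : periodization φ =ᶠ[nhds z] φ := by
    filter_upwards [isOpen_boxCylinder.mem_nhds hz] with y hy
    exact periodization_eqOn (fun x hx => (hφQ (subset_tsupport φ hx)).2) hy.2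
  simp only [heq.fderiv_eq]

lemma IsPeriodicTest.mul_faceCutoff (hφ : IsPeriodicTest τ φ) (n : ℕ) (i : Fin N) :
    IsPeriodicTest τ fun z => φ z * faceCutoff n (coord i z) :=
  hφ.mul (periodicC1_faceCutoff n i)

lemma IsPeriodicTest.mul_one_sub_faceCutoff (hφ : IsPeriodicTest τ φ) (n : ℕ) (i : Fin N) :
    IsPeriodicTest τ fun z => φ z * (1 - faceCutoff n (coord i z)) :=
  have hb := periodicC1_faceCutoff (N := N) n i
  hφ.mul ⟨contDiff_const.sub hb.contDiff, fun z j => by rw [hb.periodic]⟩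

lemma abs_coord_ne_one_of_mem_tsupport {n : ℕ} {i : Fin N} {z : SpaceTime N}
    (hz : z ∈ tsupport fun z => φ z * (1 - faceCutoff n (coord i z))) : |coord i z| ≠ 1 := by
  refine fun h => notMem_tsupport_iff_eventuallyEq.2 ?_ hz
  filter_upwards [(coord i).continuous.continuousAt.eventually (faceCutoff_eventuallyEq_one h)]
    with y hy
  rw [show faceCutoff n (coord i y) = 1 from hy, sub_self, mul_zero, Pi.zero_apply]

lemma setIntegral_fderiv_mul_one_sub_faceCutoff (hWi : IntegrableOn W (boxCylinder N τ))
    (hφ : ContDiff ℝ 1 φ) (n : ℕ) (i : Fin N) :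
    ∫ z in boxCylinder N τ, fderiv ℝ (fun z => φ z * (1 - faceCutoff n (coord i z))) z (W z) =
      (∫ z in boxCylinder N τ, fderiv ℝ φ z (W z)) -
        ∫ z in boxCylinder N τ, fderiv ℝ (fun z => φ z * faceCutoff n (coord i z)) z (W z) := by
  have hcut : ContDiff ℝ 1 fun z => φ z * faceCutoff n (coord i z) :=
    hφ.mul (periodicC1_faceCutoff n i).contDiff
  have hint {g : SpaceTime N → ℝ} (hg : ContDiff ℝ 1 g) :=
    integrableOn_fderiv_apply isOpen_boxCylinder.measurableSet isBounded_boxCylinder hg hWi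
  rw [← integral_sub (hint hφ) (hint hcut)]
  congr with z
  simp only [mul_one_sub]
  rw [fderiv_fun_sub (hφ.differentiable one_ne_zero z) (hcut.differentiable one_ne_zero z),
    sub_apply]

lemma abs_coord_lt_one (i : Fin N) : ∀ z ∈ boxCylinder N τ, |coord i z| < 1 :=
  fun _ hz => abs_lt.2 (hz.2 i)

lemma IsPeriodicallyDivFree.tendsto_setIntegral_deriv_faceCutoff
    (hW : IsPeriodicallyDivFree τ W) (hWi : IntegrableOn W (boxCylinder N τ))
    (hφ : IsPeriodicTest τ φ) (i : Fin N) :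
    Tendsto (fun n => ∫ z in boxCylinder N τ,
      φ z * deriv (faceCutoff n) (coord i z) * coord i (W z)) atTop (nhds 0) := by
  have h := tendsto_setIntegral_fderiv_mul_faceCutoff_sub isOpen_boxCylinder.measurableSet
    isBounded_boxCylinder (abs_coord_lt_one i) hφ.contDiff hWi
  simp only [hW _ (hφ.mul_faceCutoff _ i), zero_sub] at h
  simpa only [neg_neg, neg_zero] using h.neg

lemma tsupport_inter_closure_boxCylinder_subset (hφ : IsPeriodicTest τ φ)
    (hφ₁ : ∀ i, ∀ z ∈ tsupport φ, |coord i z| ≠ 1) :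
    tsupport φ ∩ closure (boxCylinder N τ) ⊆ boxCylinder N τ := by
  have hclosure : closure (boxCylinder N τ) ⊆ {z | ∀ i, |coord i z| ≤ 1} := by
    refine closure_minimal (fun z hz i => (abs_coord_lt_one i z hz).le) ?_
    simp only [ofPred_forall]
    exact isClosed_iInter fun i => isClosed_le (by fun_prop) continuous_const
  exact fun z hz => ⟨(hφ.tsupport_subset hz.1).1, fun i =>
    abs_lt.1 ((hclosure hz.2 i).lt_of_ne (hφ₁ i z hz.1))⟩

/-- The face cutoffs are removed from the test function one coordinate at a time; the error of
each removal is the flux through the corresponding pair of faces. -/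
lemma isPeriodicallyDivFree_of_tendsto (hWi : IntegrableOn W (boxCylinder N τ))
    (hW : IsWeaklyDivFreeOn volume (boxCylinder N τ) W)
    (hlim : ∀ φ, IsPeriodicTest τ φ → ∀ i, Tendsto (fun n => ∫ z in boxCylinder N τ,
      φ z * deriv (faceCutoff n) (coord i z) * coord i (W z)) atTop (nhds 0)) :
    IsPeriodicallyDivFree τ W := by
  suffices h : ∀ (J : Finset (Fin N)) (φ : SpaceTime N → ℝ), IsPeriodicTest τ φ →
      (∀ j ∉ J, ∀ z ∈ tsupport φ, |coord j z| ≠ 1) →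
      ∫ z in boxCylinder N τ, fderiv ℝ φ z (W z) = 0 from
    fun φ hφ => h Finset.univ φ hφ fun j hj => (hj (Finset.mem_univ j)).elim
  intro J
  induction J using Finset.induction_on with
  | empty =>
    intro φ hφ hφ₁
    exact hW.setIntegral_fderiv_eq_zero isOpen_boxCylinder isBounded_boxCylinder hφ.contDiff
      (tsupport_inter_closure_boxCylinder_subset hφ fun i => hφ₁ i (Finset.notMem_empty i))
  | insert i J _ ih =>
    intro φ hφ hφ₁
    have hcut (n : ℕ) : ∫ z in boxCylinder N τ,
        fderiv ℝ (fun z => φ z * faceCutoff n (coord i z)) z (W z) =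
          ∫ z in boxCylinder N τ, fderiv ℝ φ z (W z) := by
      have hrest := ih _ (hφ.mul_one_sub_faceCutoff n i) fun j hj z hz => by
        rcases eq_or_ne j i with rfl | hji
        · exact abs_coord_ne_one_of_mem_tsupport hz
        · exact hφ₁ j (by simp [hji, hj]) z (tsupport_mul_subset_left hz)
      rw [setIntegral_fderiv_mul_one_sub_faceCutoff hWi hφ.contDiff, sub_eq_zero] at hrest
      exact hrest.symm
    have h := (tendsto_setIntegral_fderiv_mul_faceCutoff_sub isOpen_boxCylinder.measurableSet
      isBounded_boxCylinder (abs_coord_lt_one i) hφ.contDiff hWi).add (hlim φ hφ i)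
    simp only [sub_add_cancel, hcut, add_zero] at h
    exact tendsto_nhds_unique tendsto_const_nhds h

end PeriodicDivFree

section FaceFlux

variable {N : ℕ} {τ α C : ℝ} {w g φ : SpaceTime N → ℝ} {p : ℝ≥0∞}

instance : (volume : Measure (SpaceTime N)).IsAddHaarMeasure := by
  rw [Measure.volume_eq_prod]
  infer_instance

instance : IsFiniteMeasure (volume.restrict (boxCylinder N τ)) :=
  ⟨by simpa using isBounded_boxCylinder.measure_lt_top⟩

lemma exists_periodicC1_eLpNorm_sub_le (hp₁ : 1 ≤ p) (hp : p ≠ ∞)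
    (hw : MemLp w p (volume.restrict (boxCylinder N τ))) {ε : ℝ} (hε : 0 < ε) :
    ∃ Ψ, PeriodicC1 Ψ ∧
      eLpNorm (fun z => w z - Ψ z) p (volume.restrict (boxCylinder N τ)) ≤ ENNReal.ofReal ε := by
  obtain ⟨f, hf, -, hfQ, hwf⟩ := exists_contDiff_eLpNorm_sub_le isOpen_boxCylinder hp₁ hp hw hε
  have hfb (z : SpaceTime N) (hz : f z ≠ 0) : z.2 ∈ openBox N := (hfQ (subset_tsupport f hz)).2
  refine ⟨periodization f, periodicC1_periodization hf hfb, le_of_eq_of_le ?_ hwf⟩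
  refine eLpNorm_congr_ae (ae_restrict_of_forall_mem isOpen_boxCylinder.measurableSet
    fun z hz => ?_)
  simp only [periodization_eqOn hfb hz.2]

lemma freeze_neg {E : Type*} [NormedAddCommGroup E] [NormedSpace ℝ E] (ℓ : E →L[ℝ] ℝ) (e : E)
    (σ : ℝ) (Ψ : E → ℝ) : freeze (-ℓ) (-e) σ Ψ = freeze ℓ e (-σ) Ψ := by
  ext z
  rw [freeze, freeze, neg_apply, smul_neg, ← neg_smul]
  congr 3
  ring

lemma exists_periodicC1_eLpNorm_strip_sub_le (hp₁ : 1 ≤ p) (hp : p ≠ ∞) (hα : 1 / p.toReal < α)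
    (hC : 0 ≤ C) (hw : MemLp w p (volume.restrict (boxCylinder N τ)))
    (hwB : HasBesovBound volume p α C (boxCylinder N τ) w) (i : Fin N) {η : ℝ} (hη : 0 < η) :
    ∃ ψ ψ', PeriodicC1 ψ ∧ PeriodicC1 ψ' ∧ (∀ z (h : ℝ), ψ (z + h • unitVec i) = ψ z) ∧
      (∀ z (h : ℝ), ψ' (z + h • unitVec i) = ψ' z) ∧ ∀ᶠ n in atTop,
        eLpNorm (fun z => w z - ψ z) p (volume.restrict (strip (boxCylinder N τ) (coord i) n)) ≤
          ENNReal.ofReal (η * ((1 / 2) ^ (1 / p.toReal)) ^ n) ∧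
        eLpNorm (fun z => w z - ψ' z) p
          (volume.restrict (strip (boxCylinder N τ) (-coord i) n)) ≤
          ENNReal.ofReal (η * ((1 / 2) ^ (1 / p.toReal)) ^ n) := by
  have hQ := isUnitCylinder_boxCylinder (τ := τ) i
  have htrace {ℓ : SpaceTime N →L[ℝ] ℝ} {e : SpaceTime N}
      (h : IsUnitCylinder (boxCylinder N τ) ℓ e) :=
    h.exists_eLpNorm_strip_sub_freeze_le_mul_pow isOpen_boxCylinder.measurableSet
      isBounded_boxCylinder hp₁ hp hα hC hw hwB hη
  obtain ⟨k, ε, hε, hk⟩ := htrace hQ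
  obtain ⟨k', ε', hε', hk'⟩ := htrace hQ.neg
  obtain ⟨Ψ, hΨ, hwΨ⟩ := exists_periodicC1_eLpNorm_sub_le hp₁ hp hw hε
  obtain ⟨Ψ', hΨ', hwΨ'⟩ := exists_periodicC1_eLpNorm_sub_le hp₁ hp hw hε'
  obtain ⟨σ, hσ⟩ := hk Ψ hΨ.contDiff.continuous hwΨ
  obtain ⟨σ', hσ'⟩ := hk' Ψ' hΨ'.contDiff.continuous hwΨ'
  refine ⟨freeze (coord i) (unitVec i) σ Ψ, freeze (coord i) (unitVec i) (-σ') Ψ', hΨ.freeze i σ,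
    hΨ'.freeze i (-σ'), freeze_add_smul hQ.apply_eq_one σ Ψ,
    freeze_add_smul hQ.apply_eq_one (-σ') Ψ', ?_⟩
  filter_upwards [eventually_ge_atTop k, eventually_ge_atTop k'] with n hn hn'
  refine ⟨hσ n hn, ?_⟩
  rw [← freeze_neg]
  exact hσ' n hn'

lemma exists_eLpNorm_strip_le_mul_pow (hp₁ : 1 ≤ p) (hp : p ≠ ∞) (hα : 1 / p.toReal < α)
    (hC : 0 ≤ C) (hw : MemLp w p (volume.restrict (boxCylinder N τ)))
    (hwB : HasBesovBound volume p α C (boxCylinder N τ) w) (i : Fin N) :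
    ∃ D, ∀ ℓ ∈ ({coord i, -coord i} : Set (SpaceTime N →L[ℝ] ℝ)), ∀ n,
      eLpNorm w p (volume.restrict (strip (boxCylinder N τ) ℓ n)) ≤
        ENNReal.ofReal (D * ((1 / 2) ^ (1 / p.toReal)) ^ n) := by
  have hQ := isUnitCylinder_boxCylinder (τ := τ) i
  have hQm := isOpen_boxCylinder (N := N) (τ := τ).measurableSet
  obtain ⟨D, hD⟩ := hQ.exists_eLpNorm_strip_le_mul_pow hQm hp₁ hp hα hC hw hwB
  obtain ⟨D', hD'⟩ := hQ.neg.exists_eLpNorm_strip_le_mul_pow hQm hp₁ hp hα hC hw hwB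
  refine ⟨max D D', fun ℓ hℓ n => ?_⟩
  rcases hℓ with rfl | rfl
  · exact (hD n).trans (ENNReal.ofReal_le_ofReal (by gcongr; exact le_max_left _ _))
  · exact (hD' n).trans (ENNReal.ofReal_le_ofReal (by gcongr; exact le_max_right _ _))

lemma two_pow_mul_half_rpow_third_pow (n : ℕ) :
    2 ^ n * (((1 / 2 : ℝ) ^ (1 / (3 : ℝ≥0∞).toReal)) ^ n *
      ((1 / 2) ^ (1 / (3 : ℝ≥0∞).toReal)) ^ n * ((1 / 2) ^ (1 / (3 : ℝ≥0∞).toReal)) ^ n) = 1 := by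
  have hcube : (1 / 2 : ℝ) ^ (1 / (3 : ℝ≥0∞).toReal) * (1 / 2) ^ (1 / (3 : ℝ≥0∞).toReal) *
      (1 / 2) ^ (1 / (3 : ℝ≥0∞).toReal) = 1 / 2 := by
    rw [← Real.rpow_add (by norm_num), ← Real.rpow_add (by norm_num)]
    norm_num
  rw [← mul_pow, ← mul_pow, hcube, ← mul_pow]
  norm_num

/-- The three factors are `O(2⁻ⁿᐟ³)` on the strips of thickness `2⁻ⁿ`, which balances the size `2ⁿ`
of the derivative of the cutoff; the trace approximation contributes the factor `η`. -/
lemma exists_eventually_norm_setIntegral_deriv_faceCutoff_le (hα : 1 / 3 < α) (hC : 0 ≤ C)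
    (hw : MemLp w 3 (volume.restrict (boxCylinder N τ)))
    (hwB : HasBesovBound volume 3 α C (boxCylinder N τ) w)
    (hg : MemLp g 3 (volume.restrict (boxCylinder N τ)))
    (hgB : HasBesovBound volume 3 α C (boxCylinder N τ) g) (i : Fin N) (hφ : Continuous φ) :
    ∃ K, ∀ η ∈ Ioc (0 : ℝ) 1, ∃ ψ ψ', PeriodicC1 ψ ∧ PeriodicC1 ψ' ∧ ∀ᶠ n in atTop,
      ‖∫ z in boxCylinder N τ, φ z * deriv (faceCutoff n) (coord i z) *
        ((w z - ψ z) * (w z - ψ' z) * g z)‖ ≤ K * η := by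
  have hα' : 1 / (3 : ℝ≥0∞).toReal < α := by simpa using hα
  have hp₁ : (1 : ℝ≥0∞) ≤ 3 := by norm_num
  obtain ⟨M, hM⟩ := exists_forall_mem_norm_le (isBounded_boxCylinder (N := N) (τ := τ)) hφ
  obtain ⟨L, hL⟩ := exists_abs_deriv_faceCutoff_le
  obtain ⟨D₁, hD₁⟩ := exists_eLpNorm_strip_le_mul_pow hp₁ ENNReal.ofNat_ne_top hα' hC hw hwB i
  obtain ⟨D₂, hD₂⟩ := exists_eLpNorm_strip_le_mul_pow hp₁ ENNReal.ofNat_ne_top hα' hC hg hgB i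
  set θ : ℝ := (1 / 2) ^ (1 / (3 : ℝ≥0∞).toReal)
  have hθn (n : ℕ) : 0 ≤ θ ^ n := by positivity
  set D := max (max D₁ D₂) 0
  have hD₀ : 0 ≤ D := le_max_right _ _
  have hL₀ : 0 ≤ L := by simpa using (abs_nonneg _).trans (hL 0 0)
  refine ⟨max M 0 * L * (2 * ((2 * D + 1) * D)), fun η hη => ?_⟩
  obtain ⟨ψ, ψ', hψ, hψ', hψe, hψe', hn⟩ :=
    exists_periodicC1_eLpNorm_strip_sub_le hp₁ ENNReal.ofNat_ne_top hα' hC hw hwB i hη.1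
  refine ⟨ψ, ψ', hψ, hψ', hn.mono fun n hn => ?_⟩
  have hmono {D' : ℝ} (h : D' ≤ D) : ENNReal.ofReal (D' * θ ^ n) ≤ ENNReal.ofReal (D * θ ^ n) :=
    ENNReal.ofReal_le_ofReal (mul_le_mul_of_nonneg_right h (hθn n))
  refine ((isUnitCylinder_boxCylinder i).norm_setIntegral_deriv_faceCutoff_le
    isOpen_boxCylinder.measurableSet (a := η * θ ^ n) (b := D * θ ^ n)
    (mul_nonneg hη.1.le (hθn n)) (mul_nonneg hD₀ (hθn n)) hw
    (memLp_restrict_of_isBounded isBounded_boxCylinder hψ.contDiff.continuous)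
    (memLp_restrict_of_isBounded isBounded_boxCylinder hψ'.contDiff.continuous) hg hψe hψe'
    (fun ℓ hℓ => (hD₁ ℓ hℓ n).trans (hmono (by simp [D])))
    (fun ℓ hℓ => (hD₂ ℓ hℓ n).trans (hmono (by simp [D]))) hn.1 hn.2 (le_max_right M 0) hL
    fun z hz => (hM z hz).trans (le_max_left M 0)).trans ?_
  calc _ = max M 0 * L * (2 * ((2 * D + η) * D)) * η * (2 ^ n * (θ ^ n * θ ^ n * θ ^ n)) := by ring
    _ ≤ _ := by
        rw [two_pow_mul_half_rpow_third_pow, mul_one]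
        have := hη.1.le
        gcongr
        exact hη.2

lemma integrableOn_mul_of_isBounded {E : Type*} [NormedAddCommGroup E] [NormedSpace ℝ E]
    [FiniteDimensional ℝ E] [MeasurableSpace E] [BorelSpace E] {μ : Measure E} {Q : Set E}
    {c f : E → ℝ} (hQ : MeasurableSet Q) (hQb : Bornology.IsBounded Q) (hc : Continuous c)
    (hf : IntegrableOn f Q μ) : IntegrableOn (fun z => c z * f z) Q μ :=
  let ⟨_, hM⟩ := exists_forall_mem_norm_le hQb hc
  hf.bdd_mul hc.aestronglyMeasurable (ae_restrict_of_forall_mem hQ hM)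

lemma setIntegral_mul_sq_mul_eq {E : Type*} [NormedAddCommGroup E] [NormedSpace ℝ E]
    [FiniteDimensional ℝ E] [MeasurableSpace E] [BorelSpace E] {μ : Measure E}
    [IsFiniteMeasureOnCompacts μ] {Q : Set E} [IsFiniteMeasure (μ.restrict Q)]
    {w g φ β ψ ψ' : E → ℝ} (hQ : MeasurableSet Q) (hQb : Bornology.IsBounded Q)
    (hw : MemLp w 3 (μ.restrict Q)) (hg : MemLp g 3 (μ.restrict Q)) (hφ : Continuous φ)
    (hβ : Continuous β) (hψ : Continuous ψ) (hψ' : Continuous ψ') :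
    ∫ z in Q, φ z * β z * (w z * w z * g z) ∂μ =
      (∫ z in Q, φ z * β z * ((w z - ψ z) * (w z - ψ' z) * g z) ∂μ) +
        ((∫ z in Q, φ z * (ψ z + ψ' z) * β z * (w z * g z) ∂μ) -
          ∫ z in Q, φ z * (ψ z * ψ' z) * β z * g z ∂μ) := by
  have := FiniteDimensional.proper_real E
  have hlp {f : E → ℝ} (hf : Continuous f) : MemLp f 3 (μ.restrict Q) :=
    memLp_restrict_of_isBounded hQb hf
  have h₁ := integrableOn_mul_of_isBounded hQ hQb (hφ.mul hβ)
    (integrable_mul_smul_of_memLp_three (hw.sub (hlp hψ)) (hw.sub (hlp hψ')) hg)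
  have h₂ := integrableOn_mul_of_isBounded hQ hQb ((hφ.mul (hψ.add hψ')).mul hβ)
    (integrable_smul_of_memLp_three hw hg)
  have h₃ := integrableOn_mul_of_isBounded hQ hQb ((hφ.mul (hψ.mul hψ')).mul hβ)
    (hg.integrable (by norm_num))
  simp only [smul_eq_mul, Pi.sub_apply, Pi.mul_apply, Pi.add_apply] at h₁ h₂ h₃
  have h₂₃ := h₂.sub h₃
  simp only [Pi.sub_def] at h₂₃
  rw [← integral_sub h₂ h₃, ← integral_add h₁ h₂₃]
  congr with z
  ring

lemma norm_coord_sub_coord_le (i : Fin N) (x y : SpaceTime N) :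
    ‖coord i x - coord i y‖ ≤ ‖x - y‖ := by
  rw [← map_sub]
  exact (PiLp.norm_apply_le (x - y).2 i).trans (norm_snd_le (x - y))

/-- With `w² = (w - ψ) (w - ψ') + (ψ + ψ') w - ψ ψ'`, the last two terms are fluxes of the
divergence-free fields `w • V` and `V`. -/
lemma tendsto_setIntegral_deriv_faceCutoff_sq_smul {V : SpaceTime N → SpaceTime N}
    (hα : 1 / 3 < α) (hC : 0 ≤ C) (hw : MemLp w 3 (volume.restrict (boxCylinder N τ)))
    (hwB : HasBesovBound volume 3 α C (boxCylinder N τ) w)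
    (hV : MemLp V 3 (volume.restrict (boxCylinder N τ)))
    (hVB : HasBesovBound volume 3 α C (boxCylinder N τ) V) (hVdiv : IsPeriodicallyDivFree τ V)
    (hwVdiv : IsPeriodicallyDivFree τ fun z => w z • V z) (hφ : IsPeriodicTest τ φ) (i : Fin N) :
    Tendsto (fun n => ∫ z in boxCylinder N τ, φ z * deriv (faceCutoff n) (coord i z) *
      coord i ((w z * w z) • V z)) atTop (nhds 0) := by
  have hQm := isOpen_boxCylinder (N := N) (τ := τ).measurableSet
  have hVi : MemLp (fun z => coord i (V z)) 3 (volume.restrict (boxCylinder N τ)) :=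
    (coord i).comp_memLp' hV
  have hViB : HasBesovBound volume 3 α C (boxCylinder N τ) fun z => coord i (V z) := by
    simpa using HasBesovBound.of_norm_sub_le_sum (ι := Unit) (C := fun _ => C) hQm (by norm_num)
      (fun _ => hV.1) (fun _ => hC) (fun _ => hVB) fun x y =>
        (norm_coord_sub_coord_le i (V x) (V y)).trans_eq (by simp)
  obtain ⟨K, hK⟩ := exists_eventually_norm_setIntegral_deriv_faceCutoff_le hα hC hw hwB hVi hViB i
    hφ.contDiff.continuous
  rw [NormedAddGroup.tendsto_nhds_zero]
  intro ε hε
  have hsmall : Tendsto (fun η => K * η) (nhdsWithin 0 (Ioi 0)) (nhds 0) := by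
    simpa using (tendsto_id.const_mul K).mono_left (nhdsWithin_le_nhds (a := (0 : ℝ)))
  obtain ⟨η, hηK, hη⟩ := ((hsmall.eventually_lt_const (half_pos hε)).and
    (Ioc_mem_nhdsGT one_pos)).exists
  obtain ⟨ψ, ψ', hψ, hψ', hn⟩ := hK η hη
  have hflux := (hwVdiv.tendsto_setIntegral_deriv_faceCutoff
    (integrable_smul_of_memLp_three hw hV) (hφ.mul (hψ.add hψ')) i).sub
    (hVdiv.tendsto_setIntegral_deriv_faceCutoff (hV.integrable (by norm_num))
      (hφ.mul (hψ.mul hψ')) i)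
  rw [sub_zero, NormedAddGroup.tendsto_nhds_zero] at hflux
  filter_upwards [hn, hflux _ (half_pos hε)] with n hn hfluxn
  have hdecomp := setIntegral_mul_sq_mul_eq hQm isBounded_boxCylinder hw hVi
    hφ.contDiff.continuous
    ((contDiff_faceCutoff (n := n)).continuous_deriv_one.comp (coord i).continuous)
    hψ.contDiff.continuous hψ'.contDiff.continuous
  simp only [Function.comp_apply] at hdecomp
  simp only [map_smul, smul_eq_mul] at hfluxn ⊢
  rw [hdecomp]
  exact (norm_add_le _ _).trans_lt (by linarith)

theorem IsPeriodicallyDivFree.sq_smul {V : SpaceTime N → SpaceTime N}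
    (hα : 1 / 3 < α) (hC : 0 ≤ C) (hw : MemLp w 3 (volume.restrict (boxCylinder N τ)))
    (hwB : HasBesovBound volume 3 α C (boxCylinder N τ) w)
    (hV : MemLp V 3 (volume.restrict (boxCylinder N τ)))
    (hVB : HasBesovBound volume 3 α C (boxCylinder N τ) V) (hVdiv : IsPeriodicallyDivFree τ V)
    (hwVdiv : IsPeriodicallyDivFree τ fun z => w z • V z) :
    IsPeriodicallyDivFree τ fun z => (w z * w z) • V z :=
  isPeriodicallyDivFree_of_tendsto (integrable_mul_smul_of_memLp_three hw hw hV)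
    (hVdiv.isWeaklyDivFreeOn.sq_smul isOpen_boxCylinder hw hV hα hwB hVB hwVdiv.isWeaklyDivFreeOn)
    fun _ hφ i => tendsto_setIntegral_deriv_faceCutoff_sq_smul hα hC hw hwB hV hVB hVdiv hwVdiv hφ i

end FaceFlux

section WeakFormulation

variable {N : ℕ} {T τ : ℝ} {φ : SpaceTime N → ℝ} {V W : SpaceTime N → SpaceTime N}
  {σ : ℝ → Spc N → ℝ} {u : ℝ → Spc N → Spc N}

lemma restrict_boxCylinder_eq_prod :
    (volume : Measure (SpaceTime N)).restrict (boxCylinder N τ) =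
      (volume.restrict (Ioc 0 τ)).prod (volume.restrict (TorusBox N)) := by
  rw [Measure.volume_eq_prod, boxCylinder, ← Measure.prod_restrict,
    Measure.restrict_congr_set Ioo_ae_eq_Ioc, Measure.restrict_congr_set openBox_ae_eq_torusBox]

lemma setIntegral_boxCylinder {F : SpaceTime N → ℝ} (hF : IntegrableOn F (boxCylinder N τ)) :
    ∫ z in boxCylinder N τ, F z = ∫ t in Ioc 0 τ, ∫ x in TorusBox N, F (t, x) := by
  rw [IntegrableOn, restrict_boxCylinder_eq_prod] at hF
  rw [restrict_boxCylinder_eq_prod, integral_prod F hF]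

lemma deriv_time_slice (hφ : Differentiable ℝ φ) (t : ℝ) (x : Spc N) :
    deriv (fun s => φ (s, x)) t = fderiv ℝ φ (t, x) (1, 0) :=
  ((hφ (t, x)).hasFDerivAt.comp_hasDerivAt t
    ((hasDerivAt_id t).prodMk (hasDerivAt_const t x))).deriv

lemma inner_gradient_space_slice (hφ : Differentiable ℝ φ) (t : ℝ) (x v : Spc N) :
    ⟪v, gradient (fun y => φ (t, y)) x⟫ = fderiv ℝ φ (t, x) (0, v) := by
  have hslice : HasFDerivAt (fun y => φ (t, y)) _ x :=
    (hφ (t, x)).hasFDerivAt.comp x (hasFDerivAt_prodMk_right t x)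
  rw [real_inner_comm, gradient, InnerProductSpace.toDual_symm_apply, hslice.fderiv]
  rfl

lemma PeriodicC1.isPeriodic_slice (hφ : PeriodicC1 φ) (t : ℝ) :
    IsPeriodic fun x => φ (t, x) := fun x i => by
  have h : EuclideanSpace.single i (2 : ℝ) = (2 : ℝ) • EuclideanSpace.single i 1 := by
    ext j
    simp [PiLp.single_apply]
  simpa [unitVec, h] using hφ.periodic (t, x) i

lemma integrableOn_boxCylinder_fderiv_apply (hφ : PeriodicC1 φ)
    (hW : IntegrableOn W (boxCylinder N τ)) :
    IntegrableOn (fun z => fderiv ℝ φ z (W z)) (boxCylinder N τ) :=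
  integrableOn_fderiv_apply isOpen_boxCylinder.measurableSet isBounded_boxCylinder hφ.contDiff hW

lemma IsPeriodicallyDivFree.sub (hV : IsPeriodicallyDivFree τ V) (hW : IsPeriodicallyDivFree τ W)
    (hVi : IntegrableOn V (boxCylinder N τ)) (hWi : IntegrableOn W (boxCylinder N τ)) :
    IsPeriodicallyDivFree τ fun z => V z - W z := fun φ hφ => by
  simp only [map_sub]
  rw [integral_sub (integrableOn_boxCylinder_fderiv_apply hφ.toPeriodicC1 hVi)
    (integrableOn_boxCylinder_fderiv_apply hφ.toPeriodicC1 hWi), hV φ hφ, hW φ hφ, sub_zero]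

lemma isPeriodicallyDivFree_const_time (c : ℝ) :
    IsPeriodicallyDivFree τ fun _ : SpaceTime N => (c, 0) :=
  isPeriodicallyDivFree_of_tendsto (integrable_const _) (isWeaklyDivFreeOn_const _)
    fun φ _ i => by simp

lemma WeaklyDivFree.isPeriodicallyDivFree (hu : WeaklyDivFree T u) (hτ₀ : 0 < τ) (hτ : τ < T)
    (hui : IntegrableOn (fun z : SpaceTime N => u z.1 z.2) (boxCylinder N τ)) :
    IsPeriodicallyDivFree τ fun z : SpaceTime N => (1, u z.1 z.2) := by
  have hzero : IntegrableOn (fun z : SpaceTime N => ((0 : ℝ), u z.1 z.2)) (boxCylinder N τ) :=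
    (integrable_zero _ _ _).prodMk hui
  have hspace : IsPeriodicallyDivFree τ fun z : SpaceTime N => ((0 : ℝ), u z.1 z.2) := by
    intro φ hφ
    have hφd := hφ.contDiff.differentiable one_ne_zero
    have h := hu (fun t x => φ (t, x)) hφ.contDiff hφ.isPeriodic_slice 0 τ le_rfl hτ₀ hτ
    simp only [inner_gradient_space_slice hφd] at h
    rw [setIntegral_boxCylinder (integrableOn_boxCylinder_fderiv_apply hφ.toPeriodicC1 hzero), h]
  simpa using hspace.sub (isPeriodicallyDivFree_const_time (-1)) hzero (integrable_const _)

lemma IsPeriodicTest.apply_eq_zero (hφ : IsPeriodicTest τ φ) {z : SpaceTime N}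
    (hz : z.1 ∉ Ioo 0 τ) : φ z = 0 :=
  image_eq_zero_of_notMem_tsupport fun h => hz (hφ.tsupport_subset h).1

lemma WeakContinuityEq.isPeriodicallyDivFree (hσ : WeakContinuityEq T σ u) (hτ₀ : 0 < τ)
    (hτ : τ < T) (hi : IntegrableOn (fun z : SpaceTime N => σ z.1 z.2 • ((1 : ℝ), u z.1 z.2))
      (boxCylinder N τ)) :
    IsPeriodicallyDivFree τ fun z : SpaceTime N => σ z.1 z.2 • ((1 : ℝ), u z.1 z.2) := by
  intro φ hφ
  have hφd := hφ.contDiff.differentiable one_ne_zero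
  have h := hσ (fun t x => φ (t, x)) hφ.contDiff hφ.isPeriodic_slice 0 τ le_rfl hτ₀ hτ
  have hφ₀ (x : Spc N) : φ (0, x) = 0 := hφ.apply_eq_zero (by simp)
  have hφτ (x : Spc N) : φ (τ, x) = 0 := hφ.apply_eq_zero (by simp)
  have hsum (t : ℝ) (x : Spc N) : fderiv ℝ φ (t, x) (σ t x • (1, u t x)) =
      σ t x * fderiv ℝ φ (t, x) (1, 0) + σ t x * fderiv ℝ φ (t, x) (0, u t x) := by
    rw [map_smul, smul_eq_mul, ← mul_add, ← map_add, Prod.mk_add_mk, add_zero, zero_add]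
  simp only [inner_gradient_space_slice hφd, deriv_time_slice hφd, hφ₀, hφτ, mul_zero,
    integral_zero, sub_zero, ← hsum] at h
  rw [setIntegral_boxCylinder (integrableOn_boxCylinder_fderiv_apply hφ.toPeriodicC1 hi), h]

end WeakFormulation

section BesovInput

variable {N : ℕ} {α p : ℝ} {q : ℝ≥0∞} {Q Ω : Set (SpaceTime N)}

lemma MemBesovST.memLp {f : SpaceTime N → ℝ} (hf : MemBesovST α p Q f) (hΩ : Bornology.IsBounded Ω)
    (hΩQ : Ω ⊆ Q) (hq : q ≤ ENNReal.ofReal p) : MemLp f q (volume.restrict Ω) := by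
  have : IsFiniteMeasure ((volume : Measure (SpaceTime N)).restrict Ω) :=
    ⟨by simpa using hΩ.measure_lt_top⟩
  exact (hf.1.mono_measure (Measure.restrict_mono hΩQ le_rfl)).mono_exponent hq

lemma eLpNorm_sub_le_besovSeminormST_mul (f : SpaceTime N → ℝ) (hΩQ : closure Ω ⊆ Q)
    {h : SpaceTime N} (hh : h ≠ 0) :
    eLpNorm (fun z => f (z + h) - f z) (ENNReal.ofReal p)
      (volume.restrict (Ω ∩ (· + h) ⁻¹' Ω)) ≤
      besovSeminormST α p Q f * ENNReal.ofReal (‖h‖ ^ α) := by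
  have hnorm : 0 < ‖h‖ ^ α := Real.rpow_pos_of_pos (norm_pos_iff.2 hh) α
  rw [← ENNReal.div_le_iff (ENNReal.ofReal_pos.2 hnorm).ne' ENNReal.ofReal_ne_top]
  exact le_iSup_of_le _ <| le_iSup_of_le ((closure_mono inter_subset_left).trans hΩQ) <|
    le_iSup_of_le h <| le_iSup_of_le hh <| le_iSup_of_le
      (image_subset_iff.2 fun z hz => hΩQ (subset_closure hz.2)) le_rfl

lemma MemBesovST.exists_hasBesovBound {f : SpaceTime N → ℝ} (hf : MemBesovST α p Q f)
    (hΩ : Bornology.IsBounded Ω) (hΩm : MeasurableSet Ω) (hΩQ : closure Ω ⊆ Q) (hq₁ : 1 ≤ q)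
    (hq : q ≤ ENNReal.ofReal p) : ∃ C, 0 ≤ C ∧ HasBesovBound volume q α C Ω f := by
  set M := besovSeminormST α p Q f
  set e := 1 / q.toReal - 1 / (ENNReal.ofReal p).toReal
  have hq₀ : 0 < q.toReal :=
    ENNReal.toReal_pos (zero_lt_one.trans_le hq₁).ne' (ne_top_of_le_ne_top ENNReal.ofReal_ne_top hq)
  have he : 0 ≤ e := sub_nonneg.2
    (one_div_le_one_div_of_le hq₀ (ENNReal.toReal_mono ENNReal.ofReal_ne_top hq))
  set K := volume Ω ^ e
  have hK : K ≠ ∞ := ENNReal.rpow_ne_top_of_nonneg he hΩ.measure_lt_top.ne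
  refine ⟨(M * K).toReal, ENNReal.toReal_nonneg, fun h => ?_⟩
  rcases eq_or_ne h 0 with rfl | hh
  · simp
  set S := Ω ∩ (· + h) ⁻¹' Ω
  have hf_meas : AEStronglyMeasurable f (volume.restrict Ω) :=
    (hf.memLp hΩ (subset_closure.trans hΩQ) hq).1
  have hmeas : AEStronglyMeasurable (fun z => f (z + h) - f z) (volume.restrict S) :=
    (eLpNorm_comp_add_right_le (p := q) hΩm hf_meas fun z hz => hz.2).1.sub
      (hf_meas.mono_set inter_subset_left)
  calc eLpNorm (fun z => f (z + h) - f z) q (volume.restrict S)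
      ≤ M * ENNReal.ofReal (‖h‖ ^ α) * volume S ^ e := by
        refine (eLpNorm_le_eLpNorm_mul_rpow_measure_univ hq hmeas).trans ?_
        rw [Measure.restrict_apply_univ]
        gcongr
        exact eLpNorm_sub_le_besovSeminormST_mul f hΩQ hh
    _ ≤ M * ENNReal.ofReal (‖h‖ ^ α) * K := by
        gcongr
        exact ENNReal.rpow_le_rpow (measure_mono inter_subset_left) he
    _ = ENNReal.ofReal ((M * K).toReal * ‖h‖ ^ α) := by
        rw [ENNReal.ofReal_mul ENNReal.toReal_nonneg,
          ENNReal.ofReal_toReal (ENNReal.mul_ne_top hf.2.ne hK), mul_right_comm]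

lemma norm_le_sum_norm_apply (x : Spc N) : ‖x‖ ≤ ∑ i, ‖x i‖ := by
  have h : x = ∑ i, EuclideanSpace.single i (x i) := by
    ext j
    simp [Pi.single_apply]
  calc ‖x‖ = ‖∑ i, EuclideanSpace.single i (x i)‖ := by rw [← h]
    _ ≤ ∑ i, ‖x i‖ := (norm_sum_le _ _).trans_eq (by simp only [PiLp.norm_single])

variable {τ T : ℝ}

lemma closure_boxCylinder_subset (hτ : τ < T) :
    closure (boxCylinder N τ) ⊆ Ico 0 T ×ˢ TorusBox N :=
  (closure_minimal (Set.prod_mono Ioo_subset_Icc_self openBox_subset_torusBox)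
    (isClosed_Icc.prod isCompact_torusBox.isClosed)).trans
    (Set.prod_mono (fun _ ht => ⟨ht.1, ht.2.trans_lt hτ⟩) subset_rfl)

lemma exists_memLp_hasBesovBound_of_memBesovST {f : SpaceTime N → ℝ} (hp : 3 ≤ p) (hτ : τ < T)
    (hf : MemBesovST α p (Ico 0 T ×ˢ TorusBox N) f) :
    ∃ C, 0 ≤ C ∧ MemLp f 3 (volume.restrict (boxCylinder N τ)) ∧
      HasBesovBound volume 3 α C (boxCylinder N τ) f := by
  have hq : (3 : ℝ≥0∞) ≤ ENNReal.ofReal p := by simpa using ENNReal.ofReal_le_ofReal hp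
  have hcl := closure_boxCylinder_subset (N := N) hτ
  obtain ⟨C, hC, hB⟩ := hf.exists_hasBesovBound isBounded_boxCylinder
    isOpen_boxCylinder.measurableSet hcl (by norm_num) hq
  exact ⟨C, hC, hf.memLp isBounded_boxCylinder (subset_closure.trans hcl) hq, hB⟩

lemma exists_memLp_hasBesovBound_one_prodMk {u : SpaceTime N → Spc N} (hp : 3 ≤ p) (hτ : τ < T)
    (hu : ∀ i, MemBesovST α p (Ico 0 T ×ˢ TorusBox N) fun z => u z i) :
    ∃ C, 0 ≤ C ∧ MemLp (fun z => ((1 : ℝ), u z)) 3 (volume.restrict (boxCylinder N τ)) ∧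
      HasBesovBound volume 3 α C (boxCylinder N τ) fun z => ((1 : ℝ), u z) := by
  choose C hC hu₃ huB using fun i => exists_memLp_hasBesovBound_of_memBesovST hp hτ (hu i)
  refine ⟨∑ i, C i, Finset.sum_nonneg fun i _ => hC i,
    MemLp.of_fst_snd ⟨memLp_const 1, MemLp.of_eval_piLp hu₃⟩,
    .of_norm_sub_le_sum isOpen_boxCylinder.measurableSet (by norm_num) (fun i => (hu₃ i).1) hC huB
      fun x y => ?_⟩
  simpa using norm_le_sum_norm_apply (u x - u y)

lemma HasBesovBound.sub {f g : SpaceTime N → ℝ} {C C' : ℝ} (hΩ : MeasurableSet Ω) (hq : 1 ≤ q)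
    (hf : AEStronglyMeasurable f (volume.restrict Ω))
    (hg : AEStronglyMeasurable g (volume.restrict Ω)) (hC : 0 ≤ C) (hC' : 0 ≤ C')
    (hfB : HasBesovBound volume q α C Ω f) (hgB : HasBesovBound volume q α C' Ω g) :
    HasBesovBound volume q α (C + C') Ω fun z => f z - g z := by
  simpa using HasBesovBound.of_norm_sub_le_sum (C := ![C, C']) (g := ![f, g]) hΩ hq
    (Fin.forall_fin_two.2 ⟨hf, hg⟩) (Fin.forall_fin_two.2 ⟨hC, hC'⟩)
    (Fin.forall_fin_two.2 ⟨hfB, hgB⟩) (G := fun z => f z - g z) fun x y => by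
      simpa [sub_sub_sub_comm] using norm_sub_le (f x - f y) (g x - g y)

end BesovInput

section Time

variable {a b : ℝ}

lemma exists_Icc_superset_of_isCompact {K : Set ℝ} (hab : a < b) (hK : IsCompact K)
    (hKab : K ⊆ Ioo a b) : ∃ c d, a < c ∧ d < b ∧ K ⊆ Icc c d := by
  rcases K.eq_empty_or_nonempty with rfl | hne
  · exact ⟨b, a, hab, hab, empty_subset _⟩
  obtain ⟨c, hcK, hc⟩ := hK.exists_isLeast hne
  obtain ⟨d, hdK, hd⟩ := hK.exists_isGreatest hne
  exact ⟨c, d, (hKab hcK).1, (hKab hdK).2, fun x hx => ⟨hc hx, hd hx⟩⟩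

lemma exists_deriv_eq_tsupport_subset_of_integral_eq_zero {h : ℝ → ℝ} (hab : a < b)
    (hh : Continuous h) (hc : HasCompactSupport h) (hs : tsupport h ⊆ Ioo a b)
    (hi : ∫ t, h t = 0) :
    ∃ θ : ℝ → ℝ, ContDiff ℝ 1 θ ∧ tsupport θ ⊆ Ioo a b ∧ deriv θ = h := by
  obtain ⟨c, d, hac, hdb, hcd⟩ := exists_Icc_superset_of_isCompact hab hc hs
  have hzero {t : ℝ} (ht : t ∉ Icc c d) : h t = 0 :=
    image_eq_zero_of_notMem_tsupport fun hm => ht (hcd hm)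
  have hderiv : deriv (fun t => ∫ s in a..t, h s) = h := funext fun t => hh.deriv_integral h a t
  refine ⟨fun t => ∫ s in a..t, h s, contDiff_one_iff_deriv.2 ⟨fun t =>
    (hh.integral_hasStrictDerivAt a t).hasDerivAt.differentiableAt, by rwa [hderiv]⟩, ?_, hderiv⟩
  refine (closure_minimal (fun t ht => ?_) isClosed_Icc).trans (Icc_subset_Ioo hac hdb)
  by_contra htcd
  refine ht ?_
  rcases lt_or_ge t c with htc | hct
  · exact intervalIntegral.integral_zero_ae <| .of_forall fun s hs =>
      hzero fun hscd => (hs.2.trans_lt (max_lt hac htc)).not_ge hscd.1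
  · have hdt : d < t := lt_of_not_ge fun htd => htcd ⟨hct, htd⟩
    refine (intervalIntegral.integral_eq_integral_of_support_subset fun s hs => ?_).trans hi
    have hscd := hcd (subset_tsupport h hs)
    exact ⟨hac.trans_le hscd.1, hscd.2.trans hdt.le⟩

lemma exists_continuous_tsupport_subset_integral_eq_one (hab : a < b) :
    ∃ η : ℝ → ℝ, Continuous η ∧ HasCompactSupport η ∧ tsupport η ⊆ Ioo a b ∧ ∫ t, η t = 1 := by
  let ψ : ContDiffBump ((a + b) / 2) :=
    ⟨(b - a) / 8, (b - a) / 4, by linarith, by linarith⟩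
  refine ⟨ψ.normed volume, ψ.continuous_normed, ψ.hasCompactSupport_normed, ?_, ψ.integral_normed⟩
  rw [ψ.tsupport_normed_eq, Real.closedBall_eq_Icc]
  have hr : ψ.rOut = (b - a) / 4 := rfl
  exact Icc_subset_Ioo (by linarith) (by linarith)

lemma integrableOn_mul_of_hasCompactSupport {F g : ℝ → ℝ} {S : Set ℝ} (hF : IntegrableOn F S)
    (hg : Continuous g) (hgc : HasCompactSupport g) : IntegrableOn (fun t => F t * g t) S := by
  obtain ⟨M, hM⟩ := hgc.exists_bound_of_continuous hg
  exact hF.mul_bdd hg.aestronglyMeasurable (.of_forall hM)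

lemma setIntegral_mul_eq_integral_mul_of_integral_mul_deriv_eq_zero {F g η : ℝ → ℝ} (hab : a < b)
    (hF : IntegrableOn F (Ioo a b))
    (hF' : ∀ θ : ℝ → ℝ, ContDiff ℝ 1 θ → tsupport θ ⊆ Ioo a b →
      ∫ t in Ioo a b, F t * deriv θ t = 0)
    (hη : Continuous η) (hηc : HasCompactSupport η) (hηs : tsupport η ⊆ Ioo a b)
    (hη₁ : ∫ t, η t = 1) (hg : Continuous g) (hgc : HasCompactSupport g)
    (hgs : tsupport g ⊆ Ioo a b) :
    ∫ t in Ioo a b, F t * g t = (∫ t, g t) * ∫ t in Ioo a b, F t * η t := by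
  set m := ∫ t, g t
  have hηi := hη.integrable_of_hasCompactSupport (μ := volume) hηc
  have hgi := hg.integrable_of_hasCompactSupport (μ := volume) hgc
  obtain ⟨θ, hθ, hθs, hθg⟩ := exists_deriv_eq_tsupport_subset_of_integral_eq_zero
    (h := fun t => g t - m * η t) hab (hg.sub (continuous_const.mul hη))
    (hgc.sub (hηc.mul_left (f := fun _ => m)))
    ((tsupport_sub _ _).trans (union_subset hgs (tsupport_mul_subset_right.trans hηs)))
    (by rw [integral_sub hgi (hηi.const_mul m), integral_const_mul, hη₁, mul_one, sub_self])
  have h := hF' θ hθ hθs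
  simp only [hθg, mul_sub, mul_left_comm _ m] at h
  rwa [integral_sub (integrableOn_mul_of_hasCompactSupport hF hg hgc)
    ((integrableOn_mul_of_hasCompactSupport hF hη hηc).const_mul m), integral_const_mul,
    sub_eq_zero] at h

lemma exists_ae_eq_const_of_integral_mul_deriv_eq_zero {F : ℝ → ℝ} (hab : a < b)
    (hF : IntegrableOn F (Ioo a b))
    (hF' : ∀ θ : ℝ → ℝ, ContDiff ℝ 1 θ → tsupport θ ⊆ Ioo a b →
      ∫ t in Ioo a b, F t * deriv θ t = 0) :
    ∃ c, ∀ᵐ t ∂volume.restrict (Ioo a b), F t = c := by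
  obtain ⟨η, hη, hηc, hηs, hη₁⟩ := exists_continuous_tsupport_subset_integral_eq_one hab
  set c := ∫ t in Ioo a b, F t * η t
  have hFc : Integrable (fun t => F t - c) (volume.restrict (Ioo a b)) :=
    hF.sub (integrable_const c)
  have htest (g : ℝ → ℝ) (hg : ContDiff ℝ (⊤ : ℕ∞) g) (hgc : HasCompactSupport g)
      (hgs : tsupport g ⊆ Ioo a b) : ∫ t in Ioo a b, g t • (F t - c) = 0 := by
    have hgi := hg.continuous.integrable_of_hasCompactSupport (μ := volume) hgc
    have hgm : ∫ t in Ioo a b, g t = ∫ t, g t := setIntegral_eq_integral_of_forall_compl_eq_zero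
      fun t ht => image_eq_zero_of_notMem_tsupport fun hm => ht (hgs hm)
    simp only [smul_eq_mul, mul_sub, mul_comm (g _) (F _)]
    rw [integral_sub (integrableOn_mul_of_hasCompactSupport hF hg.continuous hgc)
      (hgi.integrableOn.mul_const c), integral_mul_const,
      setIntegral_mul_eq_integral_mul_of_integral_mul_deriv_eq_zero hab hF hF' hη hηc hηs hη₁
        hg.continuous hgc hgs, hgm, sub_self]
  refine ⟨c, ?_⟩
  filter_upwards [isOpen_Ioo.ae_eq_zero_of_integral_contDiff_smul_eq_zero
    (hFc.locallyIntegrable.locallyIntegrableOn _) htest, ae_restrict_mem measurableSet_Ioo]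
    with t ht htab using sub_eq_zero.1 (ht htab)

lemma ae_eq_zero_of_integral_mul_deriv_eq_zero {F : ℝ → ℝ} (hab : a < b)
    (hF : IntegrableOn F (Ioo a b)) (hFa : Tendsto F (nhdsWithin a (Ioi a)) (nhds 0))
    (hF' : ∀ θ : ℝ → ℝ, ContDiff ℝ 1 θ → tsupport θ ⊆ Ioo a b →
      ∫ t in Ioo a b, F t * deriv θ t = 0) :
    ∀ᵐ t ∂volume.restrict (Ioo a b), F t = 0 := by
  obtain ⟨c, hc⟩ := exists_ae_eq_const_of_integral_mul_deriv_eq_zero hab hF hF'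
  suffices hc₀ : c = 0 by rwa [hc₀] at hc
  rw [ae_restrict_iff' measurableSet_Ioo] at hc
  have hfreq : ∃ᶠ t in nhdsWithin a (Ioi a), F t = c := by
    rw [frequently_iff]
    intro U hU
    obtain ⟨d, had, hdU⟩ := (mem_nhdsGT_iff_exists_Ioo_subset).1 hU
    have hpos : volume (Ioo a (min b d)) ≠ 0 := by
      simp [Real.volume_Ioo, hab, mem_Ioi.1 had]
    obtain ⟨t, ht, htc⟩ := nonempty_of_measure_ne_zero
      ((measure_inter_conull (t := {t | t ∈ Ioo a b → F t = c}) hc).trans_ne hpos)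
    exact ⟨t, hdU ⟨ht.1, ht.2.trans_le (min_le_right b d)⟩,
      htc ⟨ht.1, ht.2.trans_le (min_le_left b d)⟩⟩
  by_contra hne
  exact hfreq ((hFa.eventually_ne (Ne.symm hne)).mono fun _ h => h)

end Time

section Uniqueness

variable {N : ℕ} {T τ : ℝ}

lemma isPeriodicTest_comp_fst {θ : ℝ → ℝ} (hθ : ContDiff ℝ 1 θ) (hθs : tsupport θ ⊆ Ioo 0 τ) :
    IsPeriodicTest τ fun z : SpaceTime N => θ z.1 where
  contDiff := hθ.comp contDiff_fst
  periodic z i := by simp [unitVec]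
  tsupport_subset := fun z hz =>
    ⟨hθs (tsupport_comp_subset_preimage θ continuous_fst hz), mem_univ _⟩

lemma fderiv_comp_fst_apply {θ : ℝ → ℝ} (hθ : Differentiable ℝ θ) (z v : SpaceTime N) :
    fderiv ℝ (fun y : SpaceTime N => θ y.1) z v = v.1 * deriv θ z.1 := by
  have h : HasFDerivAt (fun y : SpaceTime N => θ y.1) _ z :=
    (hθ z.1).hasDerivAt.comp_hasFDerivAt z (hasFDerivAt_fst (𝕜 := ℝ))
  rw [h.fderiv]
  simp [mul_comm]

lemma ae_eq_zero_of_isPeriodicallyDivFree_smul {m : SpaceTime N → ℝ} {v : SpaceTime N → Spc N}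
    (hτ : 0 < τ) (hm : 0 ≤ m) (hmi : IntegrableOn m (boxCylinder N τ))
    (hdiv : IsPeriodicallyDivFree τ fun z => m z • ((1 : ℝ), v z))
    (h₀ : Tendsto (fun t => ∫ x in TorusBox N, m (t, x)) (nhdsWithin 0 (Ioi 0)) (nhds 0)) :
    ∀ᵐ z ∂volume.restrict (boxCylinder N τ), m z = 0 := by
  set M : ℝ → ℝ := fun t => ∫ x in TorusBox N, m (t, x)
  have hmp : Integrable m ((volume.restrict (Ioc 0 τ)).prod (volume.restrict (TorusBox N))) := by
    rwa [← restrict_boxCylinder_eq_prod]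
  have hM : IntegrableOn M (Ioo 0 τ) :=
    IntegrableOn.mono_set hmp.integral_prod_left Ioo_subset_Ioc_self
  have hmass : ∀ᵐ t ∂volume.restrict (Ioo 0 τ), M t = 0 := by
    refine ae_eq_zero_of_integral_mul_deriv_eq_zero hτ hM h₀ fun θ hθ hθs => ?_
    have hθc : HasCompactSupport θ :=
      isCompact_Icc.of_isClosed_subset (isClosed_tsupport θ) (hθs.trans Ioo_subset_Icc_self)
    obtain ⟨L, hL⟩ := hθc.deriv.exists_bound_of_continuous hθ.continuous_deriv_one
    have hi : IntegrableOn (fun z => m z * deriv θ z.1) (boxCylinder N τ) :=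
      hmi.mul_bdd (hθ.continuous_deriv_one.comp continuous_fst).aestronglyMeasurable
        (.of_forall fun z => hL z.1)
    have h := hdiv _ (isPeriodicTest_comp_fst hθ hθs)
    simp only [fderiv_comp_fst_apply (hθ.differentiable one_ne_zero), Prod.smul_fst, smul_eq_mul,
      mul_one] at h
    rw [setIntegral_boxCylinder hi] at h
    simpa only [integral_mul_const, integral_Ioc_eq_integral_Ioo] using h
  have hint : ∫ z in boxCylinder N τ, m z = 0 := by
    rw [setIntegral_boxCylinder hmi, integral_Ioc_eq_integral_Ioo]
    exact integral_eq_zero_of_ae hmass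
  exact (integral_eq_zero_iff_of_nonneg hm hmi).1 hint

lemma integral_mul_self_eq_toReal_eLpNorm_two_sq {X : Type*} [MeasurableSpace X] {μ : Measure X}
    {f : X → ℝ} (hf : MemLp f 2 μ) : ∫ x, f x * f x ∂μ = (eLpNorm f 2 μ).toReal ^ 2 := by
  have hnonneg : 0 ≤ ∫ x, f x * f x ∂μ := integral_nonneg fun x => mul_self_nonneg (f x)
  rw [hf.eLpNorm_eq_integral_rpow_norm two_ne_zero ENNReal.ofNat_ne_top,
    ENNReal.toReal_ofReal (by positivity)]
  simp only [ENNReal.toReal_ofNat, Real.rpow_two, Real.norm_eq_abs, sq_abs, ← pow_two] at hnonneg ⊢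
  rw [← Real.rpow_natCast, ← Real.rpow_mul hnonneg]
  norm_num

lemma ContL2.tendsto_integral_sq_sub {f g : ℝ → Spc N → ℝ} (hT : 0 < T) (hf : ContL2 T f)
    (hg : ContL2 T g) (h₀ : f 0 = g 0) :
    Tendsto (fun t => ∫ x in TorusBox N, (f t x - g t x) * (f t x - g t x))
      (nhdsWithin 0 (Ioi 0)) (nhds 0) := by
  set μ := (volume : Measure (Spc N)).restrict (TorusBox N)
  have hIco : Ico 0 T ∈ nhdsWithin (0 : ℝ) (Ioi 0) := Ico_mem_nhdsGT hT
  have hzero : (0 : ℝ) ∈ Ico 0 T := ⟨le_rfl, hT⟩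
  have hsum : Tendsto (fun t => eLpNorm (f t - f 0) 2 μ + eLpNorm (g t - g 0) 2 μ)
      (nhdsWithin 0 (Ioi 0)) (nhds 0) := by
    simpa [Pi.sub_def] using
      ((hf.cont 0 hzero).add (hg.cont 0 hzero)).mono_left (nhdsWithin_le_of_mem hIco)
  have hdiff : Tendsto (fun t => eLpNorm (f t - g t) 2 μ) (nhdsWithin 0 (Ioi 0)) (nhds 0) := by
    refine tendsto_of_tendsto_of_tendsto_of_le_of_le' tendsto_const_nhds hsum
      (.of_forall fun _ => zero_le) ?_
    filter_upwards [hIco] with t ht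
    have h : f t - g t = (f t - f 0) - (g t - g 0) := by rw [h₀, sub_sub_sub_cancel_right]
    rw [h]
    exact eLpNorm_sub_le ((hf.mem t ht).sub (hf.mem 0 hzero)).1
      ((hg.mem t ht).sub (hg.mem 0 hzero)).1 one_le_two
  have hsq : Tendsto (fun t => (eLpNorm (f t - g t) 2 μ).toReal ^ 2) (nhdsWithin 0 (Ioi 0))
      (nhds 0) := by
    simpa using ((ENNReal.tendsto_toReal ENNReal.zero_ne_top).comp hdiff).pow 2
  refine hsq.congr' ?_
  filter_upwards [hIco] with t ht
  exact (integral_mul_self_eq_toReal_eLpNorm_two_sq ((hf.mem t ht).sub (hg.mem t ht))).symm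

variable {α p : ℝ} {u : ℝ → Spc N → Spc N} {ρ r : ℝ → Spc N → ℝ}

lemma isPeriodicallyDivFree_sq_sub (hτ₀ : 0 < τ) (hτ : τ < T) (hdiv : WeaklyDivFree T u)
    (hρeq : WeakContinuityEq T ρ u) (hreq : WeakContinuityEq T r u)
    (hα : 1 / 3 < α) (hp : 3 ≤ p)
    (hρB : MemBesovST α p (Ico (0 : ℝ) T ×ˢ TorusBox N) fun z => ρ z.1 z.2)
    (hrB : MemBesovST α p (Ico (0 : ℝ) T ×ˢ TorusBox N) fun z => r z.1 z.2)
    (huB : ∀ i, MemBesovST α p (Ico (0 : ℝ) T ×ˢ TorusBox N) fun z => u z.1 z.2 i) :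
    IsPeriodicallyDivFree τ fun z : SpaceTime N =>
      ((ρ z.1 z.2 - r z.1 z.2) * (ρ z.1 z.2 - r z.1 z.2)) • ((1 : ℝ), u z.1 z.2) := by
  obtain ⟨C₁, hC₁, hρ, hρB⟩ := exists_memLp_hasBesovBound_of_memBesovST hp hτ hρB
  obtain ⟨C₂, hC₂, hr, hrB⟩ := exists_memLp_hasBesovBound_of_memBesovST hp hτ hrB
  obtain ⟨C₃, hC₃, hV, hVB⟩ := exists_memLp_hasBesovBound_one_prodMk hp hτ huB
  have hB := hρB.sub isOpen_boxCylinder.measurableSet (by norm_num) hρ.1 hr.1 hC₁ hC₂ hrB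
  have hρV := integrable_smul_of_memLp_three hρ hV
  have hrV := integrable_smul_of_memLp_three hr hV
  have hui : IntegrableOn (fun z : SpaceTime N => u z.1 z.2) (boxCylinder N τ) :=
    (hV.integrable (by norm_num)).snd
  refine IsPeriodicallyDivFree.sq_smul hα (C := C₁ + C₂ + C₃) (by positivity) (hρ.sub hr)
    (hB.mono (by linarith)) hV (hVB.mono (by linarith))
    (hdiv.isPeriodicallyDivFree hτ₀ hτ hui) ?_
  simpa only [sub_smul] using (hρeq.isPeriodicallyDivFree hτ₀ hτ hρV).sub
    (hreq.isPeriodicallyDivFree hτ₀ hτ hrV) hρV hrV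

lemma ae_boxCylinder_eq_of_weakContinuityEq (hτ₀ : 0 < τ) (hτ : τ < T)
    (hρC : ContL2 T ρ) (hrC : ContL2 T r) (hdiv : WeaklyDivFree T u)
    (hρeq : WeakContinuityEq T ρ u) (hreq : WeakContinuityEq T r u) (h₀ : ρ 0 = r 0)
    (hα : 1 / 3 < α) (hp : 3 ≤ p)
    (hρB : MemBesovST α p (Ico (0 : ℝ) T ×ˢ TorusBox N) fun z => ρ z.1 z.2)
    (hrB : MemBesovST α p (Ico (0 : ℝ) T ×ˢ TorusBox N) fun z => r z.1 z.2)
    (huB : ∀ i, MemBesovST α p (Ico (0 : ℝ) T ×ˢ TorusBox N) fun z => u z.1 z.2 i) :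
    ∀ᵐ z ∂(volume : Measure (SpaceTime N)).restrict (boxCylinder N τ),
      ρ z.1 z.2 = r z.1 z.2 := by
  obtain ⟨_, _, hρ, _⟩ := exists_memLp_hasBesovBound_of_memBesovST hp hτ hρB
  obtain ⟨_, _, hr, _⟩ := exists_memLp_hasBesovBound_of_memBesovST hp hτ hrB
  have hw := (hρ.sub hr).mono_exponent (p := 2) (by norm_num)
  filter_upwards [ae_eq_zero_of_isPeriodicallyDivFree_smul hτ₀ (fun z => mul_self_nonneg _)
    (hw.integrable_mul hw)
    (isPeriodicallyDivFree_sq_sub hτ₀ hτ hdiv hρeq hreq hα hp hρB hrB huB)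
    (hρC.tendsto_integral_sq_sub (hτ₀.trans hτ) hrC h₀)] with z hz
  exact sub_eq_zero.1 (mul_self_eq_zero.1 hz)

theorem continuity_equation_uniqueness_general
    (N : ℕ) (T : ℝ) (u : ℝ → Spc N → Spc N) (ρ r : ℝ → Spc N → ℝ)
    (hρC : ContL2 T ρ) (hrC : ContL2 T r) (hdiv : WeaklyDivFree T u)
    (hρeq : WeakContinuityEq T ρ u) (hreq : WeakContinuityEq T r u) (h0 : ρ 0 = r 0)
    (α p : ℝ) (hα : 1 / 3 < α) (hp : 3 ≤ p)
    (hρB : MemBesovST α p (Ico (0 : ℝ) T ×ˢ TorusBox N) (fun z => ρ z.1 z.2))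
    (hrB : MemBesovST α p (Ico (0 : ℝ) T ×ˢ TorusBox N) (fun z => r z.1 z.2))
    (huB : ∀ i, MemBesovST α p (Ico (0 : ℝ) T ×ˢ TorusBox N) (fun z => u z.1 z.2 i)) :
    ∀ᵐ z ∂((volume.restrict (Ico (0 : ℝ) T)).prod (volume.restrict (TorusBox N))),
      ρ z.1 z.2 = r z.1 z.2 := by
  have hcyl (q : ℚ) (hq₀ : (0 : ℝ) < q) (hq : (q : ℝ) < T) :
      ∀ᵐ z : SpaceTime N, z ∈ boxCylinder N q → ρ z.1 z.2 = r z.1 z.2 :=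
    (ae_restrict_iff' isOpen_boxCylinder.measurableSet).1 <|
      ae_boxCylinder_eq_of_weakContinuityEq hq₀ hq hρC hrC hdiv hρeq hreq h0 hα hp hρB hrB huB
  have hall := ae_all_iff.2 fun q : ℚ => ae_all_iff.2 fun hq₀ => ae_all_iff.2 (hcyl q hq₀)
  rw [← Measure.restrict_congr_set Ioo_ae_eq_Ico,
    ← Measure.restrict_congr_set openBox_ae_eq_torusBox, Measure.prod_restrict,
    ← Measure.volume_eq_prod, ← boxCylinder, ae_restrict_iff' isOpen_boxCylinder.measurableSet]
  filter_upwards [hall] with z hz hzT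
  obtain ⟨q, hzq, hqT⟩ := exists_rat_btwn hzT.1.2
  exact hz q (hzT.1.1.trans hzq) hqT ⟨⟨hzT.1.1, hzq⟩, hzT.2⟩

end Uniqueness

/-- **Uniqueness for the continuity equation with Besov regularity.** -/
theorem continuity_equation_uniqueness
    (N : ℕ) (hN : 2 ≤ N) (T : ℝ) (hT : 0 < T)
    (u : ℝ → Spc N → Spc N) (ρ r : ℝ → Spc N → ℝ)
    (huper : ∀ t, IsPeriodic (u t)) (hρper : ∀ t, IsPeriodic (ρ t))
    (hrper : ∀ t, IsPeriodic (r t))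
    (huC : ContL2 T u) (hρC : ContL2 T ρ) (hrC : ContL2 T r)
    (hdiv : WeaklyDivFree T u)
    (hρeq : WeakContinuityEq T ρ u) (hreq : WeakContinuityEq T r u)
    (h0 : ρ 0 = r 0)
    (α p : ℝ) (hα : 1 / 3 < α) (hα1 : α < 1) (hp : 3 ≤ p)
    (hρB : MemBesovST α p (Ico (0 : ℝ) T ×ˢ TorusBox N) (fun z => ρ z.1 z.2))
    (hrB : MemBesovST α p (Ico (0 : ℝ) T ×ˢ TorusBox N) (fun z => r z.1 z.2))
    (huB : ∀ i, MemBesovST α p (Ico (0 : ℝ) T ×ˢ TorusBox N) (fun z => u z.1 z.2 i))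
    (hρuB : ∀ i, MemBesovST α p (Ico (0 : ℝ) T ×ˢ TorusBox N)
      (fun z => ρ z.1 z.2 * u z.1 z.2 i))
    (hruB : ∀ i, MemBesovST α p (Ico (0 : ℝ) T ×ˢ TorusBox N)
      (fun z => r z.1 z.2 * u z.1 z.2 i)) :
    ∀ᵐ z ∂((volume.restrict (Ico (0 : ℝ) T)).prod (volume.restrict (TorusBox N))),
      ρ z.1 z.2 = r z.1 z.2 :=
  continuity_equation_uniqueness_general N T u ρ r hρC hrC hdiv hρeq hreq h0 α p hα hp
    hρB hrB huB
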